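/- Let p be a prime with p ≡ 1 (mod 8) such that (2/p)₄ = (p/2)₄ = −1, and let k* = ℚ(√2, √p, i). Then the 2-Sylow subgroup of Cl(k*) is isomorphic to ℤ/2ℤ × ℤ/2ᵐℤ for some m ≥ 2; equivalently, the 2-rank of Cl(k*) equals 2 and its 4-rank, dim_{𝔽₂}(Cl(k*)²/Cl(k*)⁴), equals 1. -/

import Mathlib

/-!
Let `F = ℚ(ζ₈)` and `K = F(√p)`, which is the field `k*`. The ring `𝓞 F` is principal, and modulo
squares its units are generated by `ζ` and `1 + √2`. Since `p ≡ 1 (mod 8)`, `p` is a product of four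
conjugate primes `τₖ π` of `𝓞 F` (`k = 0, …, 3`, with `τₖ ζ = ζ ^ (2k + 1)`). As `(1 + √p)/2` is
integral, the ramified primes of `K/F` are exactly `Pₖ = (τₖ π, √p)`, and `Pₖ² = (τₖ π)`. The
hypothesis on `(p/2)₄` says `p ≡ 9 (mod 16)`. The proof determines the 2-torsion of the class group
of `K` and which of its elements are squares.

*The 2-torsion is generated by `[P₀]` and `[P₃]`* (`Octic.two_torsion`). The equations
`T² + 1 = pU²` and `T² + 1 = 2pU²` are solvable (`Elem.neg_pell`, `Elem.neg_pell_two`). Factoring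
`1 + iT` in `ℤ[i]` yields a unit `ε` of relative norm `-1` with `ε π τ₂π` a square in `K`, and a unit
`η` of relative norm `1 + √2` (`Octic.exists_units`). The first gives `[P₀] = [P₂]`; as
`P₀P₁P₂P₃ = (√p)`, also `[P₁] = [P₃]`. Because `p ≡ 9 (mod 16)`, `ζ` is not a square modulo `π`, so
the units of `F` that are norms of elements of `K` are norms of units (`Octic.unit_norm`). In that
situation, by Hilbert 90, every class of order two contains an ideal invariant under conjugation, so
the ramified primes generate the 2-torsion (`QuadInv.mem_closure_of_sq_eq_one`).

*`[P₀]` is not a square* (`Octic.not_isSquare_cls_pr`). Otherwise `π` times a unit of `F` would be a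
norm up to squares, hence a square modulo the ramified primes at `τ₁π` and `τ₂π`. The product of the
two residues of a unit is a square, whereas for `π` it is `2e`, where `π τ₃π = e + f√2` and
`e² - 2f² = p`; and `(e/p) = -1` because `(2/p)₄ = -1` (`Elem.jac_e`).

*`[P₀][P₃] ≠ 1`* (`Octic.cls_pr_mul_ne_one`). If `P₀P₃ = (γ)`, then `v = γ²/(π τ₃π)` is a unit, and
`ζ, 1 + √2, ε, v, η` would be five units independent modulo squares, while the unit rank of `K` is
three and the units modulo squares have dimension four.

*`[P₀][P₃]` is a square* (`Octic.isSquare_cls_pr_mul`). With `g = e + f` and `x = e + 2f`, its inverse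
is the class of the extension to `K` of the ideal `(g, x + √-p)` of `ℚ(√-p)`. That ideal has norm
`g`, and `(g/p) = 1` (`Elem.jac_g`), so it lies in the principal genus of `ℚ(√-p)`
(`ImQuad.isSquare_cls`).

A finite abelian group with 2-torsion `{1, x, y, xy}` in which `x` is not a square and `y ≠ 1` is a
square has the asserted structure (`group_conclusion`).
-/

/- STATEMENT 17: Let p ≡ 1 (mod 8) be prime with (2/p)₄ = (p/2)₄ = −1, and
k* = ℚ(√2, √p, i). Then the 2-Sylow subgroup of Cl(k*) is isomorphic to
ℤ/2 × ℤ/2ᵐ for some m ≥ 2; equivalently the 2-rank of Cl(k*) is 2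
(|Cl(k*)/Cl(k*)²| = 4) and its 4-rank is 1 (|Cl(k*)²/Cl(k*)⁴| = 2). -/

open Complex NumberField IntermediateField nonZeroDivisors

noncomputable section

/-- k* = ℚ(√2, √p, i) as a subfield of ℂ. -/
def kstar (p : ℕ) : IntermediateField ℚ ℂ :=
  ℚ⟮(Real.sqrt 2 : ℂ), (Real.sqrt p : ℂ), (Complex.I : ℂ)⟯

/-- The subgroup of n-th powers of the class group of k*. -/
def pows (p n : ℕ) : Subgroup (ClassGroup (𝓞 (kstar p))) :=
  (powMonoidHom n : ClassGroup (𝓞 (kstar p)) →* ClassGroup (𝓞 (kstar p))).range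

/-! ### Involutions of quadratic extensions -/

/-! ### Involutions of quadratic extensions -/

/-- An involution `σ` of an `R`-algebra `S` whose ring of invariants is exactly `R`, as for the
ring of integers of a quadratic extension. -/
structure QuadInv (R S : Type*) [CommRing R] [CommRing S] [Algebra R S] where
  /-- the involution -/
  σ : S ≃ₐ[R] S
  invol : ∀ x, σ (σ x) = x
  fixed : ∀ x, σ x = x → ∃ r, algebraMap R S r = x

namespace QuadInv

section Basic

variable {R S : Type*} [CommRing R] [CommRing S] [Algebra R S] (Q : QuadInv R S)

theorem exists_norm (x : S) : ∃ r, algebraMap R S r = x * Q.σ x :=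
  Q.fixed _ (by rw [map_mul, Q.invol, mul_comm])

theorem exists_trace (x : S) : ∃ r, algebraMap R S r = x + Q.σ x :=
  Q.fixed _ (by rw [map_add, Q.invol, add_comm])

/-- The relative norm `x * σ x`, as an element of `R`. -/
def N (x : S) : R := (Q.exists_norm x).choose

theorem N_spec (x : S) : algebraMap R S (Q.N x) = x * Q.σ x := (Q.exists_norm x).choose_spec

theorem σ_map (I : Ideal S) : (I.map Q.σ).map Q.σ = I := by
  apply le_antisymm
  · rw [Ideal.map_le_iff_le_comap, Ideal.map_le_iff_le_comap]
    intro x hx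
    rw [Ideal.mem_comap, Ideal.mem_comap, Q.invol]
    exact hx
  · intro x hx
    rw [← Q.invol x]
    exact Ideal.mem_map_of_mem _ (Ideal.mem_map_of_mem _ hx)

theorem map_span_singleton (x : S) :
    (Ideal.span {x}).map Q.σ = Ideal.span {Q.σ x} := by
  rw [Ideal.map_span, Set.image_singleton]

theorem map_span_algebraMap (r : R) :
    (Ideal.span {algebraMap R S r}).map Q.σ = Ideal.span {algebraMap R S r} := by
  rw [Q.map_span_singleton, AlgEquiv.commutes]

theorem mem_map_iff (I : Ideal S) (x : S) : x ∈ I.map Q.σ ↔ Q.σ x ∈ I := by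
  constructor
  · intro h
    have := Ideal.mem_map_of_mem (Q.σ) h
    rwa [Q.σ_map] at this
  · intro h
    have := Ideal.mem_map_of_mem (Q.σ) h
    rwa [Q.invol] at this

end Basic

section Dedekind

variable {R S : Type*} [CommRing R] [IsDomain R] [IsPrincipalIdealRing R] [CommRing S]
  [IsDedekindDomain S] [Algebra R S] [FaithfulSMul R S] (Q : QuadInv R S)

/-- If `n` divides the trace and the square of `n` divides the norm of `z`, then `n` divides `z`:
the quotient is a root of a monic quadratic polynomial, and `S` is integrally closed. -/
theorem dvd_of_trace_norm {n t m : R} {z : S}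
    (ht : algebraMap R S (n * t) = z + Q.σ z) (hm : algebraMap R S (n ^ 2 * m) = z * Q.σ z) :
    algebraMap R S n ∣ z := by
  have hinj := FaithfulSMul.algebraMap_injective R S
  by_cases hn : n = 0
  · subst hn
    have h1 : z * Q.σ z = 0 := by rw [← hm]; simp
    have h2 : z + Q.σ z = 0 := by rw [← ht]; simp
    have : z = 0 := by
      rcases mul_eq_zero.mp h1 with h | h
      · exact h
      · rw [h, add_zero] at h2; exact h2
    rw [this]; exact dvd_zero _
  have hn' : algebraMap R S n ≠ 0 := by
    rw [Ne, map_eq_zero_iff _ hinj]; exact hn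
  have hnL : algebraMap S (FractionRing S) (algebraMap R S n) ≠ 0 := by
    rw [Ne, map_eq_zero_iff _ (IsFractionRing.injective S (FractionRing S))]; exact hn'
  have hz : z ^ 2 - algebraMap R S (n * t) * z + algebraMap R S (n ^ 2 * m) = 0 := by
    rw [ht, hm]; ring
  set w : FractionRing S := algebraMap S (FractionRing S) z / algebraMap S (FractionRing S) (algebraMap R S n) with hw
  have hIntegral : IsIntegral S w := by
    refine ⟨Polynomial.X ^ 2 - Polynomial.C (algebraMap R S t) * Polynomial.X
      + Polynomial.C (algebraMap R S m), by monicity!, ?_⟩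
    simp only [Polynomial.eval₂_add, Polynomial.eval₂_sub, Polynomial.eval₂_mul,
      Polynomial.eval₂_pow, Polynomial.eval₂_X, Polynomial.eval₂_C]
    have h3 := congrArg (algebraMap S (FractionRing S)) hz
    simp only [map_add, map_sub, map_mul, map_pow, map_zero] at h3
    rw [hw]
    field_simp
    linear_combination h3
  obtain ⟨y, hy⟩ := IsIntegrallyClosed.isIntegral_iff.mp hIntegral
  refine ⟨y, IsFractionRing.injective S (FractionRing S) ?_⟩
  rw [map_mul, hy, hw]
  field_simp

/-- The product of an ideal with its conjugate is generated by an element of `R`. -/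
theorem exists_idealNorm (I : Ideal S) :
    ∃ n : R, I * I.map Q.σ = Ideal.span {algebraMap R S n} := by
  by_cases hI : I = ⊥
  · exact ⟨0, by simp [hI]⟩
  obtain ⟨x, hxI, hx⟩ := Submodule.exists_mem_ne_zero_of_ne_bot hI
  obtain ⟨y, rfl⟩ := IsDedekindDomain.exists_eq_span_pair hxI hx
  obtain ⟨a, ha⟩ := Q.exists_norm x
  obtain ⟨b, hb⟩ := Q.exists_norm y
  obtain ⟨t, ht⟩ := Q.exists_trace (x * Q.σ y)
  obtain ⟨n, hn⟩ := (IsPrincipalIdealRing.principal (Ideal.span ({a, b, t} : Set R))).principal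
  rw [← Ideal.submodule_span_eq] at hn
  have hn' : Ideal.span ({a, b, t} : Set R) = Ideal.span {n} := hn
  have hd : ∀ z ∈ ({a, b, t} : Set R), n ∣ z := fun z hz => by
    rw [← Ideal.mem_span_singleton, ← hn']; exact Ideal.subset_span hz
  obtain ⟨a', ha'⟩ := hd a (by simp)
  obtain ⟨b', hb'⟩ := hd b (by simp)
  obtain ⟨t', ht'⟩ := hd t (by simp)
  have hσ : Q.σ (x * Q.σ y) = y * Q.σ x := by rw [map_mul, Q.invol, mul_comm]
  have h1 : algebraMap R S n ∣ x * Q.σ y := by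
    refine Q.dvd_of_trace_norm (t := t') (m := a' * b') ?_ ?_
    · rw [← ht', ht]
    · have : n ^ 2 * (a' * b') = a * b := by rw [ha', hb']; ring
      rw [this, map_mul, ha, hb, hσ]; ring
  have h2 : algebraMap R S n ∣ y * Q.σ x := by
    obtain ⟨k, hk⟩ := h1
    refine ⟨Q.σ k, ?_⟩
    rw [← hσ, hk, map_mul, AlgEquiv.commutes]
  refine ⟨n, ?_⟩
  have hmap : (Ideal.span {x, y}).map Q.σ = Ideal.span {Q.σ x, Q.σ y} := by
    rw [Ideal.map_span, Set.image_pair]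
  rw [hmap]
  apply le_antisymm
  · rw [Ideal.span_pair_mul_span_pair, Ideal.span_le]
    rintro z hz
    simp only [Set.mem_insert_iff, Set.mem_singleton_iff] at hz
    rw [SetLike.mem_coe, Ideal.mem_span_singleton]
    rcases hz with rfl | rfl | rfl | rfl
    · rw [← ha, ha', map_mul]; exact dvd_mul_right _ _
    · exact h1
    · exact h2
    · rw [← hb, hb', map_mul]; exact dvd_mul_right _ _
  · rw [Ideal.span_singleton_le_iff_mem]
    have hmem : n ∈ Ideal.span ({a, b, t} : Set R) := by
      rw [hn']; exact Ideal.mem_span_singleton_self n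
    have hle : Ideal.span ({a, b, t} : Set R) ≤
        (Ideal.span {x, y} * Ideal.span {Q.σ x, Q.σ y}).comap (algebraMap R S) := by
      rw [Ideal.span_le]
      have hx' : x ∈ Ideal.span {x, y} := Ideal.subset_span (by simp)
      have hy' : y ∈ Ideal.span {x, y} := Ideal.subset_span (by simp)
      have hsx : Q.σ x ∈ Ideal.span {Q.σ x, Q.σ y} := Ideal.subset_span (by simp)
      have hsy : Q.σ y ∈ Ideal.span {Q.σ x, Q.σ y} := Ideal.subset_span (by simp)
      rintro z hz
      simp only [Set.mem_insert_iff, Set.mem_singleton_iff] at hz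
      rw [SetLike.mem_coe, Ideal.mem_comap]
      rcases hz with rfl | rfl | rfl
      · rw [ha]; exact Ideal.mul_mem_mul hx' hsx
      · rw [hb]; exact Ideal.mul_mem_mul hy' hsy
      · rw [ht, hσ]
        exact Ideal.add_mem _ (Ideal.mul_mem_mul hx' hsy) (Ideal.mul_mem_mul hy' hsx)
    exact hle hmem

end Dedekind
end QuadInv

set_option linter.unusedSectionVars false

/-! ### Ideal classes -/

section Cls

variable {S : Type*} [CommRing S] [IsDedekindDomain S]

open Classical in
/-- The class of an ideal in the class group, with the value `1` at the zero ideal. -/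
def cls (I : Ideal S) : ClassGroup S :=
  if h : I = ⊥ then 1 else ClassGroup.mk0 ⟨I, mem_nonZeroDivisors_iff_ne_zero.mpr h⟩

theorem cls_of_ne {I : Ideal S} (h : I ≠ ⊥) :
    cls I = ClassGroup.mk0 ⟨I, mem_nonZeroDivisors_iff_ne_zero.mpr h⟩ := dif_neg h

theorem cls_mk0 (I : (Ideal S)⁰) : cls (I : Ideal S) = ClassGroup.mk0 I :=
  cls_of_ne (nonZeroDivisors.ne_zero I.2)

theorem cls_surj (c : ClassGroup S) : ∃ I : Ideal S, I ≠ ⊥ ∧ cls I = c := by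
  obtain ⟨I, rfl⟩ := ClassGroup.mk0_surjective c
  exact ⟨I, nonZeroDivisors.ne_zero I.2, cls_mk0 I⟩

theorem cls_mul {I J : Ideal S} (hI : I ≠ ⊥) (hJ : J ≠ ⊥) : cls (I * J) = cls I * cls J := by
  rw [cls_of_ne hI, cls_of_ne hJ, cls_of_ne (mul_ne_zero hI hJ), ← map_mul]; rfl

theorem cls_span (x : S) : cls (Ideal.span {x}) = 1 := by
  by_cases h : x = 0
  · simp [h, cls]
  · have h' : Ideal.span {x} ≠ ⊥ := by simpa using h
    rw [cls_of_ne h', ClassGroup.mk0_eq_one_iff]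
    exact ⟨⟨x, rfl⟩⟩

theorem cls_eq_one_iff {I : Ideal S} (hI : I ≠ ⊥) : cls I = 1 ↔ ∃ x, x ≠ 0 ∧ I = Ideal.span {x} := by
  constructor
  · intro h
    rw [cls_of_ne hI, ClassGroup.mk0_eq_one_iff] at h
    obtain ⟨x, hx⟩ := h.principal
    refine ⟨x, ?_, hx⟩
    rintro rfl
    apply hI
    rw [show I = _ from hx]; simp
  · rintro ⟨x, -, rfl⟩; exact cls_span x

theorem cls_eq_iff {I J : Ideal S} (hI : I ≠ ⊥) (hJ : J ≠ ⊥) :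
    cls I = cls J ↔ ∃ x y : S, x ≠ 0 ∧ y ≠ 0 ∧ Ideal.span {x} * I = Ideal.span {y} * J := by
  rw [cls_of_ne hI, cls_of_ne hJ, ClassGroup.mk0_eq_mk0_iff]
  simp only [exists_prop, exists_and_left]

theorem span_ne_bot {x : S} (h : x ≠ 0) : Ideal.span {x} ≠ ⊥ := by simpa using h

end Cls

namespace QuadInv

/-! ### Genus theory for a quadratic extension of a principal ideal domain -/

section Genus

variable {R S : Type*} [CommRing R] [IsDomain R] [IsPrincipalIdealRing R] [CommRing S]
  [IsDedekindDomain S] [Algebra R S] [FaithfulSMul R S] (Q : QuadInv R S)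

theorem map_ne_bot {I : Ideal S} (hI : I ≠ ⊥) : I.map Q.σ ≠ ⊥ := by
  intro h
  apply hI
  rw [← Q.σ_map I, h, Ideal.map_bot]

theorem σ_ne_zero {x : S} (hx : x ≠ 0) : Q.σ x ≠ 0 := by simpa using hx

/-- A prime ideal that squares to a prime of `R` and on whose residue field `σ` acts trivially. -/
structure IsRamified (P : Ideal S) : Prop where
  isPrime : P.IsPrime
  ne_bot : P ≠ ⊥
  exists_sq : ∃ ℓ : R, Prime ℓ ∧ P * P = Ideal.span {algebraMap R S ℓ}
  sub_mem : ∀ x, x - Q.σ x ∈ P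

theorem map_isPrime {P : Ideal S} (hP : P.IsPrime) : (P.map Q.σ).IsPrime := by
  exact Ideal.map_isPrime_of_equiv Q.σ

/-- A nonzero prime ideal fixed by `σ` is inert, hence principal, or ramified. -/
theorem inert_or_ramified {P : Ideal S} (hP : P.IsPrime) (h0 : P ≠ ⊥) (hσ : P.map Q.σ = P) :
    cls P = 1 ∨ Q.IsRamified P := by
  have hinj := FaithfulSMul.algebraMap_injective R S
  obtain ⟨n, hn⟩ := Q.exists_idealNorm P
  rw [hσ] at hn
  have hn0 : n ≠ 0 := by
    rintro rfl
    rw [map_zero, Ideal.span_singleton_zero] at hn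
    exact (mul_ne_zero h0 h0) hn
  have hnP : algebraMap R S n ∈ P := by
    have : algebraMap R S n ∈ P * P := by rw [hn]; exact Ideal.mem_span_singleton_self _
    exact Ideal.mul_le_left this
  have hc : (P.comap (algebraMap R S)).IsPrime := Ideal.comap_isPrime _ P
  obtain ⟨ℓ, hℓ⟩ := (IsPrincipalIdealRing.principal (P.comap (algebraMap R S))).principal
  have hℓ' : P.comap (algebraMap R S) = Ideal.span {ℓ} := hℓ
  have hmem : ∀ r : R, algebraMap R S r ∈ P ↔ ℓ ∣ r := fun r => by
    rw [← Ideal.mem_comap, hℓ', Ideal.mem_span_singleton]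
  have hℓ0 : ℓ ≠ 0 := by
    rintro rfl
    exact hn0 (zero_dvd_iff.mp ((hmem n).mp hnP))
  have hℓp : Prime ℓ := by
    rw [hℓ'] at hc
    exact (Ideal.span_singleton_prime hℓ0).mp hc
  have hd : Ideal.span {algebraMap R S ℓ} ∣ P ^ 2 := by
    rw [sq, hn, Ideal.dvd_span_singleton, Ideal.mem_span_singleton]
    exact map_dvd _ ((hmem n).mp hnP)
  obtain ⟨i, hi, hi'⟩ := (dvd_prime_pow (Ideal.prime_of_isPrime h0 hP) 2).mp hd
  rw [associated_iff_eq] at hi'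
  have hℓP : algebraMap R S ℓ ∈ P := (hmem ℓ).mpr dvd_rfl
  interval_cases i
  · exfalso
    rw [pow_zero, Ideal.one_eq_top] at hi'
    apply hP.ne_top
    rw [eq_top_iff, ← hi', Ideal.span_singleton_le_iff_mem]
    exact hℓP
  · left
    rw [pow_one] at hi'
    rw [← hi', cls_span]
  · right
    refine ⟨hP, h0, ⟨ℓ, hℓp, by rw [hi', sq]⟩, fun x => ?_⟩
    have hlt : P ^ 2 < P := Ideal.pow_lt_self P h0 hP.ne_top 2 le_rfl
    obtain ⟨y, hyP, hy2⟩ := SetLike.exists_of_lt hlt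
    have hσP : ∀ z ∈ P, Q.σ z ∈ P := fun z hz => by rw [← Q.mem_map_iff, hσ]; exact hz
    have key : ∀ z ∈ P, z + Q.σ z ∈ P ^ 2 := fun z hz => by
      obtain ⟨r, hr⟩ := Q.exists_trace z
      have : algebraMap R S r ∈ P := by rw [hr]; exact P.add_mem hz (hσP z hz)
      rw [← hr, ← hi', Ideal.mem_span_singleton]
      exact map_dvd _ ((hmem r).mp this)
    have h1 := key y hyP
    have h2 := key (x * Q.σ y) (P.mul_mem_left _ (hσP y hyP))
    have h3 : y * (x - Q.σ x) ∈ P ^ 2 := by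
      have : y * (x - Q.σ x) = (y + Q.σ y) * x - (x * Q.σ y + Q.σ (x * Q.σ y)) := by
        rw [map_mul, Q.invol]; ring
      rw [this]
      exact (P ^ 2).sub_mem ((P ^ 2).mul_mem_right _ h1) h2
    rw [mul_comm] at h3
    rcases Ideal.IsPrime.mul_mem_pow P h3 with h | h
    · exact h
    · exact absurd h hy2

theorem cls_mul_map {I : Ideal S} (hI : I ≠ ⊥) : cls I * cls (I.map Q.σ) = 1 := by
  obtain ⟨n, hn⟩ := Q.exists_idealNorm I
  rw [← cls_mul hI (Q.map_ne_bot hI), hn, cls_span]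

/-- The classes of ideals fixed by `σ` are generated by the ramified primes. -/
theorem cls_mem_closure (I : Ideal S) (hI : I ≠ ⊥) (hσ : I.map Q.σ = I) :
    cls I ∈ Subgroup.closure {c | ∃ P : Ideal S, Q.IsRamified P ∧ c = cls P} := by
  induction I using WellFoundedGT.induction with
  | ind I ih =>
  by_cases htop : I = ⊤
  · rw [htop, ← Ideal.span_singleton_one, cls_span]; exact one_mem _
  obtain ⟨P, hPm, hPI⟩ := Ideal.exists_le_maximal I htop
  have hP := hPm.isPrime
  have hP0 : P ≠ ⊥ := fun h => hI (by rwa [h, le_bot_iff] at hPI)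
  have hPp := Ideal.prime_of_isPrime hP0 hP
  obtain ⟨J, rfl⟩ := Ideal.dvd_iff_le.mpr hPI
  have hJ0 : J ≠ ⊥ := right_ne_zero_of_mul hI
  by_cases hPσ : P.map Q.σ = P
  · have hJσ : J.map Q.σ = J := by
      rw [Ideal.map_mul, hPσ] at hσ
      exact mul_left_cancel₀ hP0 hσ
    have hlt : P * J < J := by
      refine lt_of_le_of_ne Ideal.mul_le_right fun h => hP.ne_top ?_
      have : P * J = 1 * J := by rw [h, one_mul]
      rw [← Ideal.one_eq_top]
      exact mul_right_cancel₀ hJ0 this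
    rw [cls_mul hP0 hJ0]
    refine mul_mem ?_ (ih J hlt hJ0 hJσ)
    rcases Q.inert_or_ramified hP hP0 hPσ with h | h
    · rw [h]; exact one_mem _
    · exact Subgroup.subset_closure ⟨P, h, rfl⟩
  · have hσp := Ideal.prime_of_isPrime (Q.map_ne_bot hP0) (Q.map_isPrime hP)
    have hdiv : P.map Q.σ ∣ P * J := by
      conv_rhs => rw [← hσ, Ideal.map_mul]
      exact dvd_mul_right _ _
    rcases hσp.dvd_or_dvd hdiv with h | h
    · exact absurd (associated_iff_eq.mp (hσp.associated_of_dvd hPp h)) hPσ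
    obtain ⟨K, rfl⟩ := h
    have hK0 : K ≠ ⊥ := right_ne_zero_of_mul hJ0
    have hKσ : K.map Q.σ = K := by
      rw [Ideal.map_mul, Ideal.map_mul, Q.σ_map, ← mul_assoc, ← mul_assoc,
        mul_comm (P.map Q.σ) P] at hσ
      exact mul_left_cancel₀ (mul_ne_zero hP0 (Q.map_ne_bot hP0)) hσ
    have hlt : P * (P.map Q.σ * K) < K := by
      refine lt_of_le_of_ne (Ideal.mul_le_right.trans Ideal.mul_le_right) fun h => hP.ne_top ?_
      have h1 : (P * P.map Q.σ) * K = 1 * K := by rw [mul_assoc, h, one_mul]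
      have h2 := mul_right_cancel₀ hK0 h1
      rw [eq_top_iff, ← Ideal.one_eq_top, ← h2]
      exact Ideal.mul_le_left
    rw [cls_mul hP0 hJ0, cls_mul (Q.map_ne_bot hP0) hK0, ← mul_assoc, Q.cls_mul_map hP0, one_mul]
    exact ih K hlt hK0 hKσ

/-- Two elements of `R` that generate the same ideal of `S` differ by a unit of `R`. -/
theorem exists_unit (Q : QuadInv R S) {a b : R} (hb : b ≠ 0)
    (h : Ideal.span {algebraMap R S a} = Ideal.span {algebraMap R S b}) :
    ∃ u : Rˣ, u * b = a := by
  have hinj := FaithfulSMul.algebraMap_injective R S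
  rw [Ideal.span_singleton_eq_span_singleton] at h
  have descend : ∀ x y : R, y ≠ 0 → algebraMap R S y ∣ algebraMap R S x → y ∣ x := by
    rintro x y hy ⟨k, hk⟩
    have hy' : algebraMap R S y ≠ 0 := by rwa [Ne, map_eq_zero_iff _ hinj]
    obtain ⟨r, rfl⟩ := Q.fixed k (by
      have := congrArg Q.σ hk
      rw [map_mul, AlgEquiv.commutes, AlgEquiv.commutes, hk] at this
      exact (mul_left_cancel₀ hy' this).symm)
    exact ⟨r, hinj (by rw [hk, map_mul])⟩
  have ha : a ≠ 0 := by
    rintro rfl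
    rw [map_zero] at h
    have := h.symm.eq_zero_iff.mpr rfl
    exact hb ((map_eq_zero_iff _ hinj).mp this)
  obtain ⟨u, hu⟩ := associated_of_dvd_dvd (descend a b hb h.symm.dvd) (descend b a ha h.dvd)
  exact ⟨u, by rw [mul_comm]; exact hu⟩

/-- Ambiguous class theory: if every unit of `R` that is a relative norm of a fraction is the norm
of a unit, then the classes of order two come from ramified primes. -/
theorem mem_closure_of_sq_eq_one {s : S} (hs0 : s ≠ 0) (hs : Q.σ s = -s)
    (hN : ∀ (u : Rˣ) (α β : S), α ≠ 0 → β ≠ 0 →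
      algebraMap R S u * (β * Q.σ β) = α * Q.σ α → ∃ w : Sˣ, (w : S) * Q.σ w = algebraMap R S u)
    {c : ClassGroup S} (hc : c ^ 2 = 1) :
    c ∈ Subgroup.closure {c | ∃ P : Ideal S, Q.IsRamified P ∧ c = cls P} := by
  have hinj := FaithfulSMul.algebraMap_injective R S
  obtain ⟨I, hI, rfl⟩ := cls_surj c
  have hσI := Q.map_ne_bot hI
  have h1 : cls I = cls (I.map Q.σ) := by
    have := Q.cls_mul_map hI
    rw [← hc, sq] at this
    exact (mul_left_cancel this).symm
  obtain ⟨α, β, hα, hβ, hαβ⟩ := (cls_eq_iff hI hσI).mp h1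
  have h2 := congrArg (Ideal.map Q.σ) hαβ
  rw [Ideal.map_mul, Ideal.map_mul, Q.σ_map, Q.map_span_singleton, Q.map_span_singleton] at h2
  have hNN : Ideal.span {algebraMap R S (Q.N β)} = Ideal.span {algebraMap R S (Q.N α)} := by
    rw [Q.N_spec, Q.N_spec, ← Ideal.span_singleton_mul_span_singleton,
      ← Ideal.span_singleton_mul_span_singleton]
    refine mul_right_cancel₀ (mul_ne_zero hI hσI) ?_
    calc _ = (Ideal.span {β} * I.map Q.σ) * (Ideal.span {Q.σ β} * I) := by ring
      _ = (Ideal.span {α} * I) * (Ideal.span {Q.σ α} * I.map Q.σ) := by rw [h2, hαβ]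
      _ = _ := by ring
  have hNα : Q.N α ≠ 0 := by
    intro h
    have := Q.N_spec α
    rw [h, map_zero] at this
    exact mul_ne_zero hα (Q.σ_ne_zero hα) this.symm
  obtain ⟨u, hu⟩ := Q.exists_unit hNα hNN
  obtain ⟨w, hw⟩ := hN u β α hβ hα (by rw [← Q.N_spec, ← Q.N_spec, ← hu, map_mul])
  -- replacing `α` by `α'` makes the norms of `α'` and `β` equal
  obtain ⟨α', hα'⟩ : ∃ α', α' = α * w := ⟨_, rfl⟩
  have hα'0 : α' ≠ 0 := by rw [hα']; exact mul_ne_zero hα w.ne_zero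
  have hI' : Ideal.span {α'} * I = Ideal.span {β} * I.map Q.σ := by
    rw [← hαβ, hα', Ideal.span_singleton_mul_right_unit w.isUnit]
  have hnorm : α' * Q.σ α' = β * Q.σ β := by
    rw [← Q.N_spec β, ← hu, map_mul, Q.N_spec, hα', map_mul, ← hw]; ring
  obtain ⟨γ, hγ0, hγ⟩ : ∃ γ : S, γ ≠ 0 ∧ α' * Q.σ γ = β * γ := by
    by_cases hab : α' + β = 0
    · refine ⟨s, hs0, ?_⟩
      rw [hs]; linear_combination (-s) * hab
    · refine ⟨(α' + β) * Q.σ β, mul_ne_zero hab (Q.σ_ne_zero hβ), ?_⟩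
      rw [map_mul, Q.invol, map_add]
      linear_combination β * hnorm
  have hinv : (Ideal.span {γ} * I).map Q.σ = Ideal.span {γ} * I := by
    rw [Ideal.map_mul, Q.map_span_singleton]
    refine mul_left_cancel₀ (span_ne_bot hβ) ?_
    calc _ = Ideal.span {Q.σ γ} * (Ideal.span {β} * I.map Q.σ) := by ring
      _ = Ideal.span {α' * Q.σ γ} * I := by
        rw [← hI', ← Ideal.span_singleton_mul_span_singleton]; ring
      _ = _ := by rw [hγ, ← Ideal.span_singleton_mul_span_singleton]; ring
  have := Q.cls_mem_closure _ (mul_ne_zero (span_ne_bot hγ0) hI) hinv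
  rwa [cls_mul (span_ne_bot hγ0) hI, cls_span, one_mul] at this

/-- The norm of an ideal whose class is a square is, up to a unit and squares, the norm of an
element. -/
theorem exists_norm_of_cls_sq {I : Ideal S} (hI : I ≠ ⊥) {n : R}
    (hn : I * I.map Q.σ = Ideal.span {algebraMap R S n}) {d : ClassGroup S} (hd : cls I = d ^ 2) :
    ∃ (u : Rˣ) (c : R) (z : S), c ≠ 0 ∧ algebraMap R S (u * n * c ^ 2) = z * Q.σ z := by
  have hinj := FaithfulSMul.algebraMap_injective R S
  obtain ⟨J, hJ, rfl⟩ := cls_surj d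
  obtain ⟨m, hm⟩ := Q.exists_idealNorm J
  rw [sq, ← cls_mul hJ hJ] at hd
  obtain ⟨a, b, ha, hb, hab⟩ := (cls_eq_iff hI (mul_ne_zero hJ hJ)).mp hd
  have h2 := congrArg (Ideal.map Q.σ) hab
  rw [Ideal.map_mul, Ideal.map_mul, Q.map_span_singleton, Q.map_span_singleton,
    Ideal.map_mul] at h2
  have hNe : ∀ x : S, x ≠ 0 → Q.N x ≠ 0 := by
    intro x hx h
    have := Q.N_spec x
    rw [h, map_zero] at this
    exact mul_ne_zero hx (Q.σ_ne_zero hx) this.symm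
  have hn0 : n ≠ 0 := by
    rintro rfl
    rw [map_zero, Ideal.span_singleton_zero] at hn
    exact mul_ne_zero hI (Q.map_ne_bot hI) hn
  have h3 : Ideal.span {algebraMap R S (Q.N b * m ^ 2)} = Ideal.span {algebraMap R S (Q.N a * n)} := by
    rw [map_mul, map_mul, map_pow, Q.N_spec, Q.N_spec, sq]
    simp only [← Ideal.span_singleton_mul_span_singleton]
    rw [← hn, ← hm]
    calc _ = (Ideal.span {b} * (J * J)) * (Ideal.span {Q.σ b} * (J.map Q.σ * J.map Q.σ)) := by ring
      _ = (Ideal.span {a} * I) * (Ideal.span {Q.σ a} * I.map Q.σ) := by rw [hab, h2]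
      _ = _ := by ring
  obtain ⟨u, hu⟩ := Q.exists_unit (mul_ne_zero (hNe a ha) hn0) h3
  refine ⟨u, Q.N a, a * b * algebraMap R S m, hNe a ha, ?_⟩
  have : (u : R) * n * Q.N a ^ 2 = Q.N a * (Q.N b * m ^ 2) := by rw [← hu]; ring
  rw [this, map_mul, map_mul, map_pow, Q.N_spec, Q.N_spec, map_mul, map_mul, AlgEquiv.commutes]
  ring

end Genus

section Residue

variable {R S : Type*} [CommRing R] [IsDomain R] [WfDvdMonoid R] [CommRing S]
  [Algebra R S] [FaithfulSMul R S] (Q : QuadInv R S)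

/-- Reduction modulo `ϖ`, after a descent on the power of `ϖ` dividing `c`: if `ϖ ∣ c`, the equation
forces `ϖ ∣ t` and then `ϖ ∣ y`. -/
theorem isSquare_of_eq {k : Type*} [Field k] (φ : R →+* k) {ϖ d m : R}
    (hϖ : Prime ϖ) (hφ : ∀ x, φ x = 0 ↔ ϖ ∣ x) (h2 : ¬ ϖ ∣ 2) (hd : ¬ ϖ ∣ d)
    {c t y : R} (hc : c ≠ 0) (h : 4 * d * m * c ^ 2 = d * t ^ 2 - ϖ * y ^ 2) :
    IsSquare (φ m) := by
  obtain ⟨n, c₀, hc₀, rfl⟩ := WfDvdMonoid.max_power_factor hc hϖ.irreducible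
  induction n generalizing t y with
  | zero =>
    rw [pow_zero, one_mul] at h
    have h' := congrArg φ h
    have hϖ0 : φ ϖ = 0 := (hφ ϖ).mpr dvd_rfl
    simp only [map_mul, map_pow, map_sub, hϖ0, map_ofNat] at h'
    have h20 : (2 : k) ≠ 0 := by
      intro h0; exact h2 ((hφ 2).mp (by rw [map_ofNat]; exact h0))
    have hd0 : φ d ≠ 0 := fun h0 => hd ((hφ d).mp h0)
    have hc0 : φ c₀ ≠ 0 := fun h0 => hc₀ ((hφ c₀).mp h0)
    refine ⟨φ t / (2 * φ c₀), ?_⟩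
    field_simp
    refine mul_left_cancel₀ hd0 ?_
    linear_combination h'
  | succ n ih =>
    have h1 : ϖ ∣ t := by
      have : ϖ ∣ d * t ^ 2 := ⟨y ^ 2 + 4 * d * m * ϖ ^ (2 * n + 1) * c₀ ^ 2, by
        linear_combination -h⟩
      exact hϖ.dvd_of_dvd_pow ((hϖ.dvd_or_dvd this).resolve_left hd)
    obtain ⟨t', rfl⟩ := h1
    have h3 : ϖ ∣ y := by
      have : ϖ * ϖ ∣ ϖ * y ^ 2 := ⟨d * t' ^ 2 - 4 * d * m * ϖ ^ (2 * n) * c₀ ^ 2, by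
        linear_combination h⟩
      exact hϖ.dvd_of_dvd_pow ((mul_dvd_mul_iff_left hϖ.ne_zero).mp this)
    obtain ⟨y', rfl⟩ := h3
    refine ih (t := t') (y := y') (mul_ne_zero (pow_ne_zero _ hϖ.ne_zero) ?_) ?_
    · rintro rfl; simp at hc₀
    · refine mul_left_cancel₀ (pow_ne_zero 2 hϖ.ne_zero) ?_
      linear_combination h

/-- In `R(√(ϖd))` an element of `R` which is a norm up to squares is a square modulo the odd
ramified prime `ϖ`. -/
theorem isSquare_of_norm {k : Type*} [Field k] (φ : R →+* k) {ϖ d m : R}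
    (hϖ : Prime ϖ) (hφ : ∀ x, φ x = 0 ↔ ϖ ∣ x) (h2 : ¬ ϖ ∣ 2) (hd : ¬ ϖ ∣ d)
    {s : S} (hs : Q.σ s = -s) (hsd : s ^ 2 = algebraMap R S (ϖ * d))
    {c : R} {z : S} (hc : c ≠ 0) (h : algebraMap R S (m * c ^ 2) = z * Q.σ z) :
    IsSquare (φ m) := by
  have hinj := FaithfulSMul.algebraMap_injective R S
  obtain ⟨t, ht⟩ := Q.exists_trace z
  obtain ⟨y, hy⟩ := Q.fixed ((z - Q.σ z) * s) (by rw [map_mul, map_sub, Q.invol, hs]; ring)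
  have key : 4 * (ϖ * d) * (m * c ^ 2) = ϖ * d * t ^ 2 - y ^ 2 := by
    apply hinj
    rw [map_mul, h, map_mul, map_sub, map_mul _ (ϖ * d), map_pow, map_pow, ht, hy, ← hsd,
      map_ofNat]
    ring
  have : ϖ ∣ y := by
    have : ϖ ∣ y ^ 2 := ⟨d * t ^ 2 - 4 * d * m * c ^ 2, by linear_combination key⟩
    exact hϖ.dvd_of_dvd_pow this
  obtain ⟨y', rfl⟩ := this
  refine isSquare_of_eq φ hϖ hφ h2 hd (t := t) (y := y') hc ?_
  refine mul_left_cancel₀ hϖ.ne_zero ?_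
  linear_combination key

end Residue

end QuadInv

/-! ### Finite abelian groups with prescribed 2-torsion -/

section GroupTheory

/-- A finite abelian 2-group with at most one element of order two is cyclic: by induction `a ^ 2 ^ k = 1`
has at most `2 ^ k` solutions. -/
theorem isCyclic_of_two_torsion {G : Type*} [CommGroup G] [Finite G] (hG : IsPGroup 2 G) {y : G}
    (h : ∀ z : G, z ^ 2 = 1 → z = 1 ∨ z = y) : IsCyclic G := by
  classical
  have : Fact (Nat.Prime 2) := ⟨Nat.prime_two⟩
  have := Fintype.ofFinite G
  have hT : ∀ k : ℕ, (Finset.univ.filter fun a : G => a ^ (2 ^ k) = 1).card ≤ 2 ^ k := by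
    intro k
    induction k with
    | zero =>
      refine (Finset.card_le_card (t := {1}) ?_).trans (by simp)
      intro a ha
      simpa using ha
    | succ k ih =>
      have : (Finset.univ.filter fun a : G => a ^ (2 ^ (k + 1)) = 1).card ≤
          2 * (Finset.univ.filter fun a : G => a ^ (2 ^ k) = 1).card := by
        refine Finset.card_le_mul_card_image_of_maps_to (f := fun a : G => a ^ 2) ?_ 2 ?_
        · intro a ha
          simp only [Finset.mem_filter, Finset.mem_univ, true_and] at ha ⊢
          rw [← ha, ← pow_mul, pow_succ, mul_comm]
        · intro b hb
          by_cases hne : ∃ a : G, a ^ 2 = b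
          · obtain ⟨a, rfl⟩ := hne
            refine (Finset.card_le_card (t := {a, a * y}) ?_).trans Finset.card_le_two
            intro z hz
            simp only [Finset.mem_filter, Finset.mem_univ, true_and] at hz
            have : (a⁻¹ * z) ^ 2 = 1 := by rw [mul_pow, hz.2, inv_pow, inv_mul_cancel]
            rcases h _ this with h | h
            · simp [(inv_mul_eq_one.mp h).symm]
            · simp [inv_mul_eq_iff_eq_mul.mp h]
          · rw [Finset.filter_eq_empty_iff.mpr]
            · simp
            · intro a _ ha; exact hne ⟨a, ha⟩
      calc _ ≤ _ := this
        _ ≤ 2 * 2 ^ k := by gcongr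
        _ = _ := by ring
  apply isCyclic_of_card_pow_eq_one_le
  intro n hn
  obtain ⟨N, hN⟩ := IsPGroup.iff_card.mp hG
  obtain ⟨k, -, hk⟩ := (Nat.dvd_prime_pow Nat.prime_two).mp (Nat.gcd_dvd_right n (2 ^ N))
  have hle : 2 ^ k ≤ n := by rw [← hk]; exact Nat.gcd_le_left _ hn
  refine (Finset.card_le_card ?_).trans ((hT k).trans hle)
  intro a ha
  simp only [Finset.mem_filter, Finset.mem_univ, true_and] at ha ⊢
  rw [← hk]
  refine pow_gcd_eq_one.mpr ⟨ha, ?_⟩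
  rw [← hN]
  exact pow_card_eq_one'

/-- Modulo `⟨x⟩` the 2-torsion of `G` has order at most two, since no element squares to `x`; so the
quotient is cyclic. A lift of a generator keeps its order, again because `x` is not a square, and
generates a complement of `⟨x⟩`. -/
theorem equiv_of_two_torsion {G : Type*} [CommGroup G] [Finite G] (hG : IsPGroup 2 G) {x y : G}
    (hx : x ^ 2 = 1) (hy1 : y ≠ 1) (hy : IsSquare y) (hy2 : y ^ 2 = 1) (hxs : ¬ IsSquare x)
    (h : ∀ z : G, z ^ 2 = 1 → z = 1 ∨ z = x ∨ z = y ∨ z = x * y) :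
    ∃ m : ℕ, 2 ≤ m ∧ Nat.card G = 2 ^ (m + 1) ∧
      Nonempty (G ≃* Multiplicative (ZMod 2 × ZMod (2 ^ m))) := by
  have : Fact (Nat.Prime 2) := ⟨Nat.prime_two⟩
  have hx1 : x ≠ 1 := by rintro rfl; exact hxs ⟨1, by simp⟩
  let N := Subgroup.zpowers x
  have hN : ∀ z, z ∈ N ↔ z = 1 ∨ z = x := by
    intro z
    constructor
    · rintro ⟨k, rfl⟩
      rcases Int.even_or_odd' k with ⟨j, rfl | rfl⟩
      · left; dsimp only; rw [zpow_mul]; norm_cast; rw [hx, one_zpow]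
      · right; dsimp only; rw [zpow_add, zpow_mul]; norm_cast; rw [hx, one_zpow]; simp
    · rintro (rfl | rfl)
      · exact one_mem _
      · exact Subgroup.mem_zpowers _
  have hcardN : Nat.card N = 2 := by
    rw [Nat.card_zpowers]; exact orderOf_eq_prime hx hx1
  have hcyc : IsCyclic (G ⧸ N) := by
    refine isCyclic_of_two_torsion (hG.to_quotient N) (y := (y : G ⧸ N)) ?_
    intro z
    induction z using QuotientGroup.induction_on with
    | H z =>
    intro hz
    rw [← QuotientGroup.mk_pow, QuotientGroup.eq_one_iff, hN] at hz
    rcases hz with hz | hz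
    · rcases h z hz with rfl | rfl | rfl | rfl
      · left; rfl
      · left; rw [QuotientGroup.eq_one_iff, hN]; right; rfl
      · right; rfl
      · right
        rw [QuotientGroup.mk_mul, mul_eq_right, QuotientGroup.eq_one_iff, hN]; right; rfl
    · exact absurd ⟨z, by rw [← hz, sq]⟩ hxs
  obtain ⟨g', hg'⟩ := hcyc.exists_generator
  obtain ⟨g, rfl⟩ := QuotientGroup.mk_surjective g'
  obtain ⟨m, hm⟩ := IsPGroup.iff_card.mp (hG.to_quotient N)
  have hcard : Nat.card G = 2 ^ (m + 1) := by
    rw [Subgroup.card_eq_card_quotient_mul_card_subgroup N, hm, hcardN, pow_succ]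
  -- `w` has order four, so `G` has at least eight elements
  obtain ⟨w, rfl⟩ := hy
  have hm2 : 2 ≤ m := by
    by_contra! hlt
    have hw : ∀ z : G, z ^ 2 = 1 := by
      intro z
      by_cases hzg : z ∈ N
      · rcases (hN z).mp hzg with rfl | rfl
        · simp
        · exact hx
      · have hq : (z : G ⧸ N) ^ 2 = 1 := by
          have h1 : (z : G ⧸ N) ^ Nat.card (G ⧸ N) = 1 := pow_card_eq_one'
          rw [hm] at h1
          interval_cases m
          · rw [pow_zero, pow_one] at h1; rw [h1, one_pow]
          · simpa using h1
        rw [← QuotientGroup.mk_pow, QuotientGroup.eq_one_iff, hN] at hq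
        rcases hq with hq | hq
        · exact hq
        · exact absurd ⟨z, by rw [← hq, sq]⟩ hxs
    exact hy1 (by rw [← sq]; exact hw w)
  have hgm : g ^ (2 ^ m) = 1 := by
    have h1 : (g : G ⧸ N) ^ Nat.card (G ⧸ N) = 1 := pow_card_eq_one'
    rw [hm, ← QuotientGroup.mk_pow, QuotientGroup.eq_one_iff, hN] at h1
    rcases h1 with h1 | h1
    · exact h1
    · refine absurd ⟨g ^ (2 ^ (m - 1)), ?_⟩ hxs
      rw [← h1, ← pow_add, ← two_mul, ← pow_succ']
      congr 2; omega
  have hog : orderOf g = 2 ^ m := by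
    refine Nat.dvd_antisymm (orderOf_dvd_of_pow_eq_one hgm) ?_
    have h1 : orderOf (g : G ⧸ N) = 2 ^ m := by
      rw [← hm]; exact orderOf_eq_card_of_forall_mem_zpowers hg'
    rw [← h1]
    exact orderOf_map_dvd (QuotientGroup.mk' N) g
  refine ⟨m, hm2, hcard, ?_⟩
  let C := Subgroup.zpowers g
  have hcardC : Nat.card C = 2 ^ m := by rw [Nat.card_zpowers, hog]
  let f : N × C →* G := N.subtype.coprod C.subtype
  have hf : Function.Bijective f := by
    refine Function.Surjective.bijective_of_nat_card_le ?_ ?_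
    · intro z
      obtain ⟨k, hk⟩ := hg' (z : G ⧸ N)
      dsimp only at hk
      rw [← QuotientGroup.mk_zpow, QuotientGroup.eq] at hk
      refine ⟨⟨⟨_, hk⟩, ⟨g ^ k, Subgroup.mem_zpowers_iff.mpr ⟨k, rfl⟩⟩⟩, ?_⟩
      change (g ^ k)⁻¹ * z * g ^ k = z
      rw [mul_comm, mul_inv_cancel_left]
    · rw [Nat.card_prod, hcardN, hcardC, hcard, pow_succ, mul_comm]
  have e1 : N ≃* Multiplicative (ZMod 2) := by
    have := (zmodCyclicMulEquiv (inferInstance : IsCyclic N)).symm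
    rwa [hcardN] at this
  have e2 : C ≃* Multiplicative (ZMod (2 ^ m)) := by
    have := (zmodCyclicMulEquiv (inferInstance : IsCyclic C)).symm
    rwa [hcardC] at this
  exact ⟨(MulEquiv.ofBijective f hf).symm.trans
    ((e1.prodCongr e2).trans (MulEquiv.prodMultiplicative _ _).symm)⟩

theorem card_quotient_range_sq {G : Type*} [CommGroup G] [Finite G] :
    Nat.card (G ⧸ (powMonoidHom 2 : G →* G).range) = Nat.card (powMonoidHom 2 : G →* G).ker := by
  have h1 := Subgroup.card_mul_index (powMonoidHom 2 : G →* G).ker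
  rw [Subgroup.index_ker] at h1
  have h2 := Subgroup.card_eq_card_quotient_mul_card_subgroup (powMonoidHom 2 : G →* G).range
  rw [← h1] at h2
  exact (Nat.eq_of_mul_eq_mul_right Nat.card_pos h2).symm

/-- The structure of a finite abelian group whose 2-torsion is `{1, x, y, xy}`, where `y ≠ 1` is a
square and `x` is not. -/
theorem group_conclusion {G : Type*} [CommGroup G] [Finite G] {x y : G}
    (hx : x ^ 2 = 1) (hy1 : y ≠ 1) (hy : IsSquare y) (hy2 : y ^ 2 = 1) (hxs : ¬ IsSquare x)
    (h : ∀ z : G, z ^ 2 = 1 → z = 1 ∨ z = x ∨ z = y ∨ z = x * y) :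
    (∃ m : ℕ, 2 ≤ m ∧ ∀ P : Sylow 2 G, Nonempty (P ≃* Multiplicative (ZMod 2 × ZMod (2 ^ m)))) ∧
    Nat.card (G ⧸ (powMonoidHom 2 : G →* G).range) = 4 ∧
    Nat.card ((powMonoidHom 2 : G →* G).range ⧸
      ((powMonoidHom 4 : G →* G).range.subgroupOf (powMonoidHom 2 : G →* G).range)) = 2 := by
  have : Fact (Nat.Prime 2) := ⟨Nat.prime_two⟩
  have hx1 : x ≠ 1 := by rintro rfl; exact hxs ⟨1, by simp⟩
  have hxy : x ≠ y := by rintro rfl; exact hxs hy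
  have hxys : ¬ IsSquare (x * y) := by
    rintro ⟨a, ha⟩
    obtain ⟨b, rfl⟩ := hy
    exact hxs ⟨a * b⁻¹, by rw [mul_mul_mul_comm, ← ha, ← mul_inv, mul_inv_cancel_right]⟩
  have hxy1 : x * y ≠ 1 := by intro h0; exact hxys ⟨1, by simp [h0]⟩
  refine ⟨?_, ?_, ?_⟩
  · have hmem : ∀ (P : Sylow 2 G) (z : G), (∃ k, z ^ (2 ^ k) = 1) → z ∈ (P : Subgroup G) := by
      rintro P z ⟨k, hk⟩
      have hz : IsPGroup 2 (Subgroup.zpowers z) := by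
        rintro ⟨_, ⟨j, rfl⟩⟩
        refine ⟨k, Subtype.ext ?_⟩
        change (z ^ j) ^ 2 ^ k = 1
        rw [← zpow_natCast, ← zpow_mul, mul_comm, zpow_mul, zpow_natCast, hk, one_zpow]
      obtain ⟨Q, hQ⟩ := hz.exists_le_sylow
      have := Sylow.unique_of_normal P inferInstance
      rw [Subsingleton.elim P Q]
      exact hQ (Subgroup.mem_zpowers z)
    have key : ∀ P : Sylow 2 G, ∃ m : ℕ, 2 ≤ m ∧ Nat.card P = 2 ^ (m + 1) ∧
      Nonempty (P ≃* Multiplicative (ZMod 2 × ZMod (2 ^ m))) := by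
      intro P
      have hxP := hmem P x ⟨1, by simpa using hx⟩
      have hyP := hmem P y ⟨1, by simpa using hy2⟩
      refine equiv_of_two_torsion P.isPGroup' (x := ⟨x, hxP⟩) (y := ⟨y, hyP⟩) (Subtype.ext hx)
        (fun h0 => hy1 (congrArg Subtype.val h0)) ?_ (Subtype.ext hy2) ?_ ?_
      · obtain ⟨w, rfl⟩ := hy
        refine ⟨⟨w, hmem P w ⟨2, ?_⟩⟩, rfl⟩
        rw [← hy2, ← sq, ← pow_mul]; norm_num
      · rintro ⟨w, hw⟩
        exact hxs ⟨w, congrArg Subtype.val hw⟩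
      · rintro ⟨z, hz⟩ hz2
        rcases h z (congrArg Subtype.val hz2) with rfl | rfl | rfl | rfl
        · left; rfl
        · right; left; rfl
        · right; right; left; rfl
        · right; right; right; rfl
    obtain ⟨P₀⟩ : Nonempty (Sylow 2 G) := inferInstance
    obtain ⟨m, hm, hc, hmP⟩ := key P₀
    refine ⟨m, hm, fun P => ?_⟩
    have := Sylow.unique_of_normal P₀ inferInstance
    rw [Subsingleton.elim P P₀]
    exact hmP
  · rw [card_quotient_range_sq]
    have : ((powMonoidHom 2 : G →* G).ker : Set G) = {1, x, y, x * y} := by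
      ext z
      rw [SetLike.mem_coe, MonoidHom.mem_ker, powMonoidHom_apply]
      constructor
      · intro hz; simpa using h z hz
      · rintro (rfl | rfl | rfl | rfl)
        · simp
        · exact hx
        · exact hy2
        · rw [mul_pow, hx, hy2, one_mul]
    rw [← SetLike.coe_sort_coe, this, Nat.card_coe_set_eq, Set.ncard_insert_of_notMem,
      Set.ncard_insert_of_notMem, Set.ncard_pair]
    · simpa using hx1
    · simpa [hxy, eq_comm] using hy1
    · simpa [hx1.symm, hy1.symm] using hxy1.symm
  · have : (powMonoidHom 4 : G →* G).range.subgroupOf (powMonoidHom 2 : G →* G).range =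
        (powMonoidHom 2 : (powMonoidHom 2 : G →* G).range →* _).range := by
      ext ⟨z, hz⟩
      rw [Subgroup.mem_subgroupOf]
      constructor
      · rintro ⟨a, ha⟩
        refine ⟨⟨a ^ 2, ⟨a, rfl⟩⟩, Subtype.ext ?_⟩
        change (a ^ 2) ^ 2 = z
        rw [← pow_mul]; exact ha
      · rintro ⟨⟨b, ⟨a, ha⟩⟩, hb⟩
        refine ⟨a, ?_⟩
        have hb' : b ^ 2 = z := congrArg Subtype.val hb
        have ha' : a ^ 2 = b := ha
        change a ^ 4 = z
        rw [← hb', ← ha', ← pow_mul]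
    rw [this, card_quotient_range_sq]
    have hyr : y ∈ (powMonoidHom 2 : G →* G).range := by
      obtain ⟨w, rfl⟩ := hy; exact ⟨w, sq w⟩
    have : ((powMonoidHom 2 : (powMonoidHom 2 : G →* G).range →* _).ker :
        Set (powMonoidHom 2 : G →* G).range) = {1, ⟨y, hyr⟩} := by
      ext ⟨z, hz⟩
      have hzs : IsSquare z := by
        obtain ⟨w, rfl⟩ := hz; exact ⟨w, sq w⟩
      rw [SetLike.mem_coe, MonoidHom.mem_ker, powMonoidHom_apply]
      constructor
      · intro hz2
        rcases h z (congrArg Subtype.val hz2) with rfl | rfl | rfl | rfl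
        · left; rfl
        · exact absurd hzs hxs
        · right; rfl
        · exact absurd hzs hxys
      · rintro (h0 | h0)
        · rw [h0]; simp
        · rw [h0]; exact Subtype.ext hy2
    rw [← SetLike.coe_sort_coe, this, Nat.card_coe_set_eq, Set.ncard_pair]
    intro h0
    exact hy1 (congrArg Subtype.val h0).symm

end GroupTheory

/-! ### Relations between units modulo squares -/

theorem zpow_sum' {G ι : Type*} [CommGroup G] (s : Finset ι) (g : G) (f : ι → ℤ) :
    g ^ (∑ i ∈ s, f i) = ∏ i ∈ s, g ^ f i := by
  classical
  induction s using Finset.induction_on with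
  | empty => simp
  | insert i s hi ih => rw [Finset.sum_insert hi, Finset.prod_insert hi, zpow_add, ih]

/-- Among `rank + 2` units there is a nontrivial product that is a square. -/
theorem exists_unit_relation (K : Type*) [Field K] [NumberField K] {n : ℕ}
    (hn : NumberField.Units.rank K + 1 < n) (u : Fin n → (𝓞 K)ˣ) :
    ∃ c : Fin n → ZMod 2, c ≠ 0 ∧ IsSquare (∏ i, u i ^ (c i).val) := by
  obtain ⟨ω, hω⟩ := IsCyclic.exists_generator (α := NumberField.Units.torsion K)
  have h1 : ∀ i, ∃ (a : ℤ) (e : Fin (NumberField.Units.rank K) → ℤ),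
      u i = (ω : (𝓞 K)ˣ) ^ a * ∏ j, NumberField.Units.fundSystem K j ^ e j := by
    intro i
    obtain ⟨⟨t, e⟩, h, -⟩ := NumberField.Units.exist_unique_eq_mul_prod K (u i)
    obtain ⟨a, ha⟩ := hω t
    refine ⟨a, e, ?_⟩
    rw [h, ← ha]; rfl
  choose a e hu using h1
  let v : Fin n → (Option (Fin (NumberField.Units.rank K)) → ZMod 2) :=
    fun i o => o.elim (a i : ZMod 2) fun j => (e i j : ZMod 2)
  have hv : ¬ LinearIndependent (ZMod 2) v := by
    intro h
    have := h.fintype_card_le_finrank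
    simp at this
    omega
  rw [Fintype.not_linearIndependent_iff] at hv
  obtain ⟨c, hc, i₀, hi₀⟩ := hv
  refine ⟨c, fun h => hi₀ (by rw [h]; rfl), ?_⟩
  have hA : ∃ A : ℤ, ∑ i, a i * (c i).val = 2 * A := by
    have h0 := congrFun hc none
    simp only [Finset.sum_apply, Pi.smul_apply, smul_eq_mul, v, Option.elim, Pi.zero_apply] at h0
    have : ((∑ i, a i * (c i).val : ℤ) : ZMod 2) = 0 := by
      push_cast
      rw [← h0]
      exact Finset.sum_congr rfl fun i _ => by rw [ZMod.natCast_zmod_val, mul_comm]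
    exact (ZMod.intCast_zmod_eq_zero_iff_dvd _ 2).mp this
  have hE : ∀ j, ∃ A : ℤ, ∑ i, e i j * (c i).val = 2 * A := by
    intro j
    have h0 := congrFun hc (some j)
    simp only [Finset.sum_apply, Pi.smul_apply, smul_eq_mul, v, Option.elim, Pi.zero_apply] at h0
    have : ((∑ i, e i j * (c i).val : ℤ) : ZMod 2) = 0 := by
      push_cast
      rw [← h0]
      exact Finset.sum_congr rfl fun i _ => by rw [ZMod.natCast_zmod_val, mul_comm]
    exact (ZMod.intCast_zmod_eq_zero_iff_dvd _ 2).mp this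
  obtain ⟨A, hA⟩ := hA
  choose E hE using hE
  refine ⟨(ω : (𝓞 K)ˣ) ^ A * ∏ j, NumberField.Units.fundSystem K j ^ E j, ?_⟩
  have h2 : ∏ i, u i ^ (c i).val = (ω : (𝓞 K)ˣ) ^ (∑ i, a i * (c i).val) *
      ∏ j, NumberField.Units.fundSystem K j ^ (∑ i, e i j * (c i).val) := by
    have h3 : ∀ i, u i ^ (c i).val = (ω : (𝓞 K)ˣ) ^ (a i * (c i).val) *
        ∏ j, NumberField.Units.fundSystem K j ^ (e i j * (c i).val) := by
      intro i
      rw [hu i, mul_pow, ← Finset.prod_pow, zpow_mul, zpow_natCast]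
      congr 1
      exact Finset.prod_congr rfl fun j _ => by rw [zpow_mul, zpow_natCast]
    rw [Finset.prod_congr rfl fun i _ => h3 i, Finset.prod_mul_distrib, Finset.prod_comm]
    congr 1
    · rw [zpow_sum']
    · exact Finset.prod_congr rfl fun j _ => by rw [zpow_sum']
  rw [h2, hA, mul_mul_mul_comm, ← zpow_add, ← two_mul, ← Finset.prod_mul_distrib]
  congr 1
  exact Finset.prod_congr rfl fun j _ => by rw [hE, two_mul, zpow_add]

/-! ### The ring of integers of the eighth cyclotomic field -/

namespace Zeta8

variable (F : Type*) [Field F] [NumberField F] [hF : IsCyclotomicExtension {8} ℚ F]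

/-- A primitive eighth root of unity in the ring of integers of `F`. -/
def ζ : 𝓞 F := (IsCyclotomicExtension.zeta_spec 8 ℚ F).toInteger

theorem ζ_prim : IsPrimitiveRoot (ζ F) 8 :=
  (IsCyclotomicExtension.zeta_spec 8 ℚ F).toInteger_isPrimitiveRoot

theorem ζ_pow : ζ F ^ 4 = -1 := by
  have h := ζ_prim F
  have h1 : (ζ F ^ 4 - 1) * (ζ F ^ 4 + 1) = 0 := by
    have := h.pow_eq_one
    linear_combination this
  rcases mul_eq_zero.mp h1 with h2 | h2
  · exact absurd (sub_eq_zero.mp h2) (h.pow_ne_one_of_pos_of_lt (by norm_num) (by norm_num))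
  · exact eq_neg_of_add_eq_zero_left h2

/-- The power basis `1, ζ, ζ², ζ³`. -/
def pb : PowerBasis ℤ (𝓞 F) :=
  haveI : IsCyclotomicExtension {2 ^ 3} ℚ F := hF
  IsPrimitiveRoot.integralPowerBasisOfPrimePow (p := 2) (k := 3) (IsCyclotomicExtension.zeta_spec 8 ℚ F)

theorem pb_gen : (pb F).gen = ζ F :=
  haveI : IsCyclotomicExtension {2 ^ 3} ℚ F := hF
  IsPrimitiveRoot.integralPowerBasisOfPrimePow_gen (p := 2) (k := 3)
    (IsCyclotomicExtension.zeta_spec 8 ℚ F)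

theorem pb_dim : (pb F).dim = 4 :=
  haveI : IsCyclotomicExtension {2 ^ 3} ℚ F := hF
  (IsPrimitiveRoot.integralPowerBasisOfPrimePow_dim (p := 2) (k := 3)
    (IsCyclotomicExtension.zeta_spec 8 ℚ F)).trans (by decide)

theorem exists_rep (x : 𝓞 F) : ∃ a b c d : ℤ, x = a + b * ζ F + c * ζ F ^ 2 + d * ζ F ^ 3 := by
  have h := (pb F).basis.sum_repr x
  have hd := pb_dim F
  let e : Fin 4 ≃ Fin (pb F).dim := finCongr hd.symm
  rw [← e.sum_comp, Fin.sum_univ_four] at h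
  simp only [PowerBasis.coe_basis, pb_gen, zsmul_eq_mul] at h
  refine ⟨(pb F).basis.repr x (e 0), (pb F).basis.repr x (e 1), (pb F).basis.repr x (e 2),
    (pb F).basis.repr x (e 3), h.symm.trans ?_⟩
  simp [e]

theorem minpoly_ζ : minpoly ℤ (ζ F) = Polynomial.X ^ 4 + 1 := by
  have h := Polynomial.cyclotomic_eq_minpoly (IsCyclotomicExtension.zeta_spec 8 ℚ F) (by norm_num)
  have h2 : minpoly ℤ (algebraMap (𝓞 F) F (ζ F)) = minpoly ℤ (ζ F) :=
    minpoly.algebraMap_eq RingOfIntegers.coe_injective _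
  rw [← h2]
  refine h.symm.trans ?_
  have := Polynomial.cyclotomic_prime_pow_eq_geom_sum (R := ℤ) (p := 2) (n := 2) Nat.prime_two
  norm_num [Finset.sum_range_succ] at this
  rw [this]; ring

variable {F} in
/-- The ring homomorphism from `ℤ[ζ]` sending `ζ` to a root `t` of `X⁴ + 1`. -/
def lift {A : Type*} [CommRing A] (t : A) (ht : t ^ 4 = -1) : 𝓞 F →+* A :=
  ((pb F).lift t (by rw [pb_gen, minpoly_ζ]; simp [ht])).toRingHom

variable {F} in
@[simp]
theorem lift_ζ {A : Type*} [CommRing A] (t : A) (ht : t ^ 4 = -1) : lift t ht (ζ F) = t := by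
  have := (pb F).lift_gen t (by rw [pb_gen, minpoly_ζ]; simp [ht])
  conv_lhs => rw [← pb_gen]
  exact this

variable {F} in
theorem hom_ext {A : Type*} [CommRing A] {f g : 𝓞 F →+* A} (h : f (ζ F) = g (ζ F)) : f = g := by
  ext x
  obtain ⟨a, b, c, d, rfl⟩ := exists_rep F x
  simp [h]

/-- The Minkowski bound of `ℚ(ζ₈)` is less than three, and a prime above two is generated by `1 - ζ`. -/
theorem isPrincipalIdealRing : IsPrincipalIdealRing (𝓞 F) := by
  apply RingOfIntegers.isPrincipalIdealRing_of_isPrincipal_of_norm_le_of_isPrime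
  intro I hI hN
  have hfin : Module.finrank ℚ F = 4 := by
    rw [IsCyclotomicExtension.finrank (n := 8) F (Polynomial.cyclotomic.irreducible_rat (by simp))]
    decide
  have hcp : InfinitePlace.nrComplexPlaces F = 2 := by
    rw [IsCyclotomicExtension.Rat.nrComplexPlaces_eq_totient_div_two 8]; decide
  have hdisc : (discr F).natAbs = 256 := by
    rw [IsCyclotomicExtension.Rat.natAbs_discr 8]
    have h1 : Nat.totient 8 = 4 := by decide
    have h2 : Nat.primeFactors 8 = {2} := by
      rw [show 8 = 2 ^ 3 by norm_num]; exact Nat.primeFactors_prime_pow (by norm_num) Nat.prime_two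
    rw [h1, h2]; norm_num
  have hlt : (Ideal.absNorm (I : Ideal (𝓞 F)) : ℝ) < 3 := by
    refine hN.trans_lt ?_
    have hd : |(discr F : ℝ)| = 16 ^ 2 := by
      rw [← Int.cast_abs, Int.abs_eq_natAbs, hdisc]; norm_num
    rw [hfin, hcp, hd, Real.sqrt_sq (by norm_num)]
    have hpi := Real.pi_gt_three
    have hpi2 : 9 < Real.pi ^ 2 := by nlinarith
    rw [div_pow, show Nat.factorial 4 = 24 from rfl]
    rw [div_mul_eq_mul_div, div_lt_iff₀ (by positivity)]
    norm_num
    linarith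
  have hle : Ideal.absNorm (I : Ideal (𝓞 F)) < 3 := by exact_mod_cast hlt
  have h2 : (2 : 𝓞 F) ∈ (I : Ideal (𝓞 F)) := by
    have hmem := Ideal.absNorm_mem (I : Ideal (𝓞 F))
    have h0 : Ideal.absNorm (I : Ideal (𝓞 F)) ≠ 0 := by
      rw [Ne, Ideal.absNorm_eq_zero_iff]; exact nonZeroDivisors.ne_zero I.2
    have h1 : Ideal.absNorm (I : Ideal (𝓞 F)) ≠ 1 := by
      rw [Ne, Ideal.absNorm_eq_one_iff]; exact hI.ne_top
    have : Ideal.absNorm (I : Ideal (𝓞 F)) = 2 := by omega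
    rw [this] at hmem
    exact_mod_cast hmem
  have hz := ζ_pow F
  have h1 : (1 - ζ F) ∈ (I : Ideal (𝓞 F)) := by
    apply hI.mem_of_pow_mem 4
    have : (1 - ζ F) ^ 4 = (3 * ζ F ^ 2 - 2 * ζ F - 2 * ζ F ^ 3) * 2 := by
      linear_combination hz
    rw [this]
    exact Ideal.mul_mem_left _ _ h2
  have h2' : (1 - ζ F) ∣ 2 := ⟨1 + ζ F + ζ F ^ 2 + ζ F ^ 3, by linear_combination hz⟩
  refine ⟨1 - ζ F, ?_⟩
  change _ = Ideal.span _
  apply le_antisymm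
  · intro x hx
    rw [Ideal.mem_span_singleton]
    obtain ⟨a, b, c, d, rfl⟩ := exists_rep F x
    have hdvd : ∀ m : ℤ, (1 - ζ F) ∣ (a + b * ζ F + c * ζ F ^ 2 + d * ζ F ^ 3) - ((a + b + c + d : ℤ) : 𝓞 F) := by
      intro _
      refine ⟨-(b + c * (1 + ζ F) + d * (1 + ζ F + ζ F ^ 2)), ?_⟩
      push_cast; ring
    have hd := hdvd 0
    rcases Int.even_or_odd' (a + b + c + d) with ⟨k, hk | hk⟩
    · rw [hk] at hd
      have : (1 - ζ F) ∣ ((2 * k : ℤ) : 𝓞 F) := by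
        push_cast; exact h2'.mul_right _
      exact (dvd_sub_left this).mp hd
    · exfalso
      apply hI.ne_top
      rw [Ideal.eq_top_iff_one]
      have e1 : ((a + b + c + d : ℤ) : 𝓞 F) ∈ (I : Ideal (𝓞 F)) := by
        obtain ⟨y, hy⟩ := hd
        have := (I : Ideal (𝓞 F)).sub_mem hx (Ideal.mul_mem_right y _ h1)
        rw [← hy] at this
        simpa using this
      rw [hk] at e1
      have := (I : Ideal (𝓞 F)).sub_mem e1 (Ideal.mul_mem_left _ (k : 𝓞 F) h2)
      push_cast at this
      convert this using 1; ring
  · rw [Ideal.span_singleton_le_iff_mem]; exact h1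

end Zeta8

namespace Zeta8

/-! ### Units of the eighth cyclotomic field modulo squares -/

section Units

variable (F : Type*) [Field F] [NumberField F] [hF : IsCyclotomicExtension {8} ℚ F]

/-- `√2 = ζ + ζ⁻¹`. -/
def rt2 : 𝓞 F := ζ F - ζ F ^ 3

theorem rt2_sq : rt2 F ^ 2 = 2 := by
  unfold rt2; linear_combination (ζ F ^ 2 - 2) * ζ_pow F

/-- `ζ` as a unit. -/
def ζu : (𝓞 F)ˣ := ⟨ζ F, -ζ F ^ 3, by linear_combination -ζ_pow F, by linear_combination -ζ_pow F⟩

/-- The fundamental unit `1 + √2`. -/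
def εu : (𝓞 F)ˣ := ⟨1 + rt2 F, rt2 F - 1, by linear_combination rt2_sq F,
  by linear_combination rt2_sq F⟩

theorem ζu_val : (ζu F : 𝓞 F) = ζ F := rfl
theorem εu_val : (εu F : 𝓞 F) = 1 + rt2 F := rfl

/-- Reduction modulo a prime above 41. -/
theorem not_isSquare_ζ : ¬ IsSquare (ζ F) := by
  intro h
  have h1 := h.map (lift (F := F) (3 : ZMod 41) (by decide))
  rw [lift_ζ] at h1
  revert h1; decide

/-- Reduction modulo a prime above 17. -/
theorem not_isSquare_ε : ¬ IsSquare (εu F : 𝓞 F) := by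
  intro h
  have h1 := h.map (lift (F := F) (2 : ZMod 17) (by decide))
  rw [εu_val, rt2, map_add, map_sub, map_pow, map_one, lift_ζ] at h1
  revert h1; decide

/-- Reduction modulo a prime above 17. -/
theorem not_isSquare_ζε : ¬ IsSquare (ζ F * εu F : 𝓞 F) := by
  intro h
  have h1 := h.map (lift (F := F) (2 : ZMod 17) (by decide))
  rw [εu_val, rt2, map_mul, map_add, map_sub, map_pow, map_one, lift_ζ] at h1
  revert h1; decide

theorem rank_eq : NumberField.Units.rank F = 1 := by
  have hcp : InfinitePlace.nrComplexPlaces F = 2 := by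
    rw [IsCyclotomicExtension.Rat.nrComplexPlaces_eq_totient_div_two 8]; decide
  have hfin : Module.finrank ℚ F = 4 := by
    rw [IsCyclotomicExtension.finrank (n := 8) F (Polynomial.cyclotomic.irreducible_rat (by simp))]
    decide
  have h := InfinitePlace.card_add_two_mul_card_eq_rank F
  rw [hcp, hfin] at h
  rw [NumberField.Units.rank, InfinitePlace.card_eq_nrRealPlaces_add_nrComplexPlaces, hcp]
  omega

theorem zmod2_cases (c : ZMod 2) : c = 0 ∨ c = 1 := by revert c; decide

/-- Modulo squares the units of `ℤ[ζ]` are generated by `ζ` and `1 + √2`: the unit rank is one and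
these two are independent modulo squares. -/
theorem exists_unit_rep (u : (𝓞 F)ˣ) :
    ∃ (a b : ℕ) (w : (𝓞 F)ˣ), a ≤ 1 ∧ b ≤ 1 ∧ u = ζu F ^ a * εu F ^ b * w ^ 2 := by
  obtain ⟨c, hc0, v, hv⟩ := exists_unit_relation F (n := 3) (by rw [rank_eq]; norm_num)
    ![ζu F, εu F, u]
  rw [Fin.prod_univ_three] at hv
  simp only [Matrix.cons_val_zero, Matrix.cons_val_one, Matrix.cons_val] at hv
  have hle : ∀ i, (c i).val ≤ 1 := fun i => Nat.lt_succ_iff.mp (ZMod.val_lt (c i))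
  have h1 : (1 : ZMod 2).val = 1 := rfl
  rcases zmod2_cases (c 2) with h2 | h2
  · exfalso
    have hv' := congrArg (Units.val) hv
    rw [h2] at hv'
    rcases zmod2_cases (c 0) with h00 | h00 <;> rcases zmod2_cases (c 1) with h01 | h01 <;>
      simp only [h00, h01, h1, ZMod.val_zero, pow_zero, pow_one, mul_one, one_mul,
        Units.val_mul, ζu_val] at hv'
    · apply hc0; ext i; fin_cases i <;> simp [h00, h01, h2]
    · exact not_isSquare_ε F ⟨_, hv'⟩
    · exact not_isSquare_ζ F ⟨_, hv'⟩
    · exact not_isSquare_ζε F ⟨_, hv'⟩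
  · refine ⟨(c 0).val, (c 1).val, (ζu F ^ (c 0).val * εu F ^ (c 1).val)⁻¹ * v, hle 0, hle 1, ?_⟩
    rw [h2, h1, pow_one] at hv
    rw [mul_pow, sq v, ← hv]
    generalize ζu F ^ (c 0).val * εu F ^ (c 1).val = X
    rw [inv_pow, sq, mul_inv, mul_assoc, inv_mul_cancel_left, mul_inv_cancel_left]

end Units

/-! ### A prime above a rational prime that splits completely -/

section Split

variable {F : Type*} [Field F] [NumberField F] [hF : IsCyclotomicExtension {8} ℚ F]

theorem odd_pow {A : Type*} [CommRing A] {t : A} (ht : t ^ 4 = -1) (k : ℕ) :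
    (t ^ (2 * k + 1)) ^ 4 = -1 := by
  rw [← pow_mul, mul_comm, pow_mul, ht]
  exact Odd.neg_one_pow ⟨k, rfl⟩

variable (F) in
/-- The automorphism `ζ ↦ ζ ^ (2 * k + 1)`. -/
def τ (k : ℕ) : 𝓞 F →+* 𝓞 F := lift (ζ F ^ (2 * k + 1)) (odd_pow (ζ_pow F) k)

theorem τ_ζ (k : ℕ) : τ F k (ζ F) = ζ F ^ (2 * k + 1) := lift_ζ _ _

theorem pow_eq_of_mod {A : Type*} [CommRing A] {t : A} (ht : t ^ 4 = -1) {m n : ℕ}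
    (h : m % 8 = n % 8) : t ^ m = t ^ n := by
  have h8 : t ^ 8 = 1 := by linear_combination (t ^ 4 - 1) * ht
  rw [pow_eq_pow_mod m h8, pow_eq_pow_mod n h8, h]

theorem τ_τ {k : ℕ} (x : 𝓞 F) : τ F k (τ F k x) = x := by
  have : (τ F k).comp (τ F k) = RingHom.id _ := by
    apply hom_ext
    rw [RingHom.comp_apply, τ_ζ, map_pow, τ_ζ, ← pow_mul, RingHom.id_apply]
    conv_rhs => rw [← pow_one (ζ F)]
    apply pow_eq_of_mod (ζ_pow F)
    have : k % 4 < 4 := Nat.mod_lt _ (by norm_num)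
    rw [Nat.mul_mod]
    have h8 : (2 * k + 1) % 8 = 2 * (k % 4) + 1 := by omega
    rw [h8]
    interval_cases k % 4 <;> rfl
  exact congrArg (fun f : 𝓞 F →+* 𝓞 F => f x) this

theorem τ_zero (x : 𝓞 F) : τ F 0 x = x := by
  have : τ F 0 = RingHom.id _ := hom_ext (by rw [τ_ζ]; simp)
  rw [this]; rfl

variable {p : ℕ} [hp : Fact p.Prime] {r : ZMod p} (hr : r ^ 4 = -1)

variable (F) in
/-- The residue map `ζ ↦ r ^ (2 * k + 1)` to the prime field. -/
def φ (k : ℕ) : 𝓞 F →+* ZMod p := lift (r ^ (2 * k + 1)) (odd_pow hr k)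

theorem φ_ζ (k : ℕ) : φ F hr k (ζ F) = r ^ (2 * k + 1) := lift_ζ _ _

theorem φ_τ (i j k : ℕ) (h : (2 * i + 1) * (2 * j + 1) % 8 = (2 * k + 1) % 8) (x : 𝓞 F) :
    φ F hr i (τ F j x) = φ F hr k x := by
  have : (φ F hr i).comp (τ F j) = φ F hr k := by
    apply hom_ext
    rw [RingHom.comp_apply, τ_ζ, map_pow, φ_ζ, φ_ζ, ← pow_mul]
    exact pow_eq_of_mod hr h
  exact congrArg (fun f : 𝓞 F →+* ZMod p => f x) this

theorem τ_τ' (i j k : ℕ) (h : (2 * i + 1) * (2 * j + 1) % 8 = (2 * k + 1) % 8) (x : 𝓞 F) :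
    τ F i (τ F j x) = τ F k x := by
  have : (τ F i).comp (τ F j) = τ F k := by
    apply hom_ext
    rw [RingHom.comp_apply, τ_ζ, map_pow, τ_ζ, τ_ζ, ← pow_mul]
    exact pow_eq_of_mod (ζ_pow F) h
  exact congrArg (fun f : 𝓞 F →+* 𝓞 F => f x) this

variable (F) in
/-- A generator of the prime ideal `ker φ₀`, one of the four primes above `p`. -/
theorem exists_π : ∃ π : 𝓞 F, ∀ x, φ F hr 0 x = 0 ↔ π ∣ x := by
  have := isPrincipalIdealRing F
  obtain ⟨π, hπ⟩ := (IsPrincipalIdealRing.principal (RingHom.ker (φ F hr 0))).principal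
  refine ⟨π, fun x => ?_⟩
  rw [← RingHom.mem_ker, hπ]
  exact Ideal.mem_span_singleton

variable {π : 𝓞 F} (hπ : ∀ x, φ F hr 0 x = 0 ↔ π ∣ x)

include hπ

theorem φ_eq_zero_iff (k : ℕ) (x : 𝓞 F) : φ F hr k x = 0 ↔ τ F k π ∣ x := by
  rw [← φ_τ hr 0 k k (by norm_num), hπ]
  constructor
  · intro h
    have := map_dvd (τ F k) h
    rwa [τ_τ] at this
  · intro h
    have := map_dvd (τ F k) h
    rwa [τ_τ] at this

theorem prime_π (k : ℕ) : Prime (τ F k π) := by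
  have hker : RingHom.ker (φ F hr k) = Ideal.span {τ F k π} := by
    ext x
    rw [RingHom.mem_ker, φ_eq_zero_iff hr hπ, Ideal.mem_span_singleton]
  have h0 : τ F k π ≠ 0 := by
    intro h
    have h1 : φ F hr k (p : 𝓞 F) = 0 := by rw [map_natCast]; exact ZMod.natCast_self p
    rw [φ_eq_zero_iff hr hπ, h, zero_dvd_iff] at h1
    exact hp.out.ne_zero (by exact_mod_cast h1)
  rw [← Ideal.span_singleton_prime h0, ← hker]
  exact RingHom.ker_isPrime _

/-- The four residue maps have distinct kernels, because the four odd powers of `r` are distinct. -/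
theorem φ_π_ne {j k : ℕ} (hj : j < 4) (hk : k < 4) (hjk : j ≠ k) (hp2 : p ≠ 2) :
    φ F hr j (τ F k π) ≠ 0 := by
  intro h
  rw [φ_eq_zero_iff hr hπ] at h
  -- `ζ - m` lies in the kernel of the residue map at `k`
  obtain ⟨m, hm⟩ : ∃ m : ℕ, (m : ZMod p) = r ^ (2 * k + 1) := ⟨_, ZMod.natCast_zmod_val _⟩
  have h1 : φ F hr k (ζ F - m) = 0 := by rw [map_sub, φ_ζ, map_natCast, hm, sub_self]
  rw [φ_eq_zero_iff hr hπ] at h1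
  have h2 := (φ_eq_zero_iff hr hπ j _).mpr (h.trans h1)
  rw [map_sub, φ_ζ, map_natCast, hm, sub_eq_zero] at h2
  have h20 : (2 : ZMod p) ≠ 0 := by
    intro h0
    have : p ∣ 2 := (ZMod.natCast_eq_zero_iff 2 p).mp (by exact_mod_cast h0)
    exact hp2 ((Nat.prime_dvd_prime_iff_eq hp.out Nat.prime_two).mp this)
  have hr0 : r ≠ 0 := by rintro rfl; norm_num at hr
  have hr2 : r ^ 2 ≠ 1 := by
    intro h3; apply h20; linear_combination hr - (r ^ 2 + 1) * h3
  have hr2' : r ^ 2 ≠ -1 := by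
    intro h3; apply h20; linear_combination hr - (r ^ 2 - 1) * h3
  have hr1 : (1 : ZMod p) ≠ -1 := by
    intro h3; apply h20; linear_combination h3
  have key : ∀ i, r ^ (2 * i + 1) = r * (r ^ 2) ^ i := fun i => by ring
  rw [key, key] at h2
  have h3 := mul_left_cancel₀ hr0 h2
  have hr4 : (r ^ 2) ^ 2 = -1 := by rw [← pow_mul]; exact hr
  have hr6 : (r ^ 2) ^ 3 = - r ^ 2 := by linear_combination r ^ 2 * hr4
  have hr22 : r ^ 2 ≠ - r ^ 2 := by
    intro h4; apply mul_ne_zero h20 (pow_ne_zero 2 hr0); linear_combination h4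
  interval_cases j <;> interval_cases k <;> simp only [pow_zero, pow_one, hr4, hr6, ne_eq, not_true_eq_false] at h3 hjk
  · exact hr2 h3.symm
  · exact hr1 h3
  · exact hr2' (by rw [h3, neg_neg])
  · exact hr2 h3
  · exact hr2' h3
  · exact hr22 h3
  · exact hr1 h3.symm
  · exact hr2' h3.symm
  · exact hr2 (neg_injective h3).symm
  · exact hr2' (by rw [← h3, neg_neg])
  · exact hr22 h3.symm
  · exact hr2 (neg_injective h3)

theorem not_dvd_π {j k : ℕ} (hj : j < 4) (hk : k < 4) (hjk : j ≠ k) (hp2 : p ≠ 2) :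
    ¬ τ F j π ∣ τ F k π := by
  rw [← φ_eq_zero_iff hr hπ]; exact φ_π_ne hr hπ hj hk hjk hp2

omit hπ hp in
theorem int_dvd {m n : ℤ} (h : (m : 𝓞 F) ∣ n) : m ∣ n := by
  have h1 := map_dvd (Algebra.norm ℤ) h
  have h2 : ∀ k : ℤ, Algebra.norm ℤ (k : 𝓞 F) = k ^ 4 := by
    intro k
    have := Algebra.norm_algebraMap_of_basis (pb F).basis k
    rw [Fintype.card_fin, pb_dim] at this
    exact this
  rw [h2, h2] at h1
  exact (Int.pow_dvd_pow_iff (by norm_num)).mp h1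

/-- If the product of the four conjugates of `π` is a nonnegative integer, it is `p`. -/
theorem prod_π (hp2 : p ≠ 2) {n : ℤ} (hn0 : 0 ≤ n)
    (hn : π * τ F 1 π * τ F 2 π * τ F 3 π = n) : n = p := by
  have hdp : ∀ k, τ F k π ∣ (p : 𝓞 F) := fun k => by
    rw [← φ_eq_zero_iff hr hπ, map_natCast]; exact ZMod.natCast_self p
  have hP := prime_π hr hπ
  have h1 : τ F 0 π * τ F 1 π * τ F 2 π * τ F 3 π ∣ (p : 𝓞 F) := by
    obtain ⟨x, hx⟩ := hdp 0
    have d1 : τ F 1 π ∣ x := by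
      have := hdp 1; rw [hx] at this
      exact ((hP 1).dvd_or_dvd this).resolve_left
        (not_dvd_π hr hπ (by norm_num) (by norm_num) (by norm_num) hp2)
    obtain ⟨y, rfl⟩ := d1
    have d2 : τ F 2 π ∣ y := by
      have := hdp 2; rw [hx] at this
      rcases (hP 2).dvd_or_dvd this with h | h
      · exact absurd h (not_dvd_π hr hπ (by norm_num) (by norm_num) (by norm_num) hp2)
      · exact ((hP 2).dvd_or_dvd h).resolve_left
          (not_dvd_π hr hπ (by norm_num) (by norm_num) (by norm_num) hp2)
    obtain ⟨z, rfl⟩ := d2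
    have d3 : τ F 3 π ∣ z := by
      have := hdp 3; rw [hx] at this
      rcases (hP 3).dvd_or_dvd this with h | h
      · exact absurd h (not_dvd_π hr hπ (by norm_num) (by norm_num) (by norm_num) hp2)
      rcases (hP 3).dvd_or_dvd h with h | h
      · exact absurd h (not_dvd_π hr hπ (by norm_num) (by norm_num) (by norm_num) hp2)
      · exact ((hP 3).dvd_or_dvd h).resolve_left
          (not_dvd_π hr hπ (by norm_num) (by norm_num) (by norm_num) hp2)
    obtain ⟨w, rfl⟩ := d3
    exact ⟨w, by rw [hx]; ring⟩
  rw [τ_zero, hn] at h1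
  have h2 : n ∣ (p : ℤ) := int_dvd (F := F) (by exact_mod_cast h1)
  have h3 : (p : ℤ) ∣ n := by
    have : φ F hr 0 (n : 𝓞 F) = 0 := by
      rw [hπ, ← hn]; exact ((dvd_mul_right π _).mul_right _).mul_right _
    rw [map_intCast] at this
    exact (ZMod.intCast_zmod_eq_zero_iff_dvd _ p).mp this
  exact Int.dvd_antisymm hn0 (by positivity) h2 h3

end Split

end Zeta8

/-! ### Rational quadratic symbols and Pell equations -/

namespace Elem

open NumberTheorySymbols

section Symbols

variable {p : ℕ} [hp : Fact p.Prime]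

theorem jac_eq_pow (a : ℤ) : ((J(a | p) : ℤ) : ZMod p) = (a : ZMod p) ^ (p / 2) := by
  rw [← jacobiSym.legendreSym.to_jacobiSym]; exact legendreSym.eq_pow p a

theorem isSquare_iff {a : ℤ} (ha : (a : ZMod p) ≠ 0) : IsSquare (a : ZMod p) ↔ J(a | p) = 1 := by
  rw [← jacobiSym.legendreSym.to_jacobiSym, legendreSym.eq_one_iff p ha]

variable (hp8 : p % 8 = 1)

include hp8

omit hp in
theorem jac_two : J(2 | p) = 1 := by
  rw [jacobiSym.at_two (Nat.odd_iff.mpr (by omega)), ZMod.χ₈_nat_eq_if_mod_eight]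
  simp [hp8, show p % 2 ≠ 0 by omega]

omit hp in
theorem jac_neg_one : J(-1 | p) = 1 := by
  rw [jacobiSym.at_neg_one (Nat.odd_iff.mpr (by omega)), ZMod.χ₄_nat_one_mod_four (by omega)]

omit hp in
theorem jac_natAbs (n : ℤ) : J(n | p) = J((n.natAbs : ℤ) | p) := by
  rcases Int.natAbs_eq n with h | h
  · rw [← h]
  · conv_lhs => rw [h, ← neg_one_mul, jacobiSym.mul_left, jac_neg_one hp8, one_mul]

omit hp in
theorem jac_recip {n : ℤ} (hn : Odd n) : J(n | p) = J((p : ℤ) | n.natAbs) := by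
  rw [jac_natAbs hp8,
    ← jacobiSym.quadratic_reciprocity_one_mod_four (a := p) (by omega) (Int.natAbs_odd.mpr hn)]

omit hp in
/-- If `p m² ≡ u² (mod n)` with `u` prime to `n ≠ 0`, then `n` has symbol one modulo `p`,
whatever the power of two dividing `n`. -/
theorem jac_of_sq {n u m k : ℤ} (hn : n ≠ 0) (hun : IsCoprime u n)
    (h : (p : ℤ) * m ^ 2 = u ^ 2 + n * k) : J(n | p) = 1 := by
  obtain ⟨n', hnn, hn'⟩ := (Int.finiteMultiplicity_iff.mpr
    ⟨by decide, hn⟩ : FiniteMultiplicity (2 : ℤ) n).exists_eq_pow_mul_and_not_dvd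
  set j := multiplicity 2 n
  clear_value j
  subst hnn
  have hodd : Odd n' := by rwa [← Int.not_even_iff_odd, even_iff_two_dvd]
  rw [jacobiSym.mul_left, jacobiSym.pow_left, jac_two hp8, one_pow, one_mul, jac_recip hp8 hodd]
  have hun' : Int.gcd u n'.natAbs = 1 := by
    rw [Int.gcd_def, Int.natAbs_natCast, ← Int.gcd_def]
    exact Int.isCoprime_iff_gcd_eq_one.mp hun.of_mul_right_right
  have h1 : J((p : ℤ) * m ^ 2 | n'.natAbs) = J(u ^ 2 | n'.natAbs) := by
    apply jacobiSym.mod_left'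
    apply Int.ModEq.symm
    rw [Int.modEq_iff_dvd, h]
    have : (n'.natAbs : ℤ) ∣ n' := Int.natAbs_dvd.mpr dvd_rfl
    exact this.trans ⟨2 ^ j * k, by ring⟩
  rw [jacobiSym.sq_one' hun', jacobiSym.mul_left, jacobiSym.pow_left] at h1
  rcases jacobiSym.trichotomy m n'.natAbs with h2 | h2 | h2 <;> rw [h2] at h1 <;> linarith

omit hp8 in
theorem one_ne_neg_one (hp2 : p ≠ 2) : (1 : ZMod p) ≠ -1 := by
  have := Fact.mk (lt_of_le_of_ne hp.out.two_le hp2.symm)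
  exact (ZMod.neg_one_ne_one (n := p)).symm

variable (h2 : (2 : ZMod p) ^ ((p - 1) / 4) = -1)

include h2

/-- If `b² ≡ 2a²` then `(b/p) = (2/p)₄ (a/p) = -(a/p)`. -/
theorem jac_biquad {a b : ℤ} (h : (b : ZMod p) ^ 2 = 2 * (a : ZMod p) ^ 2) :
    ((J(b | p) : ℤ) : ZMod p) = -((J(a | p) : ℤ) : ZMod p) := by
  have e1 : p / 2 = 2 * ((p - 1) / 4) := by omega
  rw [jac_eq_pow, jac_eq_pow, e1, pow_mul, pow_mul, h, mul_pow, h2]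
  ring

theorem jac_biquad₁ {a b : ℤ} (h : (b : ZMod p) ^ 2 = 2 * (a : ZMod p) ^ 2)
    (ha : J(a | p) = 1) : J(b | p) = -1 := by
  have h3 := jac_biquad hp8 h2 h
  rw [ha] at h3
  have hne := one_ne_neg_one (p := p) (by omega)
  rcases jacobiSym.trichotomy b p with h4 | h4 | h4
  · rw [h4] at h3; simp at h3
  · rw [h4] at h3; push_cast at h3; exact absurd h3 hne
  · exact h4

theorem jac_biquad₂ {a b : ℤ} (h : (b : ZMod p) ^ 2 = 2 * (a : ZMod p) ^ 2)
    (hb : J(b | p) = -1) : J(a | p) = 1 := by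
  have h3 := jac_biquad hp8 h2 h
  rw [hb] at h3
  have hne := one_ne_neg_one (p := p) (by omega)
  rcases jacobiSym.trichotomy a p with h4 | h4 | h4
  · rw [h4] at h3; simp at h3
  · exact h4
  · rw [h4] at h3; push_cast at h3; rw [neg_neg] at h3; exact absurd h3.symm hne

omit hp8 h2 in
theorem isCoprime_of_norm {a b m : ℤ} (h : a ^ 2 + m * b ^ 2 = p) : IsCoprime a b := by
  rw [Int.isCoprime_iff_gcd_eq_one]
  by_contra hg
  obtain ⟨q, hq, hqa⟩ := Nat.exists_prime_and_dvd hg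
  have ha : (q : ℤ) ∣ a := (Int.natCast_dvd_natCast.mpr hqa).trans (Int.gcd_dvd_left ..)
  have hb : (q : ℤ) ∣ b := (Int.natCast_dvd_natCast.mpr hqa).trans (Int.gcd_dvd_right ..)
  have h3 : (q : ℤ) ^ 2 ∣ p := by
    rw [← h]
    exact dvd_add (pow_dvd_pow_of_dvd ha 2) ((pow_dvd_pow_of_dvd hb 2).mul_left m)
  have h4 : q ^ 2 ∣ p := by exact_mod_cast h3
  have h5 := (Nat.prime_dvd_prime_iff_eq hq hp.out).mp ((dvd_pow_self q two_ne_zero).trans h4)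
  subst h5
  have := Nat.le_of_dvd hq.pos h4
  nlinarith [hq.two_le]

variable (hp16 : p % 16 = 9) {e f : ℤ} (hef : e ^ 2 - 2 * f ^ 2 = p)

include hef

omit hp h2 in
theorem odd_e : Odd e ∧ Even f := by
  have he : Odd e := by
    rw [← Int.not_even_iff_odd]
    rintro ⟨k, rfl⟩
    have : (p : ℤ) = 2 * (2 * k ^ 2 - f ^ 2) := by rw [← hef]; ring
    omega
  refine ⟨he, ?_⟩
  rw [← Int.not_odd_iff_even]
  intro hf
  have h1 := Int.sq_mod_four_eq_one_of_odd he
  have h3 := Int.sq_mod_four_eq_one_of_odd hf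
  omega

/-- Since `e² ≡ 2f² (mod p)`, the symbols of `e` and `f` differ by `(2/p)₄ = -1`, and `(f/p) = 1`
because `p ≡ e² (mod f)`. -/
theorem jac_e : J(e | p) = -1 := by
  have hf0 : f ≠ 0 := by
    rintro rfl
    have h3 : e * e = p := by rw [← hef]; ring
    have := (Nat.prime_iff_prime_int.mp hp.out).irreducible
    rw [← h3] at this
    exact this.not_isSquare ⟨e, rfl⟩
  have h1 : J(f | p) = 1 := jac_of_sq hp8 (u := e) (m := 1) (k := -2 * f) hf0
    (isCoprime_of_norm (m := -2) (by rw [← hef]; ring)) (by rw [← hef]; ring)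
  refine jac_biquad₁ hp8 h2 ?_ h1
  have : ((e ^ 2 - 2 * f ^ 2 : ℤ) : ZMod p) = 0 := by rw [hef]; simp
  push_cast at this
  linear_combination this

include hp16

/-- Put `g = e + f` and `x = e + 2f`, so `x² = 2g² - p`. Then `x² ≡ 9 (mod 16)`, so `x ≡ ±3 (mod 8)`
and `(x/p) = (p/x) = (2/x) = -1`. As `x² ≡ 2g² (mod p)`, it follows that `(g/p) = -(x/p) = 1`. -/
theorem jac_g : J(e + f | p) = 1 := by
  obtain ⟨he, hf⟩ := odd_e hp8 hef
  have hx : (e + 2 * f) ^ 2 = 2 * (e + f) ^ 2 - p := by rw [← hef]; ring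
  have hxodd : Odd (e + 2 * f) := he.add_even ⟨f, by ring⟩
  have hg : Odd (e + f) := he.add_even hf
  have hg8 := Int.sq_mod_four_eq_one_of_odd hg
  have hg8 : (e + f) ^ 2 % 8 = 1 := by
    obtain ⟨k, hk⟩ := hg
    obtain ⟨l, hl⟩ := Int.even_mul_succ_self k
    rw [hk, show (2 * k + 1) ^ 2 = 4 * (k * (k + 1)) + 1 by ring, hl]; omega
  have hx16 : (e + 2 * f) ^ 2 % 16 = 9 := by omega
  have hx1 : J(e + 2 * f | p) = -1 := by
    rw [jac_recip hp8 hxodd]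
    set N := (e + 2 * f).natAbs with hN
    have hN2 : ((N : ℤ)) ^ 2 = (e + 2 * f) ^ 2 := Int.natAbs_sq _
    have hNodd : Odd N := Int.natAbs_odd.mpr hxodd
    have hcop : Int.gcd (e + f) N = 1 := by
      rw [hN, Int.gcd_def, Int.natAbs_natCast, ← Int.gcd_def]
      apply Int.isCoprime_iff_gcd_eq_one.mp
      have := isCoprime_of_norm (p := p) (m := -2) (by rw [← hef]; ring : e ^ 2 + -2 * f ^ 2 = p)
      -- `e = 2(e + f) - (e + 2f)` and `f = (e + 2f) - (e + f)`
      obtain ⟨a, b, hab⟩ := this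
      exact ⟨2 * a - b, b - a, by linear_combination hab⟩
    have h3 : J((p : ℤ) | N) = J(2 * (e + f) ^ 2 | N) := by
      apply jacobiSym.mod_left'
      rw [← Int.ModEq, Int.modEq_iff_dvd]
      refine ⟨N, ?_⟩
      rw [← sq, hN2, hx]
    rw [h3, jacobiSym.mul_left, jacobiSym.sq_one' hcop, mul_one, jacobiSym.at_two hNodd,
      ZMod.χ₈_nat_eq_if_mod_eight]
    have hN16 : N ^ 2 % 16 = 9 := by
      have : ((N : ℤ)) ^ 2 % 16 = 9 := by rw [hN2, hx16]
      exact_mod_cast this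
    have hNm : N % 8 = 3 ∨ N % 8 = 5 := by
      have h16 : N % 16 < 16 := Nat.mod_lt _ (by norm_num)
      rw [Nat.pow_mod] at hN16
      have : N % 8 = (N % 16) % 8 := by omega
      rw [this]
      interval_cases N % 16 <;> simp_all
    have : N % 2 ≠ 0 := by omega
    rcases hNm with h | h <;> simp [h, this]
  refine jac_biquad₂ hp8 h2 (b := e + 2 * f) ?_ hx1
  have : ((e ^ 2 - 2 * f ^ 2 : ℤ) : ZMod p) = 0 := by rw [hef]; simp
  push_cast at this ⊢
  linear_combination -this

end Symbols

end Elem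

namespace Elem

open NumberTheorySymbols

section Pell

theorem sq_of_mul_sq {A B z : ℤ} (hA : 0 ≤ A) (hB : 0 ≤ B) (h : IsCoprime A B)
    (hz : A * B = z ^ 2) : (∃ a, A = a ^ 2) ∧ ∃ b, B = b ^ 2 := by
  have key : ∀ {A B : ℤ}, 0 ≤ A → IsCoprime A B → A * B = z ^ 2 → ∃ a, A = a ^ 2 := by
    intro A B hA h hz
    obtain ⟨a, ha | ha⟩ := Int.sq_of_isCoprime h hz
    · exact ⟨a, ha⟩
    · exact ⟨0, by nlinarith⟩
  exact ⟨key hA h hz, key hB h.symm (by rw [mul_comm, hz])⟩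

theorem split_prime {q : ℕ} (hq : q.Prime) {A B z : ℤ} (hA : 0 ≤ A) (hB : 0 ≤ B)
    (h : IsCoprime A B) (hz : A * B = q * z ^ 2) :
    (∃ a b, A = a ^ 2 ∧ B = q * b ^ 2) ∨ ∃ a b, A = q * b ^ 2 ∧ B = a ^ 2 := by
  have hq0 : (0 : ℤ) < q := by exact_mod_cast hq.pos
  rcases (Nat.prime_iff_prime_int.mp hq).dvd_or_dvd ⟨z ^ 2, hz⟩ with ⟨A', rfl⟩ | ⟨B', rfl⟩
  · right
    obtain ⟨⟨a, ha⟩, b, hb⟩ := sq_of_mul_sq (z := z) (nonneg_of_mul_nonneg_right hA hq0) hB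
      h.of_mul_left_right (mul_left_cancel₀ hq0.ne' (by rw [← hz]; ring))
    exact ⟨b, a, by rw [ha], hb⟩
  · left
    obtain ⟨⟨a, ha⟩, b, hb⟩ := sq_of_mul_sq (z := z) hA (nonneg_of_mul_nonneg_right hB hq0)
      h.of_mul_right_right (mul_left_cancel₀ hq0.ne' (by rw [← hz]; ring))
    exact ⟨a, b, ha, by rw [hb]⟩

theorem odd_sq_mod {k : ℤ} (hk : Odd k) : k ^ 2 % 8 = 1 := by
  obtain ⟨k, rfl⟩ := hk
  obtain ⟨l, hl⟩ := Int.even_mul_succ_self k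
  rw [show (2 * k + 1) ^ 2 = 4 * (k * (k + 1)) + 1 by ring, hl]; omega

/-- Half of the descent from the fundamental solution of `x² - D y² = 1`: a factorisation
`A (A + 1) = D z²` in which `A + 1` is not a square with `A` being `D` times a square. -/
theorem descent {D : ℤ} (hD : 0 < D) (hsq : ¬ IsSquare D)
    (hpar : ∀ x y : ℤ, x ^ 2 - D * y ^ 2 = 1 → Odd x ∧ Even y) :
    ∃ A z : ℤ, 0 ≤ A ∧ A * (A + 1) = D * z ^ 2 ∧ ¬ ∃ a b : ℤ, A = D * b ^ 2 ∧ A + 1 = a ^ 2 := by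
  obtain ⟨s, hs⟩ := Pell.IsFundamental.exists_of_not_isSquare hD hsq
  obtain ⟨⟨A, hA⟩, z, hz⟩ := hpar s.x s.y s.prop
  have hx1 := hs.1
  have hprop := s.prop
  have hAz : A * (A + 1) = D * z ^ 2 := by
    have : 4 * (A * (A + 1)) = 4 * (D * z ^ 2) := by
      rw [hA, hz] at hprop; linear_combination hprop
    linarith
  refine ⟨A, z, by omega, hAz, ?_⟩
  rintro ⟨a, b, h1, h2⟩
  have h3 : |a| ^ 2 - D * b ^ 2 = 1 := by rw [sq_abs]; linarith
  have ha1 : 1 < |a| := by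
    by_contra hle
    have : |a| ^ 2 ≤ 1 := by nlinarith [abs_nonneg a]
    rw [sq_abs] at this
    omega
  have := hs.x_le_x (a := Pell.Solution₁.mk |a| b h3) (by simpa using ha1)
  rw [Pell.Solution₁.x_mk, hA] at this
  have h4 : |a| ^ 2 = A + 1 := by rw [sq_abs, h2]
  nlinarith

variable {p : ℕ} [hp : Fact p.Prime] (hp8 : p % 8 = 1)
include hp8

/-- The negative Pell equation is solvable for a prime `p ≡ 1 (mod 8)`: the fundamental solution of the
positive one splits in one way only. -/
theorem neg_pell : ∃ T U : ℤ, T ^ 2 + 1 = p * U ^ 2 := by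
  have hp' := Nat.prime_iff_prime_int.mp hp.out
  obtain ⟨A, z, hA, hAz, hno⟩ := descent (D := p) (by exact_mod_cast hp.out.pos)
    hp'.irreducible.not_isSquare (by
      intro x y h
      rcases Int.even_or_odd x with hx | hx <;> rcases Int.even_or_odd y with hy | hy
      · obtain ⟨a, rfl⟩ := hx
        obtain ⟨b, rfl⟩ := hy
        have : 2 * (2 * a ^ 2 - 2 * p * b ^ 2) = 1 := by rw [← h]; ring
        omega
      · obtain ⟨a, rfl⟩ := hx
        have h1 := odd_sq_mod hy
        obtain ⟨m, hm⟩ : ∃ m : ℤ, (p : ℤ) = 8 * m + 1 := ⟨p / 8, by omega⟩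
        have : 4 * (a ^ 2) - 8 * (m * y ^ 2) - y ^ 2 = 1 := by rw [← h, hm]; ring
        omega
      · exact ⟨hx, hy⟩
      · have h1 := odd_sq_mod hy
        have h2 := odd_sq_mod hx
        obtain ⟨m, hm⟩ : ∃ m : ℤ, (p : ℤ) = 8 * m + 1 := ⟨p / 8, by omega⟩
        have : x ^ 2 - 8 * (m * y ^ 2) - y ^ 2 = 1 := by rw [← h, hm]; ring
        omega)
  rcases split_prime hp.out hA (by omega) ⟨-1, 1, by ring⟩ hAz with ⟨a, b, h1, h2⟩ | ⟨a, b, h1, h2⟩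
  · exact ⟨a, b, by rw [← h1, ← h2]⟩
  · exact absurd ⟨a, b, h1, h2⟩ hno

variable (hp16 : p % 16 = 9) (h2p : (2 : ZMod p) ^ ((p - 1) / 4) = -1)

include hp16 h2p

/-- The negative Pell equation for `2p`. The other splittings of the fundamental solution of the positive
equation are excluded by `(2/p)₄ = -1` and `p ≡ 9 (mod 16)`. -/
theorem neg_pell_two : ∃ T U : ℤ, T ^ 2 + 1 = 2 * p * U ^ 2 := by
  have hp' := Nat.prime_iff_prime_int.mp hp.out
  obtain ⟨m, hm⟩ : ∃ m : ℤ, (p : ℤ) = 16 * m + 9 := ⟨p / 16, by omega⟩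
  have hp0 : (0 : ℤ) < p := by exact_mod_cast hp.out.pos
  obtain ⟨A, z, hA, hAz, hno⟩ := descent (D := 2 * p) (by positivity) (by
      rintro ⟨r, hr⟩
      have h2r : (2 : ℤ) ∣ r := by
        have : (2 : ℤ) ∣ r * r := ⟨p, hr.symm⟩
        exact (Int.prime_two.dvd_or_dvd this).elim id id
      obtain ⟨k, rfl⟩ := h2r
      have : (p : ℤ) = 2 * (k * k) := by linarith
      omega) (by
      intro x y h
      have hx : Odd x := by
        rw [← Int.not_even_iff_odd]
        rintro ⟨a, rfl⟩
        have : 2 * (2 * a ^ 2 - p * y ^ 2) = 1 := by rw [← h]; ring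
        omega
      refine ⟨hx, ?_⟩
      rw [← Int.not_odd_iff_even]
      intro hy
      have h1 := odd_sq_mod hy
      have h2 := odd_sq_mod hx
      have : x ^ 2 - 32 * (m * y ^ 2) - 18 * y ^ 2 = 1 := by rw [← h, hm]; ring
      omega)
  have h2A : (2 : ℤ) ∣ A * (A + 1) := ⟨p * z ^ 2, by rw [hAz]; ring⟩
  rcases Int.prime_two.dvd_or_dvd h2A with ⟨C, rfl⟩ | ⟨C, hC⟩
  · rcases split_prime hp.out (A := C) (B := 2 * C + 1) (z := z) (by omega) (by omega)
      ⟨-2, 1, by ring⟩ (by linarith) with ⟨a, b, h1, h2⟩ | ⟨a, b, h1, h2⟩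
    · -- `2a² + 1 = p b²` would make `2` a fourth power modulo `p`
      exfalso
      subst h1
      have ha0 : a ≠ 0 := by
        rintro rfl
        have h3 : (p : ℤ) * b ^ 2 = 1 := by rw [← h2]; ring
        exact hp'.not_isUnit (IsUnit.of_mul_eq_one _ h3)
      have hJ : J(a | p) = 1 := jac_of_sq hp8 (u := 1) (m := b) (k := 2 * a) ha0 isCoprime_one_left
        (by rw [← h2]; ring)
      have hJ' := jac_eq_pow (p := p) a
      rw [hJ] at hJ'
      have h3 : (2 : ZMod p) * (a : ZMod p) ^ 2 = -1 := by
        have := congrArg (fun t : ℤ => (t : ZMod p)) h2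
        simp only [Int.cast_add, Int.cast_mul, Int.cast_natCast, ZMod.natCast_self, zero_mul] at this
        push_cast at this
        linear_combination this
      have h4 := congrArg (· ^ ((p - 1) / 4)) h3
      simp only [mul_pow, h2p] at h4
      have e1 : p / 2 = 2 * ((p - 1) / 4) := by omega
      rw [← pow_mul, ← e1, ← hJ', Even.neg_one_pow (by rw [Nat.even_iff]; omega)] at h4
      push_cast at h4
      exact one_ne_neg_one (p := p) (by omega) (by linear_combination -h4)
    · exact absurd ⟨a, b, by rw [h1]; ring, h2⟩ hno
  · obtain rfl : A = 2 * C - 1 := by linarith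
    rcases split_prime hp.out (A := 2 * C - 1) (B := C) (z := z) hA (by omega)
      ⟨-1, 2, by ring⟩ (by
        have : 2 * ((2 * C - 1) * C) = 2 * (p * z ^ 2) := by linear_combination hAz
        linarith) with ⟨a, b, h1, h2⟩ | ⟨a, b, h1, h2⟩
    · exact ⟨a, b, by rw [← h1]; linarith⟩
    · -- `2a² - p b² = 1` gives `(2/b) = 1`, hence `b² ≡ 1 (mod 16)`, and then `a² ≡ 5 (mod 8)`
      exfalso
      subst h2
      have hb : Odd b := by
        rw [← Int.not_even_iff_odd]
        rintro ⟨k, rfl⟩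
        have : 2 * (a ^ 2 - 2 * p * k ^ 2) = 1 := by linarith
        omega
      have hJ : J(2 | b.natAbs) = 1 := by
        have hc : Int.gcd (2 * a) b.natAbs = 1 := by
          rw [Int.gcd_def, Int.natAbs_natCast, ← Int.gcd_def]
          apply Int.isCoprime_iff_gcd_eq_one.mp
          exact ⟨a, -p * b, by linarith⟩
        rw [← jacobiSym.sq_one' hc]
        apply jacobiSym.mod_left'
        rw [← Int.ModEq, Int.modEq_iff_dvd]
        exact (Int.natAbs_dvd.mpr dvd_rfl : (b.natAbs : ℤ) ∣ b).trans ⟨2 * p * b, by linarith⟩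
      rw [jacobiSym.at_two (Int.natAbs_odd.mpr hb), ZMod.χ₈_nat_eq_if_mod_eight] at hJ
      have hb2 : b.natAbs % 2 ≠ 0 := by
        have := Nat.odd_iff.mp (Int.natAbs_odd.mpr hb); omega
      rw [if_neg hb2] at hJ
      have hb8 : b.natAbs % 8 = 1 ∨ b.natAbs % 8 = 7 := by
        by_contra h
        rw [if_neg h] at hJ
        norm_num at hJ
      have hb16 : b.natAbs ^ 2 % 16 = 1 := by
        have : b.natAbs % 16 = 1 ∨ b.natAbs % 16 = 7 ∨ b.natAbs % 16 = 9 ∨ b.natAbs % 16 = 15 := by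
          omega
        rw [Nat.pow_mod]
        rcases this with h | h | h | h <;> rw [h]
      have hb16' : b ^ 2 % 16 = 1 := by
        rw [← Int.natAbs_sq]; exact_mod_cast hb16
      have h3 : 2 * a ^ 2 - 16 * (m * b ^ 2) - 9 * b ^ 2 = 1 := by rw [hm] at h1; linarith
      have ha8 : a ^ 2 % 8 = 5 := by omega
      rcases Int.even_or_odd a with ⟨k, rfl⟩ | ha
      · have : (k + k) ^ 2 = 4 * k ^ 2 := by ring
        omega
      · have := odd_sq_mod ha; omega

omit hp16 h2p in
/-- A prime that splits in `ℚ(√-p)` and is not a square modulo `p`, by the theorem of Dirichlet. -/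
theorem exists_aux_prime : ∃ q : ℕ, q.Prime ∧ q % 4 = 3 ∧ J((q : ℤ) | p) = -1 ∧
    ∃ w : ℤ, (q : ℤ) ∣ w ^ 2 + p ∧ IsCoprime (q : ℤ) (2 * w) := by
  obtain ⟨n, hn⟩ := FiniteField.exists_nonsquare (F := ZMod p) (by rw [ZMod.ringChar_zmod_n]; omega)
  have hcop : Nat.Coprime 4 p := by
    have : Nat.Coprime 2 p := (Nat.coprime_primes Nat.prime_two hp.out).mpr (by omega)
    exact Nat.Coprime.pow_left 2 this
  obtain ⟨a, ha4, hap⟩ := Nat.chineseRemainder hcop 3 n.val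
  have hn0 : n ≠ 0 := by rintro rfl; exact hn (IsSquare.zero)
  have hap' : (a : ZMod p) = n := by
    rw [(ZMod.natCast_eq_natCast_iff _ _ _).mpr hap, ZMod.natCast_zmod_val]
  have ha : a.Coprime (4 * p) := by
    apply Nat.Coprime.mul_right
    · have : Nat.Coprime a (2 ^ 2) := Nat.Coprime.pow_right 2 (by
        rw [Nat.coprime_two_right, Nat.odd_iff]
        have : a % 4 = 3 := ha4
        omega)
      exact this
    · rw [Nat.coprime_comm, hp.out.coprime_iff_not_dvd, ← ZMod.natCast_eq_zero_iff, hap']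
      exact hn0
  obtain ⟨q, hqgt, hq, hqa⟩ := Nat.forall_exists_prime_gt_and_modEq p
    (mul_ne_zero (by norm_num) hp.out.ne_zero) ha
  have hq4 : q % 4 = 3 := by
    have h1 : q ≡ a [MOD 4] := hqa.of_mul_right p
    exact (h1.trans ha4)
  have hqp : (q : ZMod p) = n := by
    rw [← hap']
    exact (ZMod.natCast_eq_natCast_iff _ _ _).mpr (hqa.of_mul_left 4)
  have hJ : J((q : ℤ) | p) = -1 := by
    rw [ZMod.nonsquare_iff_jacobiSym_eq_neg_one]
    rwa [Int.cast_natCast, hqp]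
  refine ⟨q, hq, hq4, hJ, ?_⟩
  have := Fact.mk hq
  have hqodd : Odd q := Nat.odd_iff.mpr (by omega)
  have h1 : J(-(p : ℤ) | q) = 1 := by
    rw [jacobiSym.neg _ hqodd, ZMod.χ₄_nat_three_mod_four hq4,
      jacobiSym.quadratic_reciprocity_one_mod_four (by omega) hqodd, hJ]
    norm_num
  obtain ⟨w, hw⟩ := ZMod.isSquare_of_jacobiSym_eq_one h1
  have hdvd : (q : ℤ) ∣ (w.val : ℤ) ^ 2 + p := by
    rw [← ZMod.intCast_zmod_eq_zero_iff_dvd]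
    push_cast at hw ⊢
    rw [ZMod.natCast_zmod_val, sq, ← hw]; ring
  refine ⟨w.val, hdvd, ?_⟩
  rw [Prime.coprime_iff_not_dvd (Nat.prime_iff_prime_int.mp hq)]
  intro h
  rcases (Nat.prime_iff_prime_int.mp hq).dvd_or_dvd h with h | h
  · have := Int.le_of_dvd (by norm_num) h
    have : q ≤ 2 := by exact_mod_cast this
    have := hq.two_le
    omega
  · have h5 : (q : ℤ) ∣ p := by
      have := dvd_sub hdvd (h.mul_left (w.val : ℤ))
      rwa [← sq, add_sub_cancel_left] at this
    have := (Nat.prime_dvd_prime_iff_eq hq hp.out).mp (by exact_mod_cast h5)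
    omega

end Pell

end Elem

/-! ### Quadratic extensions of number fields -/

theorem ideal_sq_inj {S : Type*} [CommRing S] [IsDedekindDomain S] {I J : Ideal S}
    (h : I * I = J * J) : I = J := by
  rw [← sq, ← sq] at h
  apply dvd_antisymm
  · exact (UniqueFactorizationMonoid.pow_dvd_pow_iff_dvd two_ne_zero).mp h.dvd
  · exact (UniqueFactorizationMonoid.pow_dvd_pow_iff_dvd two_ne_zero).mp h.symm.dvd

/-- The conjugation of a quadratic extension of number fields on rings of integers. The ring `R`
is `ℤ` or the ring of integers of the base field. -/
theorem exists_quadInv (R F K : Type*) [CommRing R] [Field F] [Field K] [NumberField K]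
    [CharZero F]
    [Algebra R F] [IsIntegralClosure R ℤ F] [Algebra F K] [Algebra.IsQuadraticExtension F K]
    [Algebra R (𝓞 K)] [Algebra R K] [IsScalarTower R (𝓞 K) K] [IsScalarTower R F K]
    {t : 𝓞 K} {d : R} (ht : t ^ 2 = algebraMap R (𝓞 K) d)
    (hirr : ∀ x : F, algebraMap F K x ≠ t) : ∃ Q : QuadInv R (𝓞 K), Q.σ t = -t := by
  have hcard : Nat.card (K ≃ₐ[F] K) = 2 :=
    (IsGalois.card_aut_eq_finrank F K).trans (Algebra.IsQuadraticExtension.finrank_eq_two F K)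
  have : Finite (K ≃ₐ[F] K) := Nat.finite_of_card_ne_zero (by rw [hcard]; norm_num)
  have := (Nat.card_eq_two_iff' (1 : K ≃ₐ[F] K)).mp hcard
  obtain ⟨σ, hσ1, hσ⟩ := this
  have hfix : ∀ x : K, σ x = x → ∃ y, algebraMap F K y = x := by
    intro x hx
    have : x ∈ (⊥ : IntermediateField F K) := by
      rw [IsGalois.mem_bot_iff_fixed]
      intro f
      by_cases hf : f = 1
      · rw [hf]; rfl
      · rw [hσ f hf]; exact hx
    exact IntermediateField.mem_bot.mp this
  have hinv : ∀ x, σ (σ x) = x := by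
    have h2 : σ ^ 2 = 1 := by rw [← hcard]; exact pow_card_eq_one'
    intro x
    have := congrArg (fun f : K ≃ₐ[F] K => f x) h2
    simpa [sq] using this
  let τ : 𝓞 K ≃+* 𝓞 K := NumberField.RingOfIntegers.mapRingEquiv σ.toRingEquiv
  have hτ : ∀ x : 𝓞 K, ((τ x : 𝓞 K) : K) = σ x := fun x => rfl
  have hRK : ∀ r : R, ((algebraMap R (𝓞 K) r : 𝓞 K) : K) = algebraMap F K (algebraMap R F r) := by
    intro r
    rw [← IsScalarTower.algebraMap_apply R F K, IsScalarTower.algebraMap_apply R (𝓞 K) K]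
  let τ' : 𝓞 K ≃ₐ[R] 𝓞 K := AlgEquiv.ofRingEquiv (f := τ) (by
    intro r
    apply RingOfIntegers.ext
    rw [hτ, hRK]
    exact σ.commutes _)
  refine ⟨⟨τ', ?_, ?_⟩, ?_⟩
  · intro x
    apply RingOfIntegers.ext
    exact (congrArg σ (hτ x)).trans (hinv _)
  · intro x hx
    obtain ⟨y, hy⟩ := hfix (x : K) ((hτ x).symm.trans (congrArg _ hx))
    have hyi : IsIntegral ℤ y := by
      have h1 : IsIntegral ℤ (algebraMap F K y) := by rw [hy]; exact x.isIntegral_coe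
      exact (isIntegral_algebraMap_iff (FaithfulSMul.algebraMap_injective F K)).mp h1
    obtain ⟨z, hz⟩ := (IsIntegralClosure.isIntegral_iff (A := R)).mp hyi
    refine ⟨z, ?_⟩
    apply RingOfIntegers.ext
    rw [hRK, hz, hy]
  · have h1 : σ (t : K) ^ 2 = (t : K) ^ 2 := by
      have h3 : (t : K) ^ 2 = algebraMap F K (algebraMap R F d) := by
        rw [← hRK, ← ht]; rfl
      rw [← map_pow, h3, σ.commutes]
    rcases sq_eq_sq_iff_eq_or_eq_neg.mp h1 with h | h
    · obtain ⟨y, hy⟩ := hfix _ h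
      exact absurd hy (hirr y)
    · apply RingOfIntegers.ext
      exact (hτ t).trans h

/-! ### The class group of `ℚ(√-p)` -/

namespace ImQuad

open NumberTheorySymbols

/-- If the 2-torsion has order at most two, the squares have index at most two. -/
theorem isSquare_mul_of_two_torsion {G : Type*} [CommGroup G] [Finite G] {c : G}
    (h : ∀ z : G, z ^ 2 = 1 → z = 1 ∨ z = c) {a b : G} (ha : ¬ IsSquare a)
    (hb : ¬ IsSquare b) : IsSquare (a * b) := by
  have hsq : ∀ g : G, g ∈ (powMonoidHom 2 : G →* G).range ↔ IsSquare g := fun g => by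
    constructor
    · rintro ⟨x, rfl⟩; exact ⟨x, sq x⟩
    · rintro ⟨x, rfl⟩; exact ⟨x, sq x⟩
  have hker : Nat.card (powMonoidHom 2 : G →* G).ker ≤ 2 := by
    have : ((powMonoidHom 2 : G →* G).ker : Set G) ⊆ {1, c} := by
      intro z hz
      exact h z hz
    calc Nat.card (powMonoidHom 2 : G →* G).ker
        = ((powMonoidHom 2 : G →* G).ker : Set G).ncard := rfl
      _ ≤ ({1, c} : Set G).ncard := Set.ncard_le_ncard this
      _ ≤ 2 := (Set.ncard_insert_le _ _).trans (by simp)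
  rw [← card_quotient_range_sq] at hker
  set H := (powMonoidHom 2 : G →* G).range
  by_contra hab
  have ha' : ((a : G) : G ⧸ H) ≠ 1 := by rwa [Ne, QuotientGroup.eq_one_iff, hsq]
  have hb' : ((b : G) : G ⧸ H) ≠ 1 := by rwa [Ne, QuotientGroup.eq_one_iff, hsq]
  have hab' : ((a : G) : G ⧸ H) ≠ (b : G ⧸ H)⁻¹ := by
    intro h1
    apply hab
    rw [← hsq, ← QuotientGroup.eq_one_iff, QuotientGroup.mk_mul, h1, inv_mul_cancel]
  have h3 : ({1, (a : G ⧸ H), (b : G ⧸ H)⁻¹} : Set (G ⧸ H)).ncard = 3 :=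
    Set.ncard_eq_three.mpr ⟨_, _, _, ha'.symm, fun h1 => hb' (inv_eq_one.mp h1.symm), hab', rfl⟩
  have h4 := Set.ncard_le_card ({1, (a : G ⧸ H), (b : G ⧸ H)⁻¹} : Set (G ⧸ H))
  omega

theorem int_dvd {k : Type*} [Field k] [NumberField k] (Q : QuadInv ℤ (𝓞 k)) {m n : ℤ} (h : (m : 𝓞 k) ∣ n) : m ∣ n := by
  by_cases hm : m = 0
  · subst hm
    rw [Int.cast_zero, zero_dvd_iff] at h
    rw [zero_dvd_iff]; exact_mod_cast h
  obtain ⟨x, hx⟩ := h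
  have hm' : (m : 𝓞 k) ≠ 0 := by exact_mod_cast hm
  have hfix : Q.σ x = x := by
    apply mul_left_cancel₀ hm'
    rw [← hx]
    have := congrArg Q.σ hx
    rw [map_mul, map_intCast, map_intCast] at this
    exact this.symm
  obtain ⟨r, rfl⟩ := Q.fixed x hfix
  refine ⟨r, ?_⟩
  have : ((n : ℤ) : 𝓞 k) = ((m * r : ℤ) : 𝓞 k) := by rw [hx]; simp
  exact_mod_cast this

variable {p : ℕ} [hp : Fact p.Prime] {k : Type*} [Field k] [NumberField k]
  (Q : QuadInv ℤ (𝓞 k)) {t : 𝓞 k} (ht : t ^ 2 = -p) (hσ : Q.σ t = -t)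

include hσ

omit hσ in
theorem t_ne_zero (ht : t ^ 2 = -p) : t ≠ 0 := by
  rintro rfl
  have : (p : 𝓞 k) = 0 := by linear_combination ht
  exact hp.out.ne_zero (by exact_mod_cast this)

omit hp in
/-- The ideal `(n, w + √-p)` has norm `n`. -/
theorem ideal_norm {n w : ℤ} (hn : n ∣ w ^ 2 + p) (hc : IsCoprime n (2 * w)) (ht : t ^ 2 = -p) :
    Ideal.span {(n : 𝓞 k), w + t} * (Ideal.span {(n : 𝓞 k), w + t}).map Q.σ =
      Ideal.span {algebraMap ℤ (𝓞 k) n} := by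
  have hmap : (Ideal.span {(n : 𝓞 k), w + t}).map Q.σ = Ideal.span {(n : 𝓞 k), w - t} := by
    rw [Ideal.map_span, Set.image_pair, map_intCast, map_add, map_intCast, hσ, sub_eq_add_neg]
  rw [hmap, Ideal.span_pair_mul_span_pair, eq_intCast]
  obtain ⟨m, hm⟩ := hn
  have hm' : (w : 𝓞 k) ^ 2 + p = n * m := by exact_mod_cast congrArg (Int.cast : ℤ → 𝓞 k) hm
  apply le_antisymm
  · rw [Ideal.span_le]
    rintro x (rfl | rfl | rfl | rfl) <;>
      refine Ideal.mem_span_singleton.mpr ?_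
    · exact dvd_mul_right _ _
    · exact dvd_mul_right _ _
    · exact dvd_mul_left _ _
    · exact ⟨m, by linear_combination hm' - ht⟩
  · rw [Ideal.span_singleton_le_iff_mem]
    obtain ⟨a, b, hab⟩ := hc
    have hab' : (a : 𝓞 k) * n + b * (2 * w) = 1 := by exact_mod_cast congrArg (Int.cast : ℤ → 𝓞 k) hab
    set M := Ideal.span {(n : 𝓞 k) * n, n * (w - t), (w + t) * n, (w + t) * (w - t)}
    have e : (n : 𝓞 k) = a * (n * n) + b * (n * (w - t)) + b * ((w + t) * n) := by
      linear_combination -n * hab'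
    rw [e]
    refine M.add_mem (M.add_mem (M.mul_mem_left _ ?_) (M.mul_mem_left _ ?_)) (M.mul_mem_left _ ?_) <;>
      exact Ideal.subset_span (by simp)

/-- Norms of nonzero elements of an imaginary quadratic field are positive. -/
theorem norm_pos (ht : t ^ 2 = -p) {α : 𝓞 k} (hα : α ≠ 0) {n : ℤ} (hn : (n : 𝓞 k) = α * Q.σ α) : 0 < n := by
  obtain ⟨a, ha⟩ := Q.exists_trace α
  obtain ⟨m, hm⟩ := Q.fixed ((α - Q.σ α) * t) (by rw [map_mul, map_sub, Q.invol, hσ]; ring)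
  rw [eq_intCast] at ha hm
  have hp0 : (0 : ℤ) < p := by exact_mod_cast hp.out.pos
  have h1 : ((4 * p * n : ℤ) : 𝓞 k) = ((p * a ^ 2 + m ^ 2 : ℤ) : 𝓞 k) := by
    push_cast
    rw [hn, ha, hm]
    linear_combination -(α - Q.σ α) ^ 2 * ht
  have h2 : 4 * p * n = p * a ^ 2 + m ^ 2 := by exact_mod_cast h1
  have hn0 : n ≠ 0 := by
    rintro rfl
    rw [Int.cast_zero] at hn
    exact mul_ne_zero hα (Q.σ_ne_zero hα) hn.symm
  have : 0 ≤ 4 * p * n := by rw [h2]; positivity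
  have : 0 ≤ n := by
    by_contra h; push Not at h; nlinarith
  omega

/-- The ambiguous classes of `ℚ(√-p)`: the prime above `p` is generated by `√-p`, so at most the class
of a prime above two survives. -/
theorem two_torsion (ht : t ^ 2 = -p) :
    ∃ c : ClassGroup (𝓞 k), ∀ z : ClassGroup (𝓞 k), z ^ 2 = 1 → z = 1 ∨ z = c := by
  have ht0 := t_ne_zero ht
  have hclos : ∀ z : ClassGroup (𝓞 k), z ^ 2 = 1 →
      z ∈ Subgroup.closure {c | ∃ P : Ideal (𝓞 k), Q.IsRamified P ∧ c = cls P} := by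
    intro z hz
    refine Q.mem_closure_of_sq_eq_one ht0 hσ ?_ hz
    intro u α β hα hβ h
    refine ⟨1, ?_⟩
    obtain ⟨n, hn⟩ := Q.exists_norm α
    obtain ⟨m, hm⟩ := Q.exists_norm β
    rw [eq_intCast] at hn hm
    have hn0 := norm_pos Q hσ ht hα hn
    have hm0 := norm_pos Q hσ ht hβ hm
    rw [← hn, ← hm, eq_intCast] at h
    have h' : (u : ℤ) * m = n := by exact_mod_cast h
    rcases Int.units_eq_one_or u with rfl | rfl
    · simp
    · simp at h'; omega
  -- a ramified prime squares to `(2)` or is generated by `t`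
  have hram : ∀ P : Ideal (𝓞 k), Q.IsRamified P → cls P = 1 ∨ P * P = Ideal.span {2} := by
    intro P hP
    obtain ⟨ℓ, hℓ, hPP⟩ := hP.exists_sq
    rw [eq_intCast] at hPP
    have := hP.sub_mem t
    rw [hσ, sub_neg_eq_add, ← two_mul] at this
    rcases hP.isPrime.mem_or_mem this with h2 | h2
    · right
      have h4 : (2 : 𝓞 k) * 2 ∈ P * P := Ideal.mul_mem_mul h2 h2
      rw [hPP, Ideal.mem_span_singleton] at h4
      have h5 : ℓ ∣ 2 * 2 := int_dvd Q (by exact_mod_cast h4)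
      have h6 : ℓ ∣ 2 := (hℓ.dvd_or_dvd h5).elim id id
      have h7 : Associated ℓ 2 := hℓ.associated_of_dvd Int.prime_two h6
      have h8 := h7.map (Int.castRingHom (𝓞 k))
      rw [hPP]
      exact Ideal.span_singleton_eq_span_singleton.mpr (by simpa using h8)
    · left
      have h4 : t * t ∈ P * P := Ideal.mul_mem_mul h2 h2
      rw [hPP, Ideal.mem_span_singleton, ← sq, ht, dvd_neg] at h4
      have h5 : ℓ ∣ p := int_dvd Q (by exact_mod_cast h4)
      have h7 : Associated ℓ p := hℓ.associated_of_dvd (Nat.prime_iff_prime_int.mp hp.out) h5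
      have h8 := h7.map (Int.castRingHom (𝓞 k))
      have h9 : P * P = Ideal.span {t} * Ideal.span {t} := by
        rw [hPP, Ideal.span_singleton_mul_span_singleton, ← sq, ht, Ideal.span_singleton_neg]
        exact Ideal.span_singleton_eq_span_singleton.mpr (by simpa using h8)
      rw [ideal_sq_inj h9, cls_span]
  by_cases hex : ∃ P : Ideal (𝓞 k), P * P = Ideal.span {2}
  · obtain ⟨P, hP⟩ := hex
    have hP0 : P ≠ ⊥ := by
      rintro rfl
      rw [Ideal.mul_bot, eq_comm, Ideal.span_singleton_eq_bot] at hP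
      exact two_ne_zero hP
    refine ⟨cls P, fun z hz => ?_⟩
    have hle : Subgroup.closure {c | ∃ P : Ideal (𝓞 k), Q.IsRamified P ∧ c = cls P} ≤
        Subgroup.zpowers (cls P) := by
      rw [Subgroup.closure_le]
      rintro c ⟨P', hP', rfl⟩
      rcases hram P' hP' with h | h
      · rw [h]; exact one_mem _
      · rw [ideal_sq_inj (h.trans hP.symm)]; exact Subgroup.mem_zpowers _
    obtain ⟨j, rfl⟩ := hle (hclos z hz)
    have h2 : cls P ^ (2 : ℤ) = 1 := by
      rw [zpow_ofNat, sq, ← cls_mul hP0 hP0, hP, cls_span]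
    rcases Int.even_or_odd' j with ⟨i, rfl | rfl⟩
    · left; simp only []; rw [zpow_mul, h2, one_zpow]
    · right; simp only []; rw [zpow_add, zpow_mul, h2, one_zpow, one_mul, zpow_one]
  · refine ⟨1, fun z hz => Or.inl ?_⟩
    have hle : Subgroup.closure {c | ∃ P : Ideal (𝓞 k), Q.IsRamified P ∧ c = cls P} ≤ ⊥ := by
      rw [Subgroup.closure_le]
      rintro c ⟨P', hP', rfl⟩
      rcases hram P' hP' with h | h
      · rw [h]; exact one_mem _
      · exact absurd ⟨P', h⟩ hex
    exact (Subgroup.mem_bot).mp (hle (hclos z hz))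

omit hσ in
theorem ideal_ne_bot {n w : ℤ} (hn : n ≠ 0) : Ideal.span {(n : 𝓞 k), w + t} ≠ ⊥ := by
  intro h
  have : (n : 𝓞 k) ∈ Ideal.span {(n : 𝓞 k), w + t} := Ideal.subset_span (by simp)
  rw [h, Ideal.mem_bot] at this
  exact hn (by exact_mod_cast this)

/-- The genus character at `p` takes the value one on squares of classes. -/
theorem not_isSquare_cls (ht : t ^ 2 = -p) (hp8 : p % 8 = 1) {I : Ideal (𝓞 k)} (hI : I ≠ ⊥) {n : ℤ}
    (hn : I * I.map Q.σ = Ideal.span {algebraMap ℤ (𝓞 k) n}) (hJ : J(n | p) = -1) :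
    ¬ IsSquare (cls I) := by
  rintro ⟨d, hd⟩
  obtain ⟨u, c, z, hc, h⟩ := Q.exists_norm_of_cls_sq hI hn (hd.trans (sq d).symm)
  have hpp := Nat.prime_iff_prime_int.mp hp.out
  have h1 := Q.isSquare_of_norm (Int.castRingHom (ZMod p)) (ϖ := p) (d := -1) hpp
    (fun x => ZMod.intCast_zmod_eq_zero_iff_dvd x p)
    (by
      intro h2
      have := Int.le_of_dvd (by norm_num) h2
      have : p ≤ 2 := by exact_mod_cast this
      have := hp.out.two_le
      omega)
    (by rw [dvd_neg]; exact hpp.not_dvd_one) hσ (by rw [ht]; simp) hc h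
  have h2 : J((u : ℤ) * n | p) = -1 := by
    rw [jacobiSym.mul_left, hJ]
    rcases Int.units_eq_one_or u with rfl | rfl
    · simp
    · simp [Elem.jac_neg_one hp8]
  exact ZMod.nonsquare_of_jacobiSym_eq_neg_one h2 h1

/-- If `J(g | p) = 1`, the ideal `(g, x + √-p)` of norm `g` lies in the principal genus, which
consists of the squares. -/
theorem isSquare_cls (ht : t ^ 2 = -p) (hp8 : p % 8 = 1) {g x : ℤ} (hg : g ∣ x ^ 2 + p)
    (hc : IsCoprime g (2 * x)) (hg0 : g ≠ 0) (hJ : J(g | p) = 1) :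
    IsSquare (cls (Ideal.span {(g : 𝓞 k), x + t})) := by
  obtain ⟨q, hq, -, hqJ, w, hqw, hqc⟩ := Elem.exists_aux_prime hp8
  have hq0 : (q : ℤ) ≠ 0 := by exact_mod_cast hq.ne_zero
  obtain ⟨c, htor⟩ := two_torsion Q hσ ht
  have hI := ideal_norm Q hσ hg hc ht
  have hI0 := ideal_ne_bot (t := t) (w := x) hg0
  have hA := ideal_norm Q hσ hqw hqc ht
  have hA0 := ideal_ne_bot (t := t) (w := w) hq0
  set I := Ideal.span {(g : 𝓞 k), x + t}
  set A := Ideal.span {((q : ℤ) : 𝓞 k), w + t}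
  have h1 : ¬ IsSquare (cls A) := not_isSquare_cls Q hσ ht hp8 hA0 hA hqJ
  have h2 : ¬ IsSquare (cls (I * A)) := by
    refine not_isSquare_cls Q hσ ht hp8 (mul_ne_zero hI0 hA0) (n := g * q) ?_ ?_
    · rw [Ideal.map_mul, mul_mul_mul_comm, hI, hA, Ideal.span_singleton_mul_span_singleton, map_mul]
    · rw [jacobiSym.mul_left, hJ, hqJ]; norm_num
  have h3 := isSquare_mul_of_two_torsion htor h2 h1
  rw [cls_mul hI0 hA0] at h3
  obtain ⟨d, hd⟩ := h3
  refine ⟨d * (cls A)⁻¹, ?_⟩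
  calc cls I = cls I * cls A * cls A * (cls A)⁻¹ * (cls A)⁻¹ := by simp [mul_assoc]
    _ = _ := by rw [hd]; simp only [mul_assoc, mul_comm, mul_left_comm]

end ImQuad

/-! ### Factorisations in the Gaussian integers -/

namespace Gauss

theorem norm_eq (x y : ℤ) : Zsqrtd.norm (⟨x, y⟩ : GaussianInt) = x ^ 2 + y ^ 2 := by
  simp [Zsqrtd.norm_def]; ring

theorem prime_of_norm {p : ℕ} [hp : Fact p.Prime] {A B : ℤ} (h : A ^ 2 + B ^ 2 = p) :
    Prime (⟨A, B⟩ : GaussianInt) := by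
  rw [← irreducible_iff_prime]
  have hn : (Zsqrtd.norm (⟨A, B⟩ : GaussianInt)).natAbs = p := by rw [norm_eq, h]; rfl
  constructor
  · rw [← Zsqrtd.norm_eq_one_iff, hn]; exact hp.out.one_lt.ne'
  · intro a b hab
    rw [hab, Zsqrtd.norm_mul, Int.natAbs_mul] at hn
    rw [← Zsqrtd.norm_eq_one_iff, ← Zsqrtd.norm_eq_one_iff]
    have := hp.out
    rw [← hn] at this
    rcases Nat.prime_mul_iff.mp this with h | h
    · exact Or.inr h.2
    · exact Or.inl h.2

/-- A common divisor of `x ± iy` divides `2x` and `2y`, and it is prime to two since `x² + y²` is odd. -/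
theorem coprime_star {x y : ℤ} (hxy : IsCoprime x y) (hodd : Odd (x + y)) :
    IsCoprime (⟨x, y⟩ : GaussianInt) ⟨x, -y⟩ := by
  obtain ⟨a, b, hab⟩ := hxy
  obtain ⟨k, hk⟩ : Odd (x ^ 2 + y ^ 2) := by
    have : x ^ 2 + y ^ 2 = (x + y) ^ 2 - 2 * (x * y) := by ring
    rw [this]
    exact hodd.pow.sub_even ⟨x * y, by ring⟩
  refine ⟨⟨x - k * a, -y + k * b⟩, ⟨-k * a, -k * b⟩, ?_⟩
  ext
  · simp
    linear_combination hk - 2 * k * hab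
  · simp
    ring

theorem exists_of_dvd {p : ℕ} [hp : Fact p.Prime] {A B x y U : ℤ} (h : A ^ 2 + B ^ 2 = p)
    (hxy : x ^ 2 + y ^ 2 = p * U ^ 2) (hc : IsCoprime (⟨x, y⟩ : GaussianInt) ⟨x, -y⟩)
    (hd : (⟨A, B⟩ : GaussianInt) ∣ ⟨x, y⟩) :
    ∃ u w : GaussianInt, IsUnit u ∧ (⟨x, y⟩ : GaussianInt) = u * ⟨A, B⟩ * w ^ 2 := by
  obtain ⟨Y, hY⟩ := hd
  have hY' : (⟨x, -y⟩ : GaussianInt) = ⟨A, -B⟩ * star Y := by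
    have := congrArg star hY
    rwa [star_mul', Zsqrtd.star_mk, Zsqrtd.star_mk] at this
  have h0 : (p : GaussianInt) ≠ 0 := by exact_mod_cast hp.out.ne_zero
  have hpp : (⟨A, B⟩ : GaussianInt) * ⟨A, -B⟩ = p := by
    ext
    · simp; linarith
    · simp; ring
  have hYY : Y * star Y = (U : GaussianInt) ^ 2 := by
    apply mul_left_cancel₀ h0
    have h1 : (⟨x, y⟩ : GaussianInt) * ⟨x, -y⟩ = p * (U : GaussianInt) ^ 2 := by
      have : (p : GaussianInt) * (U : GaussianInt) ^ 2 = ((p * U ^ 2 : ℤ) : GaussianInt) := by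
        push_cast; rfl
      rw [this, ← hxy]
      ext
      · rw [Zsqrtd.re_intCast]; simp; ring
      · rw [Zsqrtd.im_intCast]; simp; ring
    rw [← h1, hY, hY', ← hpp]; ring
  have hcY : IsCoprime Y (star Y) := by
    rw [hY, hY'] at hc
    exact hc.of_mul_left_right.of_mul_right_right
  obtain ⟨w, v, hv⟩ := exists_associated_pow_of_mul_eq_pow' hcY hYY
  exact ⟨v, w, v.isUnit, by rw [hY, ← hv]; ring⟩

/-- If a primitive odd Gaussian integer has norm `p` times a square, it or its conjugate is, up to units,
`A + iB` times a square. -/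
theorem exists_factor {p : ℕ} [hp : Fact p.Prime] {A B x y U : ℤ} (h : A ^ 2 + B ^ 2 = p)
    (hxy : x ^ 2 + y ^ 2 = p * U ^ 2) (hc : IsCoprime x y) (hodd : Odd (x + y)) :
    ∃ y' : ℤ, (y' = y ∨ y' = -y) ∧
      ∃ u w : GaussianInt, IsUnit u ∧ (⟨x, y'⟩ : GaussianInt) = u * ⟨A, B⟩ * w ^ 2 := by
  have hc' := coprime_star hc hodd
  have hP := prime_of_norm h
  have h1 : (⟨A, B⟩ : GaussianInt) ∣ ⟨x, y⟩ * ⟨x, -y⟩ := by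
    refine ⟨⟨A, -B⟩ * (U : GaussianInt) ^ 2, ?_⟩
    have hpp : (⟨A, B⟩ : GaussianInt) * ⟨A, -B⟩ = ((p : ℤ) : GaussianInt) := by
      rw [← h]
      ext
      · rw [Zsqrtd.re_intCast]; simp; ring
      · rw [Zsqrtd.im_intCast]; simp; ring
    rw [← mul_assoc, hpp]
    have : ((p : ℤ) : GaussianInt) * (U : GaussianInt) ^ 2 = ((p * U ^ 2 : ℤ) : GaussianInt) := by
      push_cast; rfl
    rw [this, ← hxy]
    ext
    · rw [Zsqrtd.re_intCast]; simp; ring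
    · rw [Zsqrtd.im_intCast]; simp; ring
  rcases hP.dvd_or_dvd h1 with h2 | h2
  · exact ⟨y, Or.inl rfl, exists_of_dvd h hxy hc' h2⟩
  · exact ⟨-y, Or.inr rfl, exists_of_dvd h (by rw [← hxy]; ring)
      (by rw [neg_neg]; exact hc'.symm) h2⟩

end Gauss

namespace Zeta8

variable {F : Type*} [Field F] [NumberField F] [hF : IsCyclotomicExtension {8} ℚ F]

variable (F) in
/-- The embedding of the Gaussian integers sending `i` to `ζ²`. -/
def gaussHom : GaussianInt →+* 𝓞 F :=
  Zsqrtd.lift ⟨ζ F ^ 2, by push_cast; linear_combination ζ_pow F⟩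

theorem gaussHom_mk (x y : ℤ) : gaussHom F ⟨x, y⟩ = x + y * ζ F ^ 2 := rfl

/-- Units of `ℤ[i]` become squares in `ℤ[ζ]`. -/
theorem gaussHom_unit {u : GaussianInt} (hu : IsUnit u) : IsSquare (gaussHom F u) := by
  rw [← Zsqrtd.norm_eq_one_iff] at hu
  obtain ⟨x, y⟩ := u
  rw [Gauss.norm_eq] at hu
  have h1 : x ^ 2 + y ^ 2 = 1 := by
    have : 0 ≤ x ^ 2 + y ^ 2 := by positivity
    omega
  have hx : -1 ≤ x ∧ x ≤ 1 := ⟨by nlinarith, by nlinarith⟩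
  have hy : -1 ≤ y ∧ y ≤ 1 := ⟨by nlinarith, by nlinarith⟩
  obtain ⟨hx1, hx2⟩ := hx
  obtain ⟨hy1, hy2⟩ := hy
  have h4 := ζ_pow F
  rw [gaussHom_mk]
  interval_cases x <;> interval_cases y <;> first | (exfalso; revert h1; norm_num; done) | norm_num
  · exact ⟨ζ F ^ 2, by linear_combination -h4⟩
  · exact ⟨ζ F ^ 3, by linear_combination -ζ F ^ 2 * h4⟩
  · exact ⟨ζ F, by ring⟩

variable {p : ℕ} [hp : Fact p.Prime] (hp8 : p % 8 = 1) {A B : ℤ} (hAB : A ^ 2 + B ^ 2 = p)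

include hp8 hAB

/-- For a suitable sign of a solution `T` of the Pell equation, `1 + iT` is `A + iB` times a square. -/
theorem exists_pell_factor : ∃ T U : ℤ, T ^ 2 + 1 = p * U ^ 2 ∧
    ∃ w : 𝓞 F, 1 + ζ F ^ 2 * T = (A + B * ζ F ^ 2) * w ^ 2 := by
  obtain ⟨T, U, hTU⟩ := Elem.neg_pell hp8
  have hT : Odd (1 + T) := by
    rw [← Int.not_even_iff_odd]
    intro hT
    have hT' : Odd T := by
      rcases hT with ⟨k, hk⟩; exact ⟨k - 1, by linarith⟩
    have h1 := Elem.odd_sq_mod hT'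
    obtain ⟨m, hm⟩ : ∃ m : ℤ, (p : ℤ) = 8 * m + 1 := ⟨p / 8, by omega⟩
    have h2 : T ^ 2 + 1 = 8 * (m * U ^ 2) + U ^ 2 := by rw [hTU, hm]; ring
    rcases Int.even_or_odd U with ⟨k, rfl⟩ | hU
    · have : (k + k) ^ 2 = 4 * k ^ 2 := by ring
      omega
    · have := Elem.odd_sq_mod hU; omega
  obtain ⟨T', hT', u, w, hu, h⟩ := Gauss.exists_factor hAB (x := 1) (y := T) (U := U)
    (by rw [← hTU]; ring) isCoprime_one_left hT
  refine ⟨T', U, by rcases hT' with rfl | rfl <;> rw [← hTU]; ring, ?_⟩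
  obtain ⟨v, hv⟩ := gaussHom_unit (F := F) hu
  refine ⟨v * gaussHom F w, ?_⟩
  have h2 := congrArg (gaussHom F) h
  rw [map_mul, map_mul, map_pow, hv, gaussHom_mk, gaussHom_mk] at h2
  push_cast at h2
  linear_combination h2

/-- For a suitable sign of a solution `T` of the Pell equation, `1 + iT` is `(1 + i)(A + iB)` times a
square. -/
theorem exists_pell_factor_two (hp16 : p % 16 = 9) (h2p : (2 : ZMod p) ^ ((p - 1) / 4) = -1) :
    ∃ T U : ℤ, T ^ 2 + 1 = 2 * p * U ^ 2 ∧
    ∃ w : 𝓞 F, 1 + ζ F ^ 2 * T = (1 + ζ F ^ 2) * (A + B * ζ F ^ 2) * w ^ 2 := by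
  obtain ⟨T, U, hTU⟩ := Elem.neg_pell_two hp8 hp16 h2p
  obtain ⟨m, rfl⟩ : Odd T := by
    rw [← Int.not_even_iff_odd]
    rintro ⟨k, rfl⟩
    have : 2 * (2 * k ^ 2 - p * U ^ 2) + 1 = 0 := by linear_combination hTU
    omega
  obtain ⟨m', hm', u, w, hu, h⟩ := Gauss.exists_factor hAB (x := m + 1) (y := m) (U := U)
    (by
      have : 2 * ((m + 1) ^ 2 + m ^ 2) = 2 * (p * U ^ 2) := by linear_combination hTU
      linarith) ⟨1, -1, by ring⟩ ⟨m, by ring⟩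
  obtain ⟨v, hv⟩ := gaussHom_unit (F := F) hu
  have h2 := congrArg (gaussHom F) h
  rw [map_mul, map_mul, map_pow, hv, gaussHom_mk, gaussHom_mk] at h2
  have h4 := ζ_pow F
  rcases hm' with rfl | rfl
  · refine ⟨2 * m' + 1, U, hTU, v * gaussHom F w, ?_⟩
    push_cast at h2 ⊢
    linear_combination (1 + ζ F ^ 2) * h2 - m' * h4
  · -- here `1 - i T = -i (1 + i) (m + 1 - i m)`
    refine ⟨-(2 * m + 1), U, by rw [← hTU]; ring, ζ F ^ 3 * v * gaussHom F w, ?_⟩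
    push_cast at h2 ⊢
    linear_combination ζ F ^ 6 * (1 + ζ F ^ 2) * h2 +
      (m * ζ F ^ 6 - ζ F ^ 4 - (2 * m + 1) * ζ F ^ 2 + 1) * h4

end Zeta8

/-! ### The quadratic norms of the prime element -/

namespace Zeta8

variable {F : Type*} [Field F] [NumberField F] [hF : IsCyclotomicExtension {8} ℚ F]

/-- The norms of `π` to `ℤ[√2]` and to `ℤ[i]`. -/
theorem exists_quad_norms {p : ℕ} [hp : Fact p.Prime] {r : ZMod p} (hr : r ^ 4 = -1) (hp2 : p ≠ 2)
    {π : 𝓞 F} (hπ : ∀ x, φ F hr 0 x = 0 ↔ π ∣ x) :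
    ∃ e f A B : ℤ, π * τ F 3 π = e + f * rt2 F ∧ τ F 1 π * τ F 2 π = e - f * rt2 F ∧
      π * τ F 2 π = A + B * ζ F ^ 2 ∧ e ^ 2 - 2 * f ^ 2 = p ∧ A ^ 2 + B ^ 2 = p := by
  obtain ⟨a, b, c, d, h⟩ := exists_rep F π
  have h4 := ζ_pow F
  have h5 : ζ F ^ 5 = - ζ F := by linear_combination ζ F * h4
  have h6 : ζ F ^ 6 = - ζ F ^ 2 := by linear_combination ζ F ^ 2 * h4
  have h7 : ζ F ^ 7 = - ζ F ^ 3 := by linear_combination ζ F ^ 3 * h4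
  have t1 : τ F 1 π = a + b * ζ F ^ 3 - c * ζ F ^ 2 + d * ζ F := by
    rw [h]
    simp only [map_add, map_mul, map_pow, map_intCast, τ_ζ]
    norm_num
    linear_combination c * h6 + d * ζ F ^ 5 * h4 - d * h5
  have t2 : τ F 2 π = a - b * ζ F + c * ζ F ^ 2 - d * ζ F ^ 3 := by
    rw [h]
    simp only [map_add, map_mul, map_pow, map_intCast, τ_ζ]
    norm_num
    linear_combination b * h5 + c * ζ F ^ 6 * h4 - c * h6 + d * (ζ F ^ 11 - ζ F ^ 7) * h4 + d * h7
  have t3 : τ F 3 π = a - b * ζ F ^ 3 - c * ζ F ^ 2 - d * ζ F := by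
    rw [h]
    simp only [map_add, map_mul, map_pow, map_intCast, τ_ζ]
    norm_num
    linear_combination b * h7 + c * (ζ F ^ 10 - ζ F ^ 6) * h4 + c * h6 +
      d * (ζ F ^ 17 - ζ F ^ 13 + ζ F ^ 9 - ζ F ^ 5) * h4 + d * h5
  have k1 : π * τ F 3 π = ((a ^ 2 + b ^ 2 + c ^ 2 + d ^ 2 : ℤ) : 𝓞 F) +
      ((a * b + b * c + c * d - d * a : ℤ) : 𝓞 F) * rt2 F := by
    rw [t3, rt2]; nth_rewrite 1 [h]
    push_cast
    linear_combination (-b * b - c * c - d * d - b * d * ζ F ^ 2 - b * c * ζ F - c * d * ζ F) * h4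
  have k2 : τ F 1 π * τ F 2 π = ((a ^ 2 + b ^ 2 + c ^ 2 + d ^ 2 : ℤ) : 𝓞 F) -
      ((a * b + b * c + c * d - d * a : ℤ) : 𝓞 F) * rt2 F := by
    rw [t1, t2, rt2]
    push_cast
    linear_combination (-b * b - c * c - d * d - b * d * ζ F ^ 2 + b * c * ζ F + c * d * ζ F) * h4
  have k3 : π * τ F 2 π = ((a ^ 2 - c ^ 2 + 2 * b * d : ℤ) : 𝓞 F) +
      ((2 * a * c - b ^ 2 + d ^ 2 : ℤ) : 𝓞 F) * ζ F ^ 2 := by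
    rw [t2]; nth_rewrite 1 [h]
    push_cast
    linear_combination (c ^ 2 - d ^ 2 * ζ F ^ 2 - 2 * b * d) * h4
  have key : (a ^ 2 + b ^ 2 + c ^ 2 + d ^ 2) ^ 2 - 2 * (a * b + b * c + c * d - d * a) ^ 2 =
      (a ^ 2 - c ^ 2 + 2 * b * d) ^ 2 + (2 * a * c - b ^ 2 + d ^ 2) ^ 2 := by ring
  have hn := prod_π hr hπ hp2
    (n := (a ^ 2 + b ^ 2 + c ^ 2 + d ^ 2) ^ 2 - 2 * (a * b + b * c + c * d - d * a) ^ 2)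
    (by rw [key]; positivity) (by
      rw [show π * τ F 1 π * τ F 2 π * τ F 3 π = (π * τ F 3 π) * (τ F 1 π * τ F 2 π) by ring,
        k1, k2]
      push_cast
      linear_combination (-(a * b + b * c + c * d - d * a) ^ 2 : 𝓞 F) * rt2_sq F)
  exact ⟨_, _, _, _, k1, k2, k3, hn, by rw [← key]; exact hn⟩

end Zeta8

/-! ### Units of the octic field -/

namespace Octic
open Zeta8

variable {F K : Type*} [Field F] [NumberField F] [hF : IsCyclotomicExtension {8} ℚ F]
  [Field K] [NumberField K] [Algebra F K]

local notation "ιK" => algebraMap (𝓞 F) (𝓞 K)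

theorem ι_inj : Function.Injective ιK := FaithfulSMul.algebraMap_injective _ _

/-- If `x² = y² z` with `y ≠ 0`, then `x` is a multiple of `y` whose cofactor has square `z`. -/
theorem exists_cofactor {S : Type*} [CommRing S] [IsDomain S] [IsIntegrallyClosed S] {x y z : S}
    (hy : y ≠ 0) (h : x ^ 2 = y ^ 2 * z) : ∃ q, x = y * q ∧ q ^ 2 = z := by
  obtain ⟨q, rfl⟩ := (IsIntegrallyClosed.pow_dvd_pow_iff (n := 2) (by norm_num)).mp ⟨z, h⟩
  refine ⟨q, rfl, mul_left_cancel₀ (pow_ne_zero 2 hy) ?_⟩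
  rw [← h]; ring

variable {p : ℕ} [hp : Fact p.Prime] (hp8 : p % 8 = 1) (hp16 : p % 16 = 9)
  (h2p : (2 : ZMod p) ^ ((p - 1) / 4) = -1)
  {Q : QuadInv (𝓞 F) (𝓞 K)} {s : 𝓞 K} (hσ : Q.σ s = -s) (hs : s ^ 2 = p)

/-- For a root `ε` of `X² - 2TX - 1`, the square of `1 + iε` is `2iε(1 + iT)`. -/
theorem one_add_sq {S : Type*} [CommRing S] {i ε T : S} (hi : i ^ 2 = -1)
    (hε : ε ^ 2 = 2 * T * ε + 1) : (1 + i * ε) ^ 2 = (1 + i) ^ 2 * (ε * (1 + i * T)) := by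
  linear_combination (ε ^ 2 - ε - i * T * ε - 2 * T * ε) * hi - hε

include hp8 hp16 h2p hσ hs in
/-- With `λ = A + iB`, the Pell units `ε = T + U√p` and `ε₁ = T₁ + U₁√(2p)` have norm `-1`, and `ελ` and
`ε₁λ(√2 - 1)` are squares `α²` and `β²`. The unit `αβ/λ` has square `εε₁(√2 - 1)`, hence norm
`±(√2 - 1)`; its product with `1 + √2`, and with `i` if the sign is negative, is `η`. -/
theorem exists_units {A B : ℤ} (hAB : A ^ 2 + B ^ 2 = p) :
    ∃ (ε η : (𝓞 K)ˣ) (α : 𝓞 K), (ε : 𝓞 K) * Q.σ ε = -1 ∧ (η : 𝓞 K) * Q.σ η = ιK (εu F) ∧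
      α ^ 2 = ε * ιK (A + B * ζ F ^ 2) := by
  obtain ⟨T, U, hTU, w, hw⟩ := exists_pell_factor (F := F) hp8 hAB
  obtain ⟨T', U', hTU', w', hw'⟩ := exists_pell_factor_two (F := F) hp8 hAB hp16 h2p
  have h4 := ζ_pow F
  have hi : ιK (ζ F ^ 2) ^ 2 = -1 := by
    rw [← map_pow, ← pow_mul, h4, map_neg, map_one]
  set i := ιK (ζ F ^ 2) with hidef
  have hr2 : ιK (rt2 F) ^ 2 = 2 := by rw [← map_pow, rt2_sq, map_ofNat]
  set rt := ιK (rt2 F) with hrt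
  have hσrt : Q.σ rt = rt := Q.σ.commutes _
  have hσi : Q.σ i = i := Q.σ.commutes _
  have hTU1 : (T : 𝓞 K) ^ 2 + 1 = p * U ^ 2 := by exact_mod_cast hTU
  have hTU2 : (T' : 𝓞 K) ^ 2 + 1 = 2 * p * U' ^ 2 := by exact_mod_cast hTU'
  let ε : (𝓞 K)ˣ := ⟨T + U * s, -(T - U * s), by linear_combination -hTU1 + U ^ 2 * hs,
    by linear_combination -hTU1 + U ^ 2 * hs⟩
  let ε' : (𝓞 K)ˣ := ⟨T' + U' * rt * s, -(T' - U' * rt * s),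
    by linear_combination -hTU2 + U' ^ 2 * rt ^ 2 * hs + U' ^ 2 * p * hr2,
    by linear_combination -hTU2 + U' ^ 2 * rt ^ 2 * hs + U' ^ 2 * p * hr2⟩
  have hε : (ε : 𝓞 K) = T + U * s := rfl
  have hε' : (ε' : 𝓞 K) = T' + U' * rt * s := rfl
  have nε : (ε : 𝓞 K) * Q.σ ε = -1 := by
    rw [hε]; simp only [map_add, map_mul, map_intCast, hσ]
    linear_combination hTU1 - U ^ 2 * hs
  have nε' : (ε' : 𝓞 K) * Q.σ ε' = -1 := by
    rw [hε']; simp only [map_add, map_mul, map_intCast, hσ, hσrt]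
    linear_combination hTU2 - U' ^ 2 * rt ^ 2 * hs - U' ^ 2 * p * hr2
  have qε : (ε : 𝓞 K) ^ 2 = 2 * T * ε + 1 := by
    rw [hε]; linear_combination -hTU1 + U ^ 2 * hs
  have qε' : (ε' : 𝓞 K) ^ 2 = 2 * T' * ε' + 1 := by
    rw [hε']; linear_combination -hTU2 + U' ^ 2 * rt ^ 2 * hs + U' ^ 2 * p * hr2
  have hw1 : 1 + i * T = ιK (A + B * ζ F ^ 2) * ιK w ^ 2 := by
    have := congrArg ιK hw
    simpa only [map_add, map_one, map_mul, map_pow, map_intCast, hidef] using this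
  have hw2 : 1 + i * T' = (1 + i) * ιK (A + B * ζ F ^ 2) * ιK w' ^ 2 := by
    have := congrArg ιK hw'
    simpa only [map_add, map_one, map_mul, map_pow, map_intCast, hidef] using this
  have hpos : ∀ T : ℤ, (1 + i * T : 𝓞 K) ≠ 0 := by
    intro T h
    have h1 : ((T ^ 2 + 1 : ℤ) : 𝓞 K) = 0 := by
      push_cast; linear_combination (1 - i * T) * h + T ^ 2 * hi
    have h2 : T ^ 2 + 1 = 0 := by exact_mod_cast h1
    nlinarith
  have hi1 : (1 + i : 𝓞 K) ≠ 0 := by simpa using hpos 1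
  set lam := ιK (A + B * ζ F ^ 2) with hlam
  have hw0 : ιK w ≠ 0 := by
    intro h; apply hpos T; rw [hw1, h]; ring
  have hw0' : ιK w' ≠ 0 := by
    intro h; apply hpos T'; rw [hw2, h]; ring
  have hlam0 : lam ≠ 0 := by
    intro h; apply hpos T; rw [hw1, h]; ring
  set z := ιK (ζ F) with hz
  have hiz : i = z ^ 2 := by rw [hidef, map_pow]
  have hrtz : rt = z - z ^ 3 := by rw [hrt, rt2, map_sub, map_pow]
  have hz4 : z ^ 4 = -1 := by rw [hz, ← map_pow, h4, map_neg, map_one]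
  have hz1 : 1 + i = (1 + z) ^ 2 * (rt - 1) := by
    rw [hiz, hrtz]; linear_combination (2 + z) * hz4
  have hz0 : 1 + z ≠ 0 := by
    intro h; apply hi1; rw [hz1, h]; ring
  obtain ⟨α, hα, hα2⟩ := exists_cofactor (x := 1 + i * ε) (y := (1 + i) * ιK w)
    (z := ε * lam) (mul_ne_zero hi1 hw0) (by rw [one_add_sq hi qε, hw1]; ring)
  obtain ⟨β, hβ, hβ2⟩ := exists_cofactor (x := 1 + i * ε') (y := (1 + i) * (1 + z) * ιK w')
    (z := ε' * lam * (rt - 1)) (mul_ne_zero (mul_ne_zero hi1 hz0) hw0')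
    (by
      rw [one_add_sq hi qε', hw2]
      linear_combination (1 + i) ^ 2 * ε' * lam * ιK w' ^ 2 * hz1)
  obtain ⟨η, -, hη⟩ := exists_cofactor (x := α * β) (y := lam) (z := ε * ε' * (rt - 1)) hlam0
    (by rw [mul_pow, hα2, hβ2]; ring)
  have hσε : Q.σ (ιK (εu F)) = ιK (εu F) := Q.σ.commutes _
  have hιε : ιK (εu F) = 1 + rt := by rw [εu_val, map_add, map_one]
  have hσrt1 : Q.σ (rt - 1) = rt - 1 := by rw [map_sub, hσrt, map_one]
  -- `N(η)` squares to the square of the inverse of the fundamental unit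
  have hN2 : ((1 + rt) * (η * Q.σ η)) ^ 2 = 1 := by
    have hση := congrArg Q.σ hη
    rw [map_pow, map_mul, map_mul, hσrt1] at hση
    calc ((1 + rt) * (η * Q.σ η)) ^ 2 = (1 + rt) ^ 2 * (η ^ 2 * Q.σ η ^ 2) := by ring
      _ = ((1 + rt) * (rt - 1)) ^ 2 * ((ε * Q.σ ε) * (ε' * Q.σ ε')) := by rw [hη, hση]; ring
      _ = 1 := by rw [nε, nε']; linear_combination (rt ^ 2) * hr2
  have hrr : (1 + rt) * (rt - 1) = 1 := by linear_combination hr2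
  have hηu : IsUnit η := by
    have : IsUnit (η ^ 2) := by
      rw [hη]
      exact (ε.isUnit.mul ε'.isUnit).mul (IsUnit.of_mul_eq_one _ ((mul_comm _ _).trans hrr))
    exact (isUnit_pow_iff (by norm_num)).mp this
  have hεu' : IsUnit (1 + rt) := IsUnit.of_mul_eq_one _ hrr
  have hiu : IsUnit i := IsUnit.of_mul_eq_one (-i) (by linear_combination -hi)
  have hσ1 : Q.σ (1 + rt) = 1 + rt := by rw [map_add, hσrt, map_one]
  rcases eq_or_eq_neg_of_sq_eq_sq _ 1 (hN2.trans (one_pow 2).symm) with h | h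
  · refine ⟨ε, (hεu'.mul hηu).unit, α, nε, ?_, hα2⟩
    rw [IsUnit.unit_spec, map_mul, hσ1, hιε]
    linear_combination (1 + rt) * h
  · refine ⟨ε, (hiu.mul (hεu'.mul hηu)).unit, α, nε, ?_, hα2⟩
    rw [IsUnit.unit_spec, map_mul, map_mul, hσ1, hιε, hσi]
    linear_combination i ^ 2 * (1 + rt) * h - (1 + rt) * hi

end Octic

/-! ### Norms of units and norm residues -/

namespace Zeta8

variable {F : Type*} [Field F] [NumberField F] [hF : IsCyclotomicExtension {8} ℚ F]
  {p : ℕ} [hp : Fact p.Prime] {r : ZMod p} (hr : r ^ 4 = -1) (hp2 : p ≠ 2)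
  {π : 𝓞 F} (hπ : ∀ x, φ F hr 0 x = 0 ↔ π ∣ x)

theorem two_ne_zero' (hp2 : p ≠ 2) : (2 : ZMod p) ≠ 0 := by
  intro h0
  have : p ∣ 2 := (ZMod.natCast_eq_zero_iff 2 p).mp (by exact_mod_cast h0)
  exact hp2 ((Nat.prime_dvd_prime_iff_eq hp.out Nat.prime_two).mp this)

include hp2 hπ

theorem prod_eq : π * τ F 1 π * τ F 2 π * τ F 3 π = p := by
  obtain ⟨e, f, A, B, h1, h2, -, h3, -⟩ := exists_quad_norms hr hp2 hπ
  have h4 : (e : 𝓞 F) ^ 2 - 2 * f ^ 2 = p := by exact_mod_cast h3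
  linear_combination τ F 1 π * τ F 2 π * h1 + (e + f * rt2 F) * h2 + h4 - f ^ 2 * rt2_sq F

/-- `p` is exactly divisible by each `τₖ π`. -/
theorem exists_complement {k : ℕ} (hk : k < 4) :
    ∃ d : 𝓞 F, (p : 𝓞 F) = τ F k π * d ∧ ¬ τ F k π ∣ d := by
  have hP := prod_eq hr hp2 hπ
  have hpr := prime_π hr hπ k
  have hnd : ∀ j, j < 4 → k ≠ j → ¬ τ F k π ∣ τ F j π := fun j hj hkj =>
    not_dvd_π hr hπ hk hj hkj hp2
  have h3 : ∀ i j l, i < 4 → j < 4 → l < 4 → k ≠ i → k ≠ j → k ≠ l →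
      ¬ τ F k π ∣ τ F i π * τ F j π * τ F l π := by
    intro i j l hi hj hl h1 h2 h3 h
    rcases hpr.dvd_or_dvd h with h | h
    · rcases hpr.dvd_or_dvd h with h | h
      · exact hnd _ hi h1 h
      · exact hnd _ hj h2 h
    · exact hnd _ hl h3 h
  have h0 := τ_zero π
  rw [← hP]
  interval_cases k
  · exact ⟨τ F 1 π * τ F 2 π * τ F 3 π, by rw [h0]; ring,
      h3 1 2 3 (by norm_num) (by norm_num) (by norm_num) (by norm_num) (by norm_num) (by norm_num)⟩
  · exact ⟨τ F 0 π * τ F 2 π * τ F 3 π, by rw [h0]; ring,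
      h3 0 2 3 (by norm_num) (by norm_num) (by norm_num) (by norm_num) (by norm_num) (by norm_num)⟩
  · exact ⟨τ F 0 π * τ F 1 π * τ F 3 π, by rw [h0]; ring,
      h3 0 1 3 (by norm_num) (by norm_num) (by norm_num) (by norm_num) (by norm_num) (by norm_num)⟩
  · exact ⟨τ F 0 π * τ F 1 π * τ F 2 π, by rw [h0]; ring,
      h3 0 1 2 (by norm_num) (by norm_num) (by norm_num) (by norm_num) (by norm_num) (by norm_num)⟩

omit [Field F] [NumberField F] hF hp2 hπ in
include hr in
/-- A square root of `r` would have order sixteen in the multiplicative group of `𝔽ₚ`. -/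
theorem r_not_isSquare (hp16 : p % 16 = 9) : ¬ IsSquare r := by
  rintro ⟨x, rfl⟩
  have hx0 : x ≠ 0 := by rintro rfl; norm_num at hr
  have h1 := ZMod.pow_card_sub_one_eq_one hx0
  have h2 : p - 1 = 8 * (2 * (p / 16) + 1) := by omega
  have h8 : x ^ 8 = -1 := by rw [← hr]; ring
  rw [h2, pow_mul, h8, Odd.neg_one_pow ⟨_, rfl⟩] at h1
  have hp2 : p ≠ 2 := by omega
  exact two_ne_zero' hp2 (by linear_combination -h1)

end Zeta8

namespace Octic
open Zeta8

variable {F K : Type*} [Field F] [NumberField F] [hF : IsCyclotomicExtension {8} ℚ F]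
  [Field K] [NumberField K] [Algebra F K]

local notation "ιK" => algebraMap (𝓞 F) (𝓞 K)

variable {p : ℕ} [hp : Fact p.Prime] {r : ZMod p} (hr : r ^ 4 = -1) (hp2 : p ≠ 2)
  {π : 𝓞 F} (hπ : ∀ x, φ F hr 0 x = 0 ↔ π ∣ x)
  {Q : QuadInv (𝓞 F) (𝓞 K)} {s : 𝓞 K} (hσ : Q.σ s = -s) (hs : s ^ 2 = p)

include hp2 hπ hσ hs

/-- A relative norm is a square modulo each ramified prime that is prime to it. -/
theorem isSquare_φ {k : ℕ} (hk : k < 4) {m c : 𝓞 F} {z : 𝓞 K} (hc : c ≠ 0)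
    (h : ιK (m * c ^ 2) = z * Q.σ z) : IsSquare (φ F hr k m) := by
  have := isPrincipalIdealRing F
  obtain ⟨d, hd, hnd⟩ := exists_complement hr hp2 hπ hk
  refine Q.isSquare_of_norm (φ F hr k) (prime_π hr hπ k) (φ_eq_zero_iff hr hπ k) ?_ hnd hσ ?_ hc h
  · rw [← φ_eq_zero_iff hr hπ, map_ofNat]; exact two_ne_zero' hp2
  · rw [hs, ← hd, map_natCast]

/-- `1 + √2` is a norm, hence a square at every ramified prime. -/
theorem isSquare_φ_ε {η : (𝓞 K)ˣ} (hη : (η : 𝓞 K) * Q.σ η = ιK (εu F))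
    {k : ℕ} (hk : k < 4) : IsSquare (φ F hr k (εu F)) :=
  isSquare_φ hr hp2 hπ hσ hs hk (c := 1) (z := η) one_ne_zero (by rw [hη]; simp)

/-- A unit that is a norm of a fraction is the norm of a unit: up to squares units are `ζᵃ(1 + √2)ᵇ`,
where `1 + √2` is the norm of `η`, and `ζ` is not a square modulo `π`. -/
theorem unit_norm {η : (𝓞 K)ˣ} (hη : (η : 𝓞 K) * Q.σ η = ιK (εu F))
    (hp16 : p % 16 = 9) (u : (𝓞 F)ˣ) (α β : 𝓞 K) (hβ : β ≠ 0)
    (h : ιK u * (β * Q.σ β) = α * Q.σ α) : ∃ w : (𝓞 K)ˣ, (w : 𝓞 K) * Q.σ w = ιK u := by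
  obtain ⟨a, b, w, ha, -, hu⟩ := exists_unit_rep F u
  have hu' : (u : 𝓞 F) = ζ F ^ a * (εu F : 𝓞 F) ^ b * (w : 𝓞 F) ^ 2 := by
    rw [hu]; simp [ζu_val]
  have ha0 : a = 0 := by
    by_contra ha0
    have ha1 : a = 1 := by omega
    have hsq : IsSquare (φ F hr 0 u) := by
      refine isSquare_φ hr hp2 hπ hσ hs (by norm_num) (c := Q.N β) (z := α * β) ?_ ?_
      · intro h0
        have := Q.N_spec β
        rw [h0, map_zero, eq_comm, mul_eq_zero] at this
        rcases this with h | h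
        · exact hβ h
        · exact hβ (by simpa using h)
      · rw [map_mul, map_pow, Q.N_spec, map_mul]
        linear_combination β * Q.σ β * h
    obtain ⟨y, hy⟩ := isSquare_φ_ε hr hp2 hπ hσ hs hη (k := 0) (by norm_num)
    obtain ⟨x, hx⟩ := hsq
    rw [hu', ha1, map_mul, map_mul, map_pow, map_pow, map_pow, φ_ζ, hy] at hx
    have hw0 : φ F hr 0 w ≠ 0 := (w.isUnit.map (φ F hr 0)).ne_zero
    have hy0 : y ≠ 0 := by
      rintro rfl
      have := ((εu F).isUnit.map (φ F hr 0)).ne_zero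
      rw [hy] at this; simp at this
    apply r_not_isSquare hr hp16
    refine ⟨x / (y ^ b * φ F hr 0 w), ?_⟩
    field_simp
    rw [sq x, ← hx]; ring
  refine ⟨η ^ b * Units.map (ιK : 𝓞 F →* 𝓞 K) w, ?_⟩
  have : Q.σ (ιK (w : 𝓞 F)) = ιK w := Q.σ.commutes _
  rw [hu', ha0]
  simp only [Units.val_mul, Units.val_pow_eq_pow_val, Units.coe_map, MonoidHom.coe_coe, map_mul,
    map_pow, this, pow_zero, one_mul, ← hη]
  ring

/-- For units `u` of the cyclotomic field, `φ₁(u) φ₂(u)` is a square. -/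
theorem isSquare_unit_φ {η : (𝓞 K)ˣ} (hη : (η : 𝓞 K) * Q.σ η = ιK (εu F))
    (u : (𝓞 F)ˣ) : IsSquare (φ F hr 1 u * φ F hr 2 u) := by
  obtain ⟨a, b, w, -, -, hu⟩ := exists_unit_rep F u
  have hu' : (u : 𝓞 F) = ζ F ^ a * (εu F : 𝓞 F) ^ b * (w : 𝓞 F) ^ 2 := by
    rw [hu]; simp [ζu_val]
  obtain ⟨y, hy⟩ := isSquare_φ_ε hr hp2 hπ hσ hs hη (k := 1) (by norm_num)
  obtain ⟨z, hz⟩ := isSquare_φ_ε hr hp2 hπ hσ hs hη (k := 2) (by norm_num)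
  refine ⟨y ^ b * z ^ b * φ F hr 1 w * φ F hr 2 w * (r ^ 4) ^ a, ?_⟩
  rw [hu']
  simp only [map_mul, map_pow, hy, hz, φ_ζ]
  ring

end Octic

/-! ### The ramified primes and the 2-torsion of the class group -/

namespace Octic
open Zeta8

variable {F K : Type*} [Field F] [NumberField F] [hF : IsCyclotomicExtension {8} ℚ F]
  [Field K] [NumberField K] [Algebra F K]

local notation "ιK" => algebraMap (𝓞 F) (𝓞 K)

/-- The prime `(τₖ π, s)` of the octic field above `τₖ π`. -/
def pr (π : 𝓞 F) (s : 𝓞 K) (k : ℕ) : Ideal (𝓞 K) := Ideal.span {ιK (τ F k π), s}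

variable {p : ℕ} [hp : Fact p.Prime] {r : ZMod p} (hr : r ^ 4 = -1) (hp2 : p ≠ 2)
  {π : 𝓞 F} (hπ : ∀ x, φ F hr 0 x = 0 ↔ π ∣ x)
  {Q : QuadInv (𝓞 F) (𝓞 K)} {s : 𝓞 K} (hσ : Q.σ s = -s) (hs : s ^ 2 = p)

include hp2 hπ hs in
theorem pr_sq {k : ℕ} (hk : k < 4) : pr π s k * pr π s k = Ideal.span {ιK (τ F k π)} := by
  have := isPrincipalIdealRing F
  obtain ⟨d, hd, hnd⟩ := exists_complement hr hp2 hπ hk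
  have hcop : IsCoprime (τ F k π) d := ((prime_π hr hπ k).irreducible.coprime_iff_not_dvd).mpr hnd
  obtain ⟨a, b, hab⟩ := hcop
  have hab' : ιK a * ιK (τ F k π) + ιK b * ιK d = 1 := by
    rw [← map_mul, ← map_mul, ← map_add, hab, map_one]
  have hsd : s ^ 2 = ιK (τ F k π) * ιK d := by rw [hs, ← map_mul, ← hd, map_natCast]
  rw [pr, Ideal.span_pair_mul_span_pair]
  generalize ιK (τ F k π) = P at *
  generalize ιK d = D at *
  apply le_antisymm
  · rw [Ideal.span_le]
    rintro x (rfl | rfl | rfl | rfl)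
    · exact Ideal.mem_span_singleton.mpr ⟨P, rfl⟩
    · exact Ideal.mem_span_singleton.mpr ⟨s, rfl⟩
    · exact Ideal.mem_span_singleton.mpr ⟨s, by ring⟩
    · exact Ideal.mem_span_singleton.mpr ⟨D, by rw [← hsd]; ring⟩
  · rw [Ideal.span_singleton_le_iff_mem]
    have : P = ιK a * (P * P) + ιK b * (s * s) := by
      rw [← sq s, hsd]; linear_combination -P * hab'
    refine (congrArg (· ∈ Ideal.span _) this).mpr (Ideal.add_mem _ (Ideal.mul_mem_left _ _ (Ideal.subset_span ?_))
      (Ideal.mul_mem_left _ _ (Ideal.subset_span ?_))) <;> simp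

include hs in
theorem s_ne_zero : s ≠ 0 := by
  rintro rfl
  have : (p : 𝓞 K) = 0 := by rw [← hs]; ring
  exact hp.out.ne_zero (by exact_mod_cast this)

include hs in
theorem pr_ne_bot (k : ℕ) : pr π s k ≠ ⊥ := by
  intro h
  have : s ∈ pr π s k := Ideal.subset_span (by simp)
  rw [h] at this
  exact s_ne_zero hs this

include hσ in
theorem pr_map (k : ℕ) : (pr π s k).map Q.σ = pr π s k := by
  have h1 : Q.σ (ιK (τ F k π)) = ιK (τ F k π) := Q.σ.commutes _
  rw [pr, Ideal.map_span, Set.image_pair, hσ, h1]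
  apply le_antisymm <;> rw [Ideal.span_le] <;> rintro x (rfl | rfl)
  · exact Ideal.subset_span (by simp)
  · exact neg_mem (Ideal.subset_span (by simp))
  · exact Ideal.subset_span (by simp)
  · exact neg_mem_iff.mp (Ideal.subset_span (by simp))

include hp2 hπ hs in
theorem cls_pr_sq {k : ℕ} (hk : k < 4) : cls (pr π s k) ^ 2 = 1 := by
  rw [sq, ← cls_mul (pr_ne_bot hs k) (pr_ne_bot hs k), pr_sq hr hp2 hπ hs hk, cls_span]

/-- `p ≡ 1 (mod 4)`, so `(1 + s)/2` is integral. -/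
theorem exists_half (hp8 : p % 8 = 1) (hσ : Q.σ s = -s) (hs : s ^ 2 = p) :
    ∃ x : 𝓞 K, 1 + s = 2 * x := by
  have := isPrincipalIdealRing F
  have h2 : ιK 2 = 2 := map_ofNat _ 2
  have h := Q.dvd_of_trace_norm (n := 2) (t := 1) (m := -((p / 4 : ℕ) : 𝓞 F)) (z := 1 + s)
    (by rw [map_add, hσ, map_one, mul_one, h2]; ring)
    (by
      have h1 : (p : 𝓞 K) = 4 * ((p / 4 : ℕ) : 𝓞 K) + 1 := by
        have : p = 4 * (p / 4) + 1 := by omega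
        exact_mod_cast this
      rw [map_add, hσ, map_one, map_mul, map_pow, h2, map_neg, map_natCast]
      linear_combination hs + h1)
  rwa [map_ofNat] at h

include hr hp2 hπ hσ hs in
/-- A ramified prime contains `x - σ x = s` for `x = (1 + s)/2`, so it lies above `p`. -/
theorem ramified_eq (hp8 : p % 8 = 1) {P : Ideal (𝓞 K)} (hP : Q.IsRamified P) :
    ∃ k < 4, P = pr π s k := by
  obtain ⟨x, hx⟩ := exists_half hp8 hσ hs
  have hsP : s ∈ P := by
    have h1 := hP.sub_mem x
    have h2 : x - Q.σ x = s := by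
      have h3 := congrArg Q.σ hx
      rw [map_add, map_one, hσ, map_mul, map_ofNat] at h3
      have h20 : (2 : 𝓞 K) ≠ 0 := two_ne_zero
      apply mul_left_cancel₀ h20
      linear_combination h3 - hx
    rwa [h2] at h1
  obtain ⟨l, hl, hl2⟩ := hP.exists_sq
  have h1 : ιK l ∣ ιK p := by
    rw [← Ideal.mem_span_singleton, ← hl2, map_natCast, ← hs, sq]
    exact Ideal.mul_mem_mul hsP hsP
  have h2 : l ∣ (p : 𝓞 F) := by
    obtain ⟨y, hy⟩ := h1
    have hl0 : ιK l ≠ 0 := by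
      rw [Ne, map_eq_zero_iff _ ι_inj]; exact hl.ne_zero
    obtain ⟨y', rfl⟩ := Q.fixed y (by
      apply mul_left_cancel₀ hl0
      rw [← hy]
      have := congrArg Q.σ hy
      rw [map_mul, Q.σ.commutes, Q.σ.commutes] at this
      exact this.symm)
    exact ⟨y', ι_inj (by rw [hy, map_mul])⟩
  obtain ⟨k, hk, hlk⟩ : ∃ k < 4, l ∣ τ F k π := by
    rw [← prod_eq hr hp2 hπ] at h2
    rcases hl.dvd_or_dvd h2 with h2 | h2
    · rcases hl.dvd_or_dvd h2 with h2 | h2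
      · rcases hl.dvd_or_dvd h2 with h2 | h2
        · exact ⟨0, by norm_num, by rwa [τ_zero]⟩
        · exact ⟨1, by norm_num, h2⟩
      · exact ⟨2, by norm_num, h2⟩
    · exact ⟨3, by norm_num, h2⟩
  refine ⟨k, hk, ideal_sq_inj ?_⟩
  rw [hl2, pr_sq hr hp2 hπ hs hk, Ideal.span_singleton_eq_span_singleton]
  exact (hl.associated_of_dvd (prime_π hr hπ k) hlk).map ιK

include hp2 hπ hs in
/-- If `α²` is a unit times `π · τ₂π`, the classes above `π` and `τ₂ π` agree. -/
theorem cls_pr_two {ε : (𝓞 K)ˣ} {α : 𝓞 K} (hα : α ^ 2 = ε * ιK (π * τ F 2 π)) :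
    cls (pr π s 2) = cls (pr π s 0) := by
  have h : pr π s 0 * pr π s 2 = Ideal.span {α} := by
    apply ideal_sq_inj
    rw [mul_mul_mul_comm, pr_sq hr hp2 hπ hs (by norm_num), pr_sq hr hp2 hπ hs (by norm_num),
      Ideal.span_singleton_mul_span_singleton, Ideal.span_singleton_mul_span_singleton, ← map_mul,
      τ_zero, ← sq α, hα]
    rw [Ideal.span_singleton_eq_span_singleton]
    exact (associated_unit_mul_left _ _ ε.isUnit).symm
  have h2 : cls (pr π s 0) * cls (pr π s 2) = 1 := by
    rw [← cls_mul (pr_ne_bot hs _) (pr_ne_bot hs _), h, cls_span]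
  have h3 := cls_pr_sq hr hp2 hπ hs (k := 0) (by norm_num)
  rw [← h3, sq] at h2
  exact mul_left_cancel h2

include hp2 hπ hs in
/-- The product of the four ramified primes is `(s)`, so this follows from `cls_pr_two`. -/
theorem cls_pr_three {ε : (𝓞 K)ˣ} {α : 𝓞 K} (hα : α ^ 2 = ε * ιK (π * τ F 2 π)) :
    cls (pr π s 1) = cls (pr π s 3) := by
  have h : pr π s 0 * pr π s 1 * (pr π s 2 * pr π s 3) = Ideal.span {s} := by
    apply ideal_sq_inj
    rw [mul_mul_mul_comm, mul_mul_mul_comm (pr π s 0), mul_mul_mul_comm (pr π s 2),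
      pr_sq hr hp2 hπ hs (by norm_num), pr_sq hr hp2 hπ hs (by norm_num),
      pr_sq hr hp2 hπ hs (by norm_num), pr_sq hr hp2 hπ hs (by norm_num)]
    simp only [Ideal.span_singleton_mul_span_singleton, ← map_mul]
    rw [← sq s, hs, ← map_natCast ιK, ← prod_eq hr hp2 hπ, τ_zero, ← mul_assoc]
  have hne := pr_ne_bot (π := π) hs
  have h2 : cls (pr π s 0) * cls (pr π s 1) * (cls (pr π s 2) * cls (pr π s 3)) = 1 := by
    rw [← cls_mul (hne _) (hne _), ← cls_mul (hne _) (hne _),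
      ← cls_mul (mul_ne_zero (hne _) (hne _)) (mul_ne_zero (hne _) (hne _)), h, cls_span]
  have h0 := cls_pr_sq hr hp2 hπ hs (k := 0) (by norm_num)
  have h3 := cls_pr_sq hr hp2 hπ hs (k := 3) (by norm_num)
  rw [cls_pr_two hr hp2 hπ hs hα, mul_mul_mul_comm, ← sq, h0, one_mul, ← h3, sq] at h2
  exact mul_right_cancel h2

include hr hp2 hπ hσ hs in
/-- Ambiguous class theory: the 2-torsion is generated by the classes of the ramified primes, of which
at most two are independent. -/
theorem two_torsion (hp8 : p % 8 = 1) (hp16 : p % 16 = 9)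
    {η : (𝓞 K)ˣ} (hη : (η : 𝓞 K) * Q.σ η = ιK (εu F))
    {ε : (𝓞 K)ˣ} {α : 𝓞 K} (hα : α ^ 2 = ε * ιK (π * τ F 2 π))
    {c : ClassGroup (𝓞 K)} (hc : c ^ 2 = 1) :
    c = 1 ∨ c = cls (pr π s 0) ∨ c = cls (pr π s 0) * cls (pr π s 3) ∨
      c = cls (pr π s 0) * (cls (pr π s 0) * cls (pr π s 3)) := by
  have := isPrincipalIdealRing F
  have h1 := Q.mem_closure_of_sq_eq_one (s_ne_zero hs) hσ
    (fun u x y _ hy h => unit_norm hr hp2 hπ hσ hs hη hp16 u x y hy h) hc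
  have h0 := cls_pr_sq hr hp2 hπ hs (k := 0) (by norm_num)
  have h3 := cls_pr_sq hr hp2 hπ hs (k := 3) (by norm_num)
  have e2 := cls_pr_two hr hp2 hπ hs hα
  have e1 := cls_pr_three hr hp2 hπ hs hα
  have hgen : ∃ i j : ℕ, c = cls (pr π s 0) ^ i * cls (pr π s 3) ^ j := by
    clear hc
    induction h1 using Subgroup.closure_induction with
    | mem x hx =>
      obtain ⟨P, hP, rfl⟩ := hx
      obtain ⟨k, hk, rfl⟩ := ramified_eq hr hp2 hπ hσ hs hp8 hP
      interval_cases k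
      · exact ⟨1, 0, by simp⟩
      · exact ⟨0, 1, by rw [e1]; simp⟩
      · exact ⟨1, 0, by rw [e2]; simp⟩
      · exact ⟨0, 1, by simp⟩
    | one => exact ⟨0, 0, by simp⟩
    | mul x y _ _ hx hy =>
      obtain ⟨i, j, rfl⟩ := hx
      obtain ⟨i', j', rfl⟩ := hy
      exact ⟨i + i', j + j', by rw [pow_add, pow_add, mul_mul_mul_comm]⟩
    | inv x _ hx =>
      obtain ⟨i, j, rfl⟩ := hx
      refine ⟨i, j, ?_⟩
      rw [inv_eq_iff_mul_eq_one, mul_mul_mul_comm, ← mul_pow, ← mul_pow, ← sq, ← sq, h0, h3]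
      simp
  have hpow : ∀ (x : ClassGroup (𝓞 K)) (i : ℕ), x ^ 2 = 1 → x ^ i = 1 ∨ x ^ i = x := by
    intro x i hx
    rcases Nat.even_or_odd' i with ⟨k, rfl | rfl⟩
    · left; rw [pow_mul, hx, one_pow]
    · right; rw [pow_succ, pow_mul, hx, one_pow, one_mul]
  obtain ⟨i, j, rfl⟩ := hgen
  rcases hpow _ i h0 with hi | hi <;> rcases hpow _ j h3 with hj | hj <;> rw [hi, hj]
  · left; simp
  · right; right; right; rw [← mul_assoc, ← sq, h0]
  · right; left; simp
  · right; right; left; rfl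

include hr hp2 hπ hσ hs in
/-- The class above `π` is not a square: otherwise `π`, up to a unit, would be a norm up to squares,
so `φ₁(π) φ₂(π) = 2e` would be a square modulo `p`. -/
theorem not_isSquare_cls_pr (hp8 : p % 8 = 1) (h2p : (2 : ZMod p) ^ ((p - 1) / 4) = -1)
    {η : (𝓞 K)ˣ} (hη : (η : 𝓞 K) * Q.σ η = ιK (εu F)) : ¬ IsSquare (cls (pr π s 0)) := by
  have := isPrincipalIdealRing F
  rintro ⟨d, hd⟩
  rw [← sq] at hd
  obtain ⟨u, c, z, hc, h⟩ := Q.exists_norm_of_cls_sq (pr_ne_bot hs 0) (n := π)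
    (by rw [pr_map hσ, pr_sq hr hp2 hπ hs (by norm_num), τ_zero]) hd
  obtain ⟨a, ha⟩ := isSquare_φ hr hp2 hπ hσ hs (k := 1) (by norm_num) hc h
  obtain ⟨b, hb⟩ := isSquare_φ hr hp2 hπ hσ hs (k := 2) (by norm_num) hc h
  obtain ⟨t, ht⟩ := isSquare_unit_φ hr hp2 hπ hσ hs hη u
  obtain ⟨e, f, A, B, h1, h2, -, h3, -⟩ := exists_quad_norms hr hp2 hπ
  have hJ := Elem.jac_e hp8 h2p h3
  -- `φ₁(π) φ₂(π) = 2e`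
  have hval : φ F hr 1 π * φ F hr 2 π = 2 * (e : ZMod p) := by
    rw [← φ_τ hr 0 1 1 (by norm_num), ← φ_τ hr 0 2 2 (by norm_num), ← map_mul, h2]
    have h0 : φ F hr 0 (π * τ F 3 π) = 0 := by rw [hπ]; exact dvd_mul_right _ _
    rw [h1] at h0
    simp only [map_add, map_sub, map_mul, map_intCast] at h0 ⊢
    linear_combination -h0
  rw [map_mul] at ha hb
  have ht0 : t ≠ 0 := by
    rintro rfl
    have h1 := (u.isUnit.map (φ F hr 1)).ne_zero
    have h2 := (u.isUnit.map (φ F hr 2)).ne_zero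
    exact mul_ne_zero h1 h2 (by rw [ht]; ring)
  have hsq : IsSquare (2 * (e : ZMod p)) := by
    refine ⟨a * b / t, ?_⟩
    field_simp
    rw [← hval]
    linear_combination (-(φ F hr 1 π * φ F hr 2 π)) * ht + φ F hr 2 u * φ F hr 2 π * ha + a ^ 2 * hb
  have hne : 2 * (e : ZMod p) ≠ 0 := by
    rw [← hval]
    have n1 := φ_π_ne hr hπ (j := 1) (k := 0) (by norm_num) (by norm_num) (by norm_num) hp2
    have n2 := φ_π_ne hr hπ (j := 2) (k := 0) (by norm_num) (by norm_num) (by norm_num) hp2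
    rw [τ_zero] at n1 n2
    exact mul_ne_zero n1 n2
  have hcast : 2 * (e : ZMod p) = ((2 * e : ℤ) : ZMod p) := by push_cast; rfl
  rw [hcast] at hsq hne
  rw [Elem.isSquare_iff hne, jacobiSym.mul_left, Elem.jac_two hp8, hJ] at hsq
  norm_num at hsq

end Octic

/-! ### The product of two ramified classes is nontrivial -/

namespace Octic
open Zeta8

variable {F K : Type*} [Field F] [NumberField F] [hF : IsCyclotomicExtension {8} ℚ F]
  [Field K] [NumberField K] [Algebra F K]

local notation "ιK" => algebraMap (𝓞 F) (𝓞 K)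

variable {p : ℕ} [hp : Fact p.Prime] {r : ZMod p} (hr : r ^ 4 = -1) (hp2 : p ≠ 2)
  {π : 𝓞 F} (hπ : ∀ x, φ F hr 0 x = 0 ↔ π ∣ x)
  {Q : QuadInv (𝓞 F) (𝓞 K)} {s : 𝓞 K} (hσ : Q.σ s = -s) (hs : s ^ 2 = p)

include hr hπ in
/-- A square exactly divisible by `τₖ π` does not exist. -/
theorem φ_eq_zero_of_isSquare {k : ℕ} {m : 𝓞 F} (h : IsSquare (τ F k π * m)) :
    φ F hr k m = 0 := by
  obtain ⟨y, hy⟩ := h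
  have hP := prime_π hr hπ k
  have h1 : τ F k π ∣ y := by
    have : τ F k π ∣ y * y := ⟨m, hy.symm⟩
    rcases hP.dvd_or_dvd this with h | h <;> exact h
  obtain ⟨z, rfl⟩ := h1
  rw [φ_eq_zero_iff hr hπ]
  exact ⟨z * z, mul_left_cancel₀ hP.ne_zero (by rw [hy]; ring)⟩

include hr hp2 hπ in
/-- The elements `ζᵃ εᵇ (π τ₂π)ᶜ (π τ₃π)ᵉ` and their multiples by `p` are squares only if all
exponents are even. -/
theorem exponents_zero {a b c e j : ℕ} (ha : a ≤ 1) (hb : b ≤ 1) (hc : c ≤ 1) (he : e ≤ 1)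
    (hj : j ≤ 1) (h : IsSquare ((p : 𝓞 F) ^ j *
      (ζ F ^ a * (εu F : 𝓞 F) ^ b * (π * τ F 2 π) ^ c * (π * τ F 3 π) ^ e))) :
    a = 0 ∧ b = 0 ∧ c = 0 ∧ e = 0 := by
  have n0 : ∀ i j, i < 4 → j < 4 → i ≠ j → φ F hr i (τ F j π) ≠ 0 := fun i j hi hj hij =>
    φ_π_ne hr hπ hi hj hij hp2
  have n1 : ∀ i, i < 4 → i ≠ 0 → φ F hr i π ≠ 0 := fun i hi hij => by
    have := n0 i 0 hi (by norm_num) hij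
    rwa [τ_zero] at this
  have nε : ∀ i, φ F hr i (εu F : 𝓞 F) ≠ 0 := fun i => ((εu F).isUnit.map (φ F hr i)).ne_zero
  have nζ : ∀ i, φ F hr i (ζ F) ≠ 0 := fun i => ((ζu F).isUnit.map (φ F hr i)).ne_zero
  have hj0 : j = 0 := by
    by_contra hj0
    obtain rfl : j = 1 := by omega
    rw [pow_one, ← prod_eq hr hp2 hπ, show π * τ F 1 π * τ F 2 π * τ F 3 π *
      (ζ F ^ a * (εu F : 𝓞 F) ^ b * (π * τ F 2 π) ^ c * (π * τ F 3 π) ^ e) = τ F 1 π *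
      (π * τ F 2 π * τ F 3 π * (ζ F ^ a * (εu F : 𝓞 F) ^ b * (π * τ F 2 π) ^ c *
        (π * τ F 3 π) ^ e)) by ring] at h
    have := φ_eq_zero_of_isSquare hr hπ h
    simp [nε, nζ, n1, n0] at this
  subst hj0
  rw [pow_zero, one_mul] at h
  have hc0 : c = 0 := by
    by_contra hc0
    obtain rfl : c = 1 := by omega
    rw [pow_one, show ζ F ^ a * (εu F : 𝓞 F) ^ b * (π * τ F 2 π) * (π * τ F 3 π) ^ e =
      τ F 2 π * (ζ F ^ a * (εu F : 𝓞 F) ^ b * π * (π * τ F 3 π) ^ e) by ring] at h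
    have := φ_eq_zero_of_isSquare hr hπ h
    simp [nε, nζ, n1, n0] at this
  subst hc0
  have he0 : e = 0 := by
    by_contra he0
    obtain rfl : e = 1 := by omega
    rw [pow_zero, mul_one, pow_one, show ζ F ^ a * (εu F : 𝓞 F) ^ b * (π * τ F 3 π) =
      τ F 3 π * (ζ F ^ a * (εu F : 𝓞 F) ^ b * π) by ring] at h
    have := φ_eq_zero_of_isSquare hr hπ h
    simp [nε, nζ, n1] at this
  subst he0
  rw [pow_zero, mul_one, pow_zero, mul_one] at h
  have h1 := not_isSquare_ζ F
  have h2 := not_isSquare_ε F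
  have h3 := not_isSquare_ζε F
  interval_cases a <;> interval_cases b <;> simp_all

include hσ hs in
/-- An element of the base ring that is a square in `𝓞 K` is a square up to a factor `p`. -/
theorem isSquare_descent {x : 𝓞 F} {Y : 𝓞 K} (h : Y ^ 2 = ιK x) :
    ∃ j ≤ 1, IsSquare ((p : 𝓞 F) ^ j * x) := by
  have h1 : Q.σ Y ^ 2 = Y ^ 2 := by rw [← map_pow, h, Q.σ.commutes]
  rcases eq_or_eq_neg_of_sq_eq_sq _ _ h1 with h2 | h2
  · obtain ⟨y, rfl⟩ := Q.fixed Y h2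
    exact ⟨0, by norm_num, y, ι_inj (by rw [pow_zero, one_mul, ← h, map_mul]; ring)⟩
  · obtain ⟨y, hy⟩ := Q.fixed (Y * s) (by rw [map_mul, h2, hσ]; ring)
    exact ⟨1, le_rfl, y, ι_inj (by
      rw [pow_one, map_mul, ← h, map_natCast, ← hs, map_mul, hy]; ring)⟩

include hr hp2 hπ hσ hs in
/-- If the product were generated by `γ`, then `γ² = v π τ₃π` for a unit `v`, and the five units
`ζ`, `1 + √2`, `ε`, `v`, `η` would be independent modulo squares, although the unit rank is three:
the norm of a relation involving `η` makes `1 + √2` a square, and the remaining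
relations contradict unique factorisation in `ℤ[ζ]`. -/
theorem cls_pr_mul_ne_one (hrank : Units.rank K = 3)
    {ε η : (𝓞 K)ˣ} (hε : (ε : 𝓞 K) * Q.σ ε = -1) (hη : (η : 𝓞 K) * Q.σ η = ιK (εu F))
    {α : 𝓞 K} (hα : α ^ 2 = ε * ιK (π * τ F 2 π)) :
    cls (pr π s 0) * cls (pr π s 3) ≠ 1 := by
  intro hcl
  have hne := pr_ne_bot (π := π) hs
  rw [← cls_mul (hne _) (hne _), cls_eq_one_iff (mul_ne_zero (hne _) (hne _))] at hcl
  obtain ⟨γ, hγ0, hγ⟩ := hcl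
  have hP : ∀ k, τ F k π ≠ 0 := fun k => (prime_π hr hπ k).ne_zero
  have hπ0 : π ≠ 0 := by simpa [τ_zero] using hP 0
  -- `γ² = v θ` for a unit `v`
  obtain ⟨v, hv⟩ : ∃ v : (𝓞 K)ˣ, γ ^ 2 = v * ιK (π * τ F 3 π) := by
    have : Ideal.span {γ ^ 2} = Ideal.span {ιK (π * τ F 3 π)} := by
      rw [sq, ← Ideal.span_singleton_mul_span_singleton, ← hγ, mul_mul_mul_comm,
        pr_sq hr hp2 hπ hs (by norm_num), pr_sq hr hp2 hπ hs (by norm_num),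
        Ideal.span_singleton_mul_span_singleton, ← map_mul, τ_zero]
    obtain ⟨v, hv⟩ := (Ideal.span_singleton_eq_span_singleton.mp this).symm
    exact ⟨v, by rw [← hv]; ring⟩
  let zK : (𝓞 K)ˣ := Units.map (ιK : 𝓞 F →* 𝓞 K) (ζu F)
  let eK : (𝓞 K)ˣ := Units.map (ιK : 𝓞 F →* 𝓞 K) (εu F)
  have hzK : (zK : 𝓞 K) = ιK (ζ F) := rfl
  have heK : (eK : 𝓞 K) = ιK (εu F) := rfl
  obtain ⟨c, hc0, y, hy⟩ := exists_unit_relation K (n := 5) (by rw [hrank]; norm_num)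
    ![zK, eK, ε, v, η]
  rw [Fin.prod_univ_five] at hy
  simp only [Matrix.cons_val_zero, Matrix.cons_val_one, Matrix.cons_val] at hy
  have hle : ∀ i, (c i).val ≤ 1 := fun i => Nat.lt_succ_iff.mp (ZMod.val_lt (c i))
  have hcz : c = 0 ↔ ∀ i, (c i).val = 0 := by
    simp only [ZMod.val_eq_zero, funext_iff, Pi.zero_apply]
  rw [Ne, hcz] at hc0
  have h0 := hle 0
  have h1 := hle 1
  have h2 := hle 2
  have h3 := hle 3
  have h4 := hle 4
  have hy' : ιK (ζ F) ^ (c 0).val * ιK (εu F) ^ (c 1).val * (ε : 𝓞 K) ^ (c 2).val *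
      (v : 𝓞 K) ^ (c 3).val * (η : 𝓞 K) ^ (c 4).val = (y : 𝓞 K) ^ 2 := by
    have := congrArg Units.val hy
    simpa [hzK, heK, sq] using this
  replace hc0 : ¬ ((c 0).val = 0 ∧ (c 1).val = 0 ∧ (c 2).val = 0 ∧ (c 3).val = 0 ∧
      (c 4).val = 0) := by
    rintro ⟨k0, k1, k2, k3, k4⟩
    exact hc0 (fun i => by fin_cases i <;> assumption)
  clear hy hle hcz
  generalize (c 0).val = a at *
  generalize (c 1).val = b at *
  generalize (c 2).val = l at *
  generalize (c 3).val = e at *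
  generalize (c 4).val = d at *
  have hθ0 : π * τ F 3 π ≠ 0 := mul_ne_zero hπ0 (hP 3)
  have hlam0 : π * τ F 2 π ≠ 0 := mul_ne_zero hπ0 (hP 2)
  have hσι : ∀ x : 𝓞 F, Q.σ (ιK x) = ιK x := fun x => Q.σ.commutes x
  have hσv : Q.σ γ ^ 2 = Q.σ v * ιK (π * τ F 3 π) := by rw [← map_pow, hv, map_mul, hσι]
  have hd0 : d = 0 := by
    by_contra hd0
    obtain rfl : d = 1 := by omega
    have hi : (ιK (ζ F ^ 2) ^ 2) = -1 := by
      rw [← map_pow, ← pow_mul, ζ_pow F, map_neg, map_one]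
    have hσy := congrArg Q.σ hy'
    simp only [map_mul, map_pow, hσι] at hσy
    -- the relative norm of the relation
    have hrel : (εu F : 𝓞 F) * (ζ F ^ a * (εu F : 𝓞 F) ^ b * (ζ F ^ 2) ^ l * Q.N γ ^ e) ^ 2 =
        (Q.N y * (π * τ F 3 π) ^ e) ^ 2 := by
      apply ι_inj (K := K)
      have hNγ : (ιK (Q.N γ)) ^ 2 = (v * Q.σ v) * ιK (π * τ F 3 π) ^ 2 := by
        rw [Q.N_spec, mul_pow, hv, hσv]; ring
      have hNy : (ιK (Q.N y)) ^ 2 = (y : 𝓞 K) ^ 2 * Q.σ y ^ 2 := by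
        rw [Q.N_spec, mul_pow]
      calc _ = ιK (εu F) * (ιK (ζ F) ^ a * ιK (εu F) ^ b) ^ 2 * (ιK (ζ F ^ 2) ^ 2) ^ l *
              (ιK (Q.N γ) ^ 2) ^ e := by simp only [map_mul, map_pow]; ring
        _ = (ιK (Q.N y)) ^ 2 * (ιK (π * τ F 3 π) ^ e) ^ 2 := by
              rw [hi, hNγ, hNy, ← hy', ← hσy, ← hη, ← hε]; ring
        _ = _ := by simp only [map_mul, map_pow]; ring
    have hNγ0 : Q.N γ ≠ 0 := by
      intro h
      have := Q.N_spec γ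
      rw [h, map_zero, eq_comm, mul_eq_zero] at this
      rcases this with h | h
      · exact hγ0 h
      · exact hγ0 (by simpa using h)
    have hζ0 : ζ F ≠ 0 := (ζu F).ne_zero
    have hX0 : ζ F ^ a * (εu F : 𝓞 F) ^ b * (ζ F ^ 2) ^ l * Q.N γ ^ e ≠ 0 := by
      have := (εu F).ne_zero
      positivity
    obtain ⟨q, -, hq⟩ := exists_cofactor hX0 (hrel.symm.trans (mul_comm _ _))
    exact not_isSquare_ε F ⟨q, by rw [← hq, sq]⟩
  subst hd0
  rw [pow_zero, mul_one] at hy'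
  have hα0 : α ≠ 0 := by
    rintro rfl
    have : (ε : 𝓞 K) * ιK (π * τ F 2 π) ≠ 0 := mul_ne_zero ε.ne_zero (by
      rw [Ne, map_eq_zero_iff _ ι_inj]; exact hlam0)
    rw [← hα] at this
    norm_num at this
  obtain ⟨Y, -, hY⟩ := exists_cofactor (x := y * ιK (π * τ F 2 π) ^ l * ιK (π * τ F 3 π) ^ e)
    (y := α ^ l * γ ^ e)
    (z := ιK (ζ F ^ a * (εu F : 𝓞 F) ^ b * (π * τ F 2 π) ^ l * (π * τ F 3 π) ^ e))
    (mul_ne_zero (pow_ne_zero _ hα0) (pow_ne_zero _ hγ0)) (by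
      calc _ = (y : 𝓞 K) ^ 2 * (ιK (π * τ F 2 π) ^ l * ιK (π * τ F 3 π) ^ e) ^ 2 := by ring
        _ = ιK (ζ F) ^ a * ιK (εu F) ^ b * (ε * ιK (π * τ F 2 π)) ^ l *
            (v * ιK (π * τ F 3 π)) ^ e * (ιK (π * τ F 2 π) ^ l * ιK (π * τ F 3 π) ^ e) := by
              rw [← hy']; ring
        _ = (α ^ 2) ^ l * (γ ^ 2) ^ e * (ιK (ζ F) ^ a * ιK (εu F) ^ b * ιK (π * τ F 2 π) ^ l *
              ιK (π * τ F 3 π) ^ e) := by rw [hα, hv]; ring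
        _ = _ := by simp only [map_mul, map_pow]; ring)
  obtain ⟨j, hj, hsq⟩ := isSquare_descent hσ hs hY
  obtain ⟨k0, k1, k2, k3⟩ := exponents_zero hr hp2 hπ h0 h1 h2 h3 hj hsq
  exact hc0 ⟨k0, k1, k2, k3, rfl⟩

end Octic

/-! ### The product of two ramified classes is a square -/

namespace Octic
open Zeta8

/-- Squares of ideal classes stay squares under extension of ideals. -/
theorem isSquare_cls_map {k K : Type*} [Field k] [NumberField k] [Field K] [NumberField K]
    [Algebra k K] {I : Ideal (𝓞 k)} (h : IsSquare (cls I)) :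
    IsSquare (cls (I.map (algebraMap (𝓞 k) (𝓞 K)))) := by
  by_cases hI : I = ⊥
  · rw [hI, Ideal.map_bot, ← Ideal.span_zero, ← Set.singleton_zero, cls_span]
    exact IsSquare.one
  have h1 := h.map (ClassGroup.extendedHom (𝓞 k) (𝓞 K))
  rw [cls_of_ne hI, ClassGroup.extendedHom_mk0, ← cls_mk0] at h1
  exact h1

variable {F K : Type*} [Field F] [NumberField F] [hF : IsCyclotomicExtension {8} ℚ F]
  [Field K] [NumberField K] [Algebra F K]

local notation "ιK" => algebraMap (𝓞 F) (𝓞 K)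

/-- With `(1 + i) ω = x + is` and `2g² = x² + p`, the ideal `(g, x + is)` has square `(ω)`. -/
theorem span_sq {S : Type*} [CommRing S] [IsDomain S] {i ω ω' : S} (hi : i ^ 2 = -1) (h2 : (2 : S) ≠ 0)
    {g x : ℤ} (hc : IsCoprime g (2 * x)) (hsum : (1 + i) * (ω + ω') = 2 * x)
    (hprod : 2 * (g : S) ^ 2 = (1 + i) ^ 2 * (ω * ω')) :
    Ideal.span {(g : S), (1 + i) * ω} * Ideal.span {(g : S), (1 + i) * ω} = Ideal.span {ω} := by
  have hg : (g : S) ^ 2 = i * (ω * ω') := by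
    apply mul_left_cancel₀ h2
    linear_combination hprod + ω * ω' * hi
  obtain ⟨a, b, hab⟩ : IsCoprime (g ^ 2) (4 * x) := by
    have h1 : IsCoprime g 2 := hc.of_mul_right_left
    have : (4 * x : ℤ) = 2 * (2 * x) := by ring
    rw [this]
    exact (h1.mul_right hc).pow_left
  have hab' : (a : S) * g ^ 2 + b * (4 * x) = 1 := by exact_mod_cast congrArg (Int.cast : ℤ → S) hab
  rw [Ideal.span_pair_mul_span_pair]
  apply le_antisymm
  · rw [Ideal.span_le]
    rintro y (hy | hy | hy | hy)
    · exact Ideal.mem_span_singleton.mpr ⟨i * ω', by rw [hy]; linear_combination hg⟩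
    · exact Ideal.mem_span_singleton.mpr ⟨g * (1 + i), by rw [hy]; ring⟩
    · exact Ideal.mem_span_singleton.mpr ⟨g * (1 + i), by rw [hy]; ring⟩
    · exact Ideal.mem_span_singleton.mpr ⟨(1 + i) * ((1 + i) * ω), by rw [show y = _ from hy]; ring⟩
  · rw [Ideal.span_singleton_le_iff_mem]
    have : ω = (a * ω - b * (2 * i * (1 + i))) * (g * g) +
        (-i * (1 + i) * b) * ((1 + i) * ω * ((1 + i) * ω)) := by
      linear_combination (-ω) * hab' - 2 * b * ω * hsum + 2 * b * i * (1 + i) * hg +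
        (2 * b * (1 + i) * ω * ω' + b * (1 + i) * (i + 2) * ω ^ 2) * hi
    refine (congrArg (· ∈ Ideal.span _) this).mpr (Ideal.add_mem _
      (Ideal.mul_mem_left _ _ (Ideal.subset_span ?_))
      (Ideal.mul_mem_left _ _ (Ideal.subset_span ?_))) <;> simp

variable {p : ℕ} [hp : Fact p.Prime] {r : ZMod p} (hr : r ^ 4 = -1) (hp2 : p ≠ 2)
  {π : 𝓞 F} (hπ : ∀ x, φ F hr 0 x = 0 ↔ π ∣ x)
  {Q : QuadInv (𝓞 F) (𝓞 K)} {s : 𝓞 K} (hσ : Q.σ s = -s) (hs : s ^ 2 = p)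

include hr hp2 hπ hσ hs in
/-- With `π τ₃π = e + f√2`, the ideal `(e + f, e + 2f + is)` comes from `ℚ(√-p)`, where its class
is a square; it is inverse to the product of the primes over `π` and `τ₃π`. -/
theorem isSquare_cls_pr_mul (hp8 : p % 8 = 1) (hp16 : p % 16 = 9)
    (h2p : (2 : ZMod p) ^ ((p - 1) / 4) = -1)
    {k : Type*} [Field k] [NumberField k] [Algebra k K] (Q' : QuadInv ℤ (𝓞 k)) {t : 𝓞 k}
    (ht : t ^ 2 = -p) (hσ' : Q'.σ t = -t)
    (hts : algebraMap (𝓞 k) (𝓞 K) t = ιK (ζ F ^ 2) * s) :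
    IsSquare (cls (pr π s 0) * cls (pr π s 3)) := by
  obtain ⟨e, f, A, B, hef3, -, -, hef, -⟩ := exists_quad_norms hr hp2 hπ
  obtain ⟨he, hf⟩ := Elem.odd_e hp8 hef
  have hJ := Elem.jac_g hp8 h2p hp16 hef
  obtain ⟨g, hg⟩ : ∃ g, g = e + f := ⟨_, rfl⟩
  obtain ⟨x, hx⟩ : ∃ x, x = e + 2 * f := ⟨_, rfl⟩
  rw [← hg] at hJ
  have hgx : x ^ 2 + (-2) * g ^ 2 = -p := by rw [hx, hg, ← hef]; ring
  have hgodd : Odd g := hg ▸ he.add_even hf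
  have hg0 : g ≠ 0 := by rintro rfl; simp at hgodd
  have hc : IsCoprime g (2 * x) := by
    refine IsCoprime.mul_right ?_ ?_
    · obtain ⟨m, hm⟩ := hgodd
      exact ⟨1, -m, by rw [hm]; ring⟩
    · obtain ⟨a, b, hab⟩ : IsCoprime e f := Elem.isCoprime_of_norm (m := -2) (by rw [← hef]; ring)
      exact ⟨2 * a - b, b - a, by rw [hg, hx, ← hab]; ring⟩
  have hgd : g ∣ x ^ 2 + p := ⟨2 * g, by linear_combination hgx⟩
  obtain ⟨y, hy⟩ : Odd x := hx ▸ he.add_even ⟨f, by ring⟩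
  have hsq := isSquare_cls_map (K := K) (ImQuad.isSquare_cls Q' hσ' ht hp8 hgd hc hg0 hJ)
  rw [Ideal.map_span, Set.image_pair, map_add, map_intCast, map_intCast, hts] at hsq
  have h4 := ζ_pow F
  have hi : ιK (ζ F ^ 2) ^ 2 = -1 := by
    rw [← map_pow, ← pow_mul, h4, map_neg, map_one]
  set i := ιK (ζ F ^ 2) with hidef
  have hr2 : ιK (rt2 F) ^ 2 = 2 := by rw [← map_pow, rt2_sq, map_ofNat]
  set rt := ιK (rt2 F) with hrt
  set z := ιK (ζ F) with hz
  have hiz : i = z ^ 2 := by rw [hidef, map_pow]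
  have hrtz : rt = z - z ^ 3 := by rw [hrt, rt2, map_sub, map_pow]
  have hz4 : z ^ 4 = -1 := by rw [hz, ← map_pow, h4, map_neg, map_one]
  have hz1 : 1 + i = (1 + z) ^ 2 * (rt - 1) := by
    rw [hiz, hrtz]; linear_combination (2 + z) * hz4
  have h20 : (2 : 𝓞 K) ≠ 0 := two_ne_zero
  have hi1 : 1 + i ≠ 0 := by
    intro h; apply h20; linear_combination (1 - i) * h + hi
  have hz0 : 1 + z ≠ 0 := by
    intro h; apply hi1; rw [hz1, h]; ring
  obtain ⟨h, hh⟩ := exists_half hp8 hσ hs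
  have hgx' : (x : 𝓞 K) ^ 2 + (-2) * g ^ 2 = -p := by
    have := congrArg (Int.cast : ℤ → 𝓞 K) hgx
    push_cast at this
    exact this
  have hy' : (x : 𝓞 K) = 2 * y + 1 := by rw [hy]; push_cast; ring
  have hg' : (g : 𝓞 K) = e + f := by rw [hg]; push_cast; ring
  have hx' : (x : 𝓞 K) = e + 2 * f := by rw [hx]; push_cast; ring
  obtain ⟨ω, hω⟩ : ∃ ω, ω = h + y + i * (h - y - 1) := ⟨_, rfl⟩
  obtain ⟨ω', hω'⟩ : ∃ ω', ω' = (1 - h) + y + i * (-h - y) := ⟨_, rfl⟩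
  have hω1 : (1 + i) * ω = x + i * s := by
    rw [hω]; linear_combination (h - y - 1) * hi - i * hh - hy'
  have hω1' : (1 + i) * ω' = x - i * s := by
    rw [hω']; linear_combination (-h - y) * hi + i * hh - hy'
  have hJ2 := span_sq (ω := ω) (ω' := ω') hi h20 hc (by linear_combination hω1 + hω1') (by
    have : (1 + i) ^ 2 * (ω * ω') = ((1 + i) * ω) * ((1 + i) * ω') := by ring
    rw [this, hω1, hω1']
    linear_combination -hgx' - hs + s ^ 2 * hi)
  rw [hω1] at hJ2
  obtain ⟨q, -, hq⟩ := exists_cofactor (x := rt * g + x + i * s) (y := (1 + i) * (1 + z))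
    (z := -i * (e + f * rt) * ω) (mul_ne_zero hi1 hz0) (by
      have e1 : (e + f * rt : 𝓞 K) = (rt - 1) * (rt * g + x) := by
        rw [hg', hx']; linear_combination (-(e : 𝓞 K) - f) * hr2
      have e2 : (rt * g + x + i * s) ^ 2 = 2 * (rt * g + x) * ((1 + i) * ω) := by
        rw [hω1]; linear_combination g ^ 2 * hr2 - hgx' - hs + s ^ 2 * hi
      rw [e2, e1, show ((1 + i) * (1 + z)) ^ 2 * (-i * ((rt - 1) * (rt * g + x)) * ω) =
        (1 + i) ^ 2 * (-i) * ((1 + z) ^ 2 * (rt - 1)) * (rt * g + x) * ω by ring, ← hz1]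
      linear_combination (1 + i) * (2 + i) * (rt * g + x) * ω * hi)
  set J : Ideal (𝓞 K) := Ideal.span {(g : 𝓞 K), x + i * s} with hJdef
  have hJ0 : J ≠ ⊥ := by
    intro h
    have : (g : 𝓞 K) ∈ J := Ideal.subset_span (by simp)
    rw [h, Ideal.mem_bot] at this
    exact hg0 (by exact_mod_cast this)
  have hθ : ιK (τ F 0 π) * ιK (τ F 3 π) = e + f * rt := by
    rw [← map_mul, τ_zero, hef3]; simp [hrt]
  have hP : pr π s 0 * pr π s 3 * J = Ideal.span {q} := by
    apply ideal_sq_inj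
    have : pr π s 0 * pr π s 3 * J * (pr π s 0 * pr π s 3 * J) =
      (pr π s 0 * pr π s 0) * (pr π s 3 * pr π s 3) * (J * J) := by ring
    rw [this, pr_sq hr hp2 hπ hs (by norm_num), pr_sq hr hp2 hπ hs (by norm_num), hJ2]
    simp only [Ideal.span_singleton_mul_span_singleton]
    rw [hθ, ← sq, hq, Ideal.span_singleton_eq_span_singleton]
    refine ⟨⟨-i, i, ?_, ?_⟩, ?_⟩
    · linear_combination -hi
    · linear_combination -hi
    · simp only; ring
  have hc1 := congrArg cls hP
  rw [cls_span, cls_mul (mul_ne_zero (pr_ne_bot hs 0) (pr_ne_bot hs 3)) hJ0,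
    cls_mul (pr_ne_bot hs 0) (pr_ne_bot hs 3)] at hc1
  rw [eq_inv_of_mul_eq_one_left hc1]
  exact hsq.inv

end Octic

/-! ### Degrees, signature, and the class group of the octic field -/

namespace Octic
open Zeta8

theorem finrank_adjoin_sqrt {F K : Type*} [Field F] [Field K] [Algebra F K] {t : K} {d : F}
    (ht : t ^ 2 = algebraMap F K d) (hirr : ∀ x : F, algebraMap F K x ≠ t) :
    Module.finrank F F⟮t⟯ = 2 := by
  have hIntegral : IsIntegral F t := ⟨Polynomial.X ^ 2 - Polynomial.C d,
    Polynomial.monic_X_pow_sub_C _ two_ne_zero, by simp [ht]⟩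
  rw [adjoin.finrank hIntegral]
  apply le_antisymm
  · have h1 : minpoly F t ∣ Polynomial.X ^ 2 - Polynomial.C d := minpoly.dvd F t (by simp [ht])
    have h2 := Polynomial.natDegree_le_of_dvd h1 (Polynomial.X_pow_sub_C_ne_zero two_pos d)
    rwa [Polynomial.natDegree_X_pow_sub_C] at h2
  · rw [minpoly.two_le_natDegree_iff hIntegral]
    rintro ⟨x, hx⟩
    exact hirr x hx

/-- A primitive eighth root of unity modulo `p`. -/
theorem exists_root {p : ℕ} [hp : Fact p.Prime] (hp8 : p % 8 = 1) : ∃ r : ZMod p, r ^ 4 = -1 := by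
  have h1 : IsSquare (-1 : ZMod p) := ZMod.exists_sq_eq_neg_one_iff.mpr (by omega)
  obtain ⟨a, ha⟩ := h1
  have ha0 : a ≠ 0 := by rintro rfl; simp at ha
  have h2 : IsSquare a := by
    rw [ZMod.euler_criterion p ha0, show p / 2 = 2 * (2 * (p / 8)) by omega, pow_mul, sq, ← ha,
      pow_mul]
    simp
  obtain ⟨b, rfl⟩ := h2
  exact ⟨b, by rw [ha]; ring⟩

variable {F K : Type*} [Field F] [NumberField F] [hF : IsCyclotomicExtension {8} ℚ F]
  [Field K] [NumberField K] [Algebra F K]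

local notation "ιK" => algebraMap (𝓞 F) (𝓞 K)

include hF in
/-- The octic field is totally complex of degree eight. -/
theorem unitsRank_eq_three (h : Module.finrank F K = 2) : Units.rank K = 3 := by
  have h4 : Module.finrank ℚ F = 4 := by
    rw [IsCyclotomicExtension.finrank (n := 8) F
      (Polynomial.cyclotomic.irreducible_rat (by norm_num))]
    decide
  have h8 : Module.finrank ℚ K = 8 := by
    rw [← Module.finrank_mul_finrank ℚ F K, h, h4]
  have : IsTotallyComplex F := IsCyclotomicExtension.Rat.isTotallyComplex (n := 8) F (by norm_num)
  have : IsTotallyComplex K := isTotallyComplex_of_algebra F K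
  have h1 := IsTotallyComplex.finrank K
  have h2 := InfinitePlace.card_eq_nrRealPlaces_add_nrComplexPlaces K
  rw [IsTotallyComplex.nrRealPlaces_eq_zero] at h2
  rw [Units.rank, h2]
  omega

/-- The group-theoretic conclusion for any realisation `K = F(√p)`, `F = ℚ(ζ₈)`. -/
theorem classGroup_conclusion {p : ℕ} [hp : Fact p.Prime] (hp8 : p % 8 = 1) (hp16 : p % 16 = 9)
    (h2p : (2 : ZMod p) ^ ((p - 1) / 4) = -1) {s : 𝓞 K} (hs : s ^ 2 = p)
    (hgen : F⟮(s : K)⟯ = ⊤) :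
    (∃ m : ℕ, 2 ≤ m ∧ ∀ P : Sylow 2 (ClassGroup (𝓞 K)),
      Nonempty (P ≃* Multiplicative (ZMod 2 × ZMod (2 ^ m)))) ∧
    Nat.card (ClassGroup (𝓞 K) ⧸ (powMonoidHom 2 : ClassGroup (𝓞 K) →* ClassGroup (𝓞 K)).range) = 4 ∧
    Nat.card ((powMonoidHom 2 : ClassGroup (𝓞 K) →* ClassGroup (𝓞 K)).range ⧸
      ((powMonoidHom 4 : ClassGroup (𝓞 K) →* ClassGroup (𝓞 K)).range.subgroupOf
        (powMonoidHom 2 : ClassGroup (𝓞 K) →* ClassGroup (𝓞 K)).range)) = 2 := by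
  have hp2 : p ≠ 2 := by rintro rfl; norm_num at hp8
  obtain ⟨r, hr⟩ := exists_root hp8
  obtain ⟨π, hπ⟩ := exists_π F hr
  have hsK : (s : K) ^ 2 = algebraMap F K p := by
    have := congrArg (algebraMap (𝓞 K) K) hs
    simpa using this
  have hirr : ∀ x : F, algebraMap F K x ≠ s := by
    intro x hx
    have hxp : x ^ 2 = p := by
      apply (algebraMap F K).injective
      rw [map_pow, hx, hsK]
    have hxi : IsIntegral ℤ x := IsIntegral.of_pow two_pos (by rw [hxp]; exact isIntegral_natCast _)
    obtain ⟨y, rfl⟩ : ∃ y : 𝓞 F, (y : F) = x := ⟨⟨x, hxi⟩, rfl⟩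
    have hy : y ^ 2 = p := by
      apply RingOfIntegers.coe_injective
      simpa using hxp
    have h1 : IsSquare (τ F 1 π * (π * τ F 2 π * τ F 3 π)) :=
      ⟨y, by rw [← sq, hy, ← prod_eq hr hp2 hπ]; ring⟩
    have h2 := φ_eq_zero_of_isSquare hr hπ h1
    have n1 : φ F hr 1 π ≠ 0 := by
      have := φ_π_ne hr hπ (show 1 < 4 by norm_num) (show 0 < 4 by norm_num) (by norm_num) hp2
      rwa [τ_zero] at this
    have n2 := φ_π_ne hr hπ (show 1 < 4 by norm_num) (show 2 < 4 by norm_num) (by norm_num) hp2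
    have n3 := φ_π_ne hr hπ (show 1 < 4 by norm_num) (show 3 < 4 by norm_num) (by norm_num) hp2
    rw [map_mul, map_mul] at h2
    exact mul_ne_zero (mul_ne_zero n1 n2) n3 h2
  have hdeg : Module.finrank F K = 2 := by
    rw [← IntermediateField.finrank_top' (F := F) (E := K), ← hgen]
    exact finrank_adjoin_sqrt hsK hirr
  have : Algebra.IsQuadraticExtension F K := ⟨hdeg⟩
  obtain ⟨Q, hσ⟩ := exists_quadInv (𝓞 F) F K (t := s) (d := (p : 𝓞 F)) (by rw [hs]; simp) hirr
  -- the subfield `ℚ(√-p)`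
  have hi : ιK (ζ F ^ 2) ^ 2 = -1 := by
    rw [← map_pow, ← pow_mul, ζ_pow, map_neg, map_one]
  obtain ⟨t, ht⟩ : ∃ t, t = ιK (ζ F ^ 2) * s := ⟨_, rfl⟩
  have ht2 : t ^ 2 = -p := by rw [ht, mul_pow, hi, hs]; ring
  have htK : (t : K) ^ 2 = algebraMap ℚ K (-p) := by
    have := congrArg (algebraMap (𝓞 K) K) ht2
    simpa using this
  have htirr : ∀ x : ℚ, algebraMap ℚ K x ≠ t := by
    intro x hx
    have : x ^ 2 = -p := by
      apply (algebraMap ℚ K).injective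
      rw [map_pow, hx, htK]
    have hp0 : (0 : ℚ) < p := by exact_mod_cast hp.out.pos
    nlinarith [sq_nonneg x]
  let k := ℚ⟮(t : K)⟯
  have : Algebra.IsQuadraticExtension ℚ k := ⟨finrank_adjoin_sqrt htK htirr⟩
  have hti : IsIntegral ℤ (AdjoinSimple.gen ℚ (t : K)) := by
    have : IsIntegral ℤ (algebraMap k K (AdjoinSimple.gen ℚ (t : K))) := by
      rw [AdjoinSimple.algebraMap_gen]; exact t.2
    exact (isIntegral_algebraMap_iff (algebraMap k K).injective).mp this
  obtain ⟨t', ht'⟩ : ∃ t' : 𝓞 k, algebraMap (𝓞 k) (𝓞 K) t' = t :=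
    ⟨⟨_, hti⟩, RingOfIntegers.coe_injective (AdjoinSimple.algebraMap_gen ℚ (t : K))⟩
  have ht'2 : t' ^ 2 = -p := by
    apply FaithfulSMul.algebraMap_injective (𝓞 k) (𝓞 K)
    rw [map_pow, ht', ht2]; simp
  obtain ⟨Q', hσ'⟩ := exists_quadInv ℤ ℚ k (t := t') (d := -(p : ℤ)) (by rw [ht'2]; simp) (by
    intro x hx
    apply htirr x
    have := congrArg (algebraMap k K) hx
    rw [← ht']
    rw [← IsScalarTower.algebraMap_apply] at this
    exact this)
  obtain ⟨e, f, A, B, -, -, hAB, -, hABp⟩ := exists_quad_norms hr hp2 hπ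
  obtain ⟨ε, η, α, hε, hη, hα⟩ := exists_units hp8 hp16 h2p hσ hs hABp
  rw [← hAB] at hα
  have hc0 : cls (pr π s 0) ^ 2 = 1 := cls_pr_sq hr hp2 hπ hs (by norm_num)
  have hc3 : cls (pr π s 3) ^ 2 = 1 := cls_pr_sq hr hp2 hπ hs (by norm_num)
  exact group_conclusion (x := cls (pr π s 0)) (y := cls (pr π s 0) * cls (pr π s 3)) hc0
    (cls_pr_mul_ne_one hr hp2 hπ hσ hs (unitsRank_eq_three (F := F) hdeg) hε hη hα)
    (isSquare_cls_pr_mul hr hp2 hπ hσ hs hp8 hp16 h2p Q' ht'2 hσ' (ht'.trans ht))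
    (by rw [mul_pow, hc0, hc3, one_mul])
    (not_isSquare_cls_pr hr hp2 hπ hσ hs hp8 h2p hη)
    (fun z hz => two_torsion hr hp2 hπ hσ hs hp8 hp16 hη hα hz)

end Octic

theorem sqrt_sq_complex (n : ℕ) : (Real.sqrt n : ℂ) ^ 2 = n := by
  rw [← Complex.ofReal_pow, Real.sq_sqrt (Nat.cast_nonneg n)]; simp

theorem statement_17 (p : ℕ) (hp : p.Prime) (hp8 : p % 8 = 1)
    (h2p4 : (2 : ZMod p) ^ ((p - 1) / 4) = -1)
    (hp24 : (-1 : ℤ) ^ ((p - 1) / 8) = -1) :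
    (∃ m : ℕ, 2 ≤ m ∧
      ∀ P : Sylow 2 (ClassGroup (𝓞 (kstar p))),
        Nonempty (P ≃* Multiplicative (ZMod 2 × ZMod (2 ^ m)))) ∧
    -- equivalently: the 2-rank of Cl(k*) is 2 and its 4-rank is 1
    Nat.card (ClassGroup (𝓞 (kstar p)) ⧸ pows p 2) = 4 ∧
    Nat.card ((pows p 2) ⧸ ((pows p 4).subgroupOf (pows p 2))) = 2 := by
  have : Fact p.Prime := ⟨hp⟩
  have hp16 : p % 16 = 9 := by
    have : Odd ((p - 1) / 8) := neg_one_pow_eq_neg_one_iff_odd (by norm_num) |>.mp hp24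
    obtain ⟨m, hm⟩ := this
    omega
  have h2C : (Real.sqrt 2 : ℂ) ^ 2 = 2 := by exact_mod_cast sqrt_sq_complex 2
  have hpC := sqrt_sq_complex p
  have hIntegral : ∀ x ∈ ({(Real.sqrt 2 : ℂ), (Real.sqrt p : ℂ), (Complex.I : ℂ)} : Set ℂ),
      IsIntegral ℤ x := by
    rintro x (rfl | rfl | rfl)
    · exact IsIntegral.of_pow two_pos (by rw [h2C]; exact_mod_cast isIntegral_natCast (R := ℤ) (B := ℂ) 2)
    · exact IsIntegral.of_pow two_pos (by rw [hpC]; exact isIntegral_natCast _)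
    · exact IsIntegral.of_pow two_pos (by rw [Complex.I_sq]; exact isIntegral_one.neg)
  have hfin : FiniteDimensional ℚ (kstar p) := by
    have : Finite ({(Real.sqrt 2 : ℂ), (Real.sqrt p : ℂ), (Complex.I : ℂ)} : Set ℂ) :=
      Set.Finite.to_subtype (by simp)
    exact finiteDimensional_adjoin fun x hx => (hIntegral x hx).tower_top
  have hnf : NumberField (kstar p) := { to_finiteDimensional := hfin }
  let sq2 : kstar p := ⟨Real.sqrt 2, subset_adjoin _ _ (by simp)⟩
  let sqp : kstar p := ⟨Real.sqrt p, subset_adjoin _ _ (by simp)⟩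
  let i : kstar p := ⟨Complex.I, subset_adjoin _ _ (by simp)⟩
  have hsq2 : sq2 ^ 2 = 2 := Subtype.ext h2C
  have hsqp : sqp ^ 2 = p := Subtype.ext hpC
  have hi : i ^ 2 = -1 := Subtype.ext Complex.I_sq
  let z : kstar p := sq2 / 2 * (1 + i)
  have hz2 : z ^ 2 = i := by
    simp only [z]; linear_combination (1 + i) ^ 2 / 4 * hsq2 + hi / 2
  have hz4 : z ^ 4 = -1 := by rw [show 4 = 2 * 2 from rfl, pow_mul, hz2, hi]
  have hz3 : z - z ^ 3 = sq2 := by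
    rw [show z ^ 3 = z ^ 2 * z by ring, hz2]
    simp only [z]; linear_combination -sq2 / 2 * hi
  have hprim : IsPrimitiveRoot z 8 := by
    have : orderOf z = 2 ^ (2 + 1) := orderOf_eq_prime_pow
      (by rw [show 2 ^ 2 = 4 from rfl, hz4]; norm_num)
      (by rw [show 2 ^ (2 + 1) = 4 * 2 from rfl, pow_mul, hz4]; norm_num)
    have h := IsPrimitiveRoot.orderOf z
    rwa [this] at h
  have : IsCyclotomicExtension {8} ℚ ℚ⟮z⟯ :=
    hprim.intermediateField_adjoin_isCyclotomicExtension (K := ℚ)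
  have hsi : IsIntegral ℤ sqp :=
    IsIntegral.of_pow two_pos (by rw [hsqp]; exact isIntegral_natCast _)
  have hgen : ℚ⟮z⟯⟮sqp⟯ = ⊤ := by
    set L : IntermediateField ℚ (kstar p) := (ℚ⟮z⟯⟮sqp⟯).restrictScalars ℚ with hL
    have hzL : z ∈ L :=
      (ℚ⟮z⟯⟮sqp⟯).algebraMap_mem ⟨z, mem_adjoin_simple_self ℚ z⟩
    have hpL : sqp ∈ L := mem_adjoin_simple_self _ sqp
    have h2L : sq2 ∈ L := hz3 ▸ sub_mem hzL (pow_mem hzL 3)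
    have hiL : i ∈ L := hz2 ▸ pow_mem hzL 2
    have hle : kstar p ≤ lift L := by
      refine adjoin_le_iff.mpr ?_
      rintro x (rfl | rfl | rfl)
      · exact (mem_lift sq2).mpr h2L
      · exact (mem_lift sqp).mpr hpL
      · exact (mem_lift i).mpr hiL
    rw [eq_top_iff]
    intro x _
    exact (mem_lift x).mp (hle x.2)
  exact Octic.classGroup_conclusion (F := ℚ⟮z⟯) (s := ⟨sqp, hsi⟩) hp8 hp16 h2p4
    (RingOfIntegers.coe_injective hsqp) hgen
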